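/- arXiv:1307.5793 — 2 statements merged into one kernel-verified Lean document; each statement's English description precedes it below -/
import Mathlib

section
/- The set of Coxeter numbers of the A-type Niemeier root systems (those containing at least one A-type irreducible component) is exactly {2, 3, 4, 5, 6, 7, 8, 9, 10, 12, 13, 16, 18, 25}, and this set coincides with the set of integers n > 1 for which the Hecke congruence group Γ0(n) has genus zero. -/
noncomputable section

open Topology MeasureTheory

/-- `e2 x = e^{2πix}`. -/
def e2 (x : ℂ) : ℂ := Complex.exp (2 * (Real.pi : ℂ) * Complex.I * x)

/-- The upper half-plane, viewed as a subset of `ℂ`. -/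
def UHP : Set ℂ := {τ : ℂ | 0 < τ.im}
/-- The irreducible simply-laced (ADE) root systems; the natural number argument of
`A`/`D` is the rank. -/
inductive ADE : Type
  | A : ℕ → ADE
  | D : ℕ → ADE
  | E6 : ADE
  | E7 : ADE
  | E8 : ADE
  deriving DecidableEq

namespace ADE

/-- Validity of the rank parameter: `A n` needs `n ≥ 1` and `D n` needs `n ≥ 4`. -/
def valid : ADE → Prop
  | A n => 1 ≤ n
  | D n => 4 ≤ n
  | _ => True

def isA : ADE → Bool | A _ => true | _ => false
def isD : ADE → Bool | D _ => true | _ => false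
def isE6 : ADE → Bool | E6 => true | _ => false

def rank : ADE → ℕ
  | A n => n
  | D n => n
  | E6 => 6
  | E7 => 7
  | E8 => 8

/-- The Coxeter number. -/
def cox : ADE → ℕ
  | A n => n + 1
  | D n => 2 * n - 2
  | E6 => 12
  | E7 => 18
  | E8 => 30

/-- The divisors `n_i` of the Coxeter number `m` such that `Ω^X = Σ_i Ω_m(n_i)`;
`Ω^{A_{m-1}} = Ω_m(1)`, `Ω^{D_{m/2+1}} = Ω_m(1) + Ω_m(m/2)`,
`Ω^{E6} = Ω_{12}(1)+Ω_{12}(4)+Ω_{12}(6)`, `Ω^{E7} = Ω_{18}(1)+Ω_{18}(6)+Ω_{18}(9)`,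
`Ω^{E8} = Ω_{30}(1)+Ω_{30}(6)+Ω_{30}(10)+Ω_{30}(15)`. -/
def omegaDivs (m : ℕ) : ADE → List ℕ
  | A _ => [1]
  | D _ => [1, m / 2]
  | E6 => [1, 4, 6]
  | E7 => [1, 6, 9]
  | E8 => [1, 6, 10, 15]

/-- The Coxeter Frame shape, as a list of pairs `(n_i, k_i)` standing for `∏ n_i^{k_i}`. -/
def frame : ADE → List (ℕ × ℤ)
  | A n => [(n + 1, 1), (1, -1)]
  | D n => [(2, 1), (2 * n - 2, 1), (1, -1), (n - 1, -1)]
  | E6 => [(2, 1), (3, 1), (12, 1), (1, -1), (4, -1), (6, -1)]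
  | E7 => [(2, 1), (3, 1), (18, 1), (1, -1), (6, -1), (9, -1)]
  | E8 => [(2, 1), (3, 1), (5, 1), (30, 1), (1, -1), (6, -1), (10, -1), (15, -1)]

end ADE

/-- The 23 Niemeier root systems, as unions (lists) of their irreducible components. -/
def NiemeierRootSystems : List (List ADE) :=
  [ List.replicate 24 (.A 1), List.replicate 12 (.A 2), List.replicate 8 (.A 3),
    List.replicate 6 (.A 4), [.A 5, .A 5, .A 5, .A 5, .D 4], List.replicate 4 (.A 6),
    [.A 7, .A 7, .D 5, .D 5], List.replicate 3 (.A 8), [.A 9, .A 9, .D 6],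
    [.A 11, .D 7, .E6], [.A 12, .A 12], [.A 15, .D 9], [.A 17, .E7], [.A 24],
    List.replicate 6 (.D 4), List.replicate 4 (.D 6), List.replicate 3 (.D 8),
    [.D 10, .E7, .E7], [.D 12, .D 12], [.D 16, .E8], [.D 24],
    List.replicate 4 .E6, List.replicate 3 .E8 ]

/-- The Coxeter number of a union of components (that of its first component). -/
def coxOf : List ADE → ℕ
  | [] => 0
  | C :: _ => C.cox

/-- The Coxeter Frame shape of a union of components. -/
def frameOf (X : List ADE) : List (ℕ × ℤ) := (X.map ADE.frame).flatten
/-- The subset `Γ0(N)+S = ∪_{e ∈ S} W_N(e)` of `SL₂(ℝ)`, where `W_N(e)` consists of the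
matrices `(1/√e)[[ae, b],[cN, de]]` with `a,b,c,d ∈ ℤ` and `ade - bc(N/e) = 1`.
In particular `GammaPlus N {1} = Γ0(N)`. -/
def GammaPlus (N : ℕ) (S : Set ℕ) : Set (Matrix.SpecialLinearGroup (Fin 2) ℝ) :=
  { g | ∃ e ∈ S, ∃ a b c d : ℤ,
      a * d * (e : ℤ) - b * c * ((N / e : ℕ) : ℤ) = 1 ∧
      (g : Matrix (Fin 2) (Fin 2) ℝ) =
        (Real.sqrt (e : ℝ))⁻¹ •
          !![(a : ℝ) * (e : ℝ), (b : ℝ); (c : ℝ) * (N : ℝ), (d : ℝ) * (e : ℝ)] }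

/-- The genus zero group `Γ^X` attached to a Niemeier root system `X`:
`Γ0(m)` if `X` has an A-type component (`m` the Coxeter number), `Γ0(2n)+n` if `X` has a
D-type but no A-type component and Coxeter number `2n`, `Γ0(12)+4` for `X = E6⁴` and
`Γ0(30)+6,10,15` for `X = E8³`. -/
def GammaX (X : List ADE) : Set (Matrix.SpecialLinearGroup (Fin 2) ℝ) :=
  if X.any ADE.isA then GammaPlus (coxOf X) {1}
  else if X.any ADE.isD then GammaPlus (coxOf X) {1, coxOf X / 2}
  else if X.any ADE.isE6 then GammaPlus 12 {1, 4}
  else GammaPlus 30 {1, 6, 10, 15}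

open scoped Manifold in
/-- `f` is a principal modulus (Hauptmodul) for `Γ ⊆ SL₂(ℝ)`: it is a `Γ`-invariant
holomorphic function on the upper half-plane generating the field of `Γ`-invariant
functions, i.e. inducing an isomorphism from `Γ\ℍ` onto the complement of a finite set
of points of the Riemann sphere; equivalently, `f` is injective on `Γ`-orbits and its
range is cofinite in `ℂ`. -/
def IsPrincipalModulus (Γ : Set (Matrix.SpecialLinearGroup (Fin 2) ℝ))
    (f : UpperHalfPlane → ℂ) : Prop :=
  MDifferentiable 𝓘(ℂ) 𝓘(ℂ) f ∧
  (∀ γ ∈ Γ, ∀ τ : UpperHalfPlane, f (γ • τ) = f τ) ∧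
  (∀ τ₁ τ₂ : UpperHalfPlane, f τ₁ = f τ₂ → ∃ γ ∈ Γ, γ • τ₁ = τ₂) ∧
  (Set.range f)ᶜ.Finite

section Bridge
open UpperHalfPlane MatrixGroups CongruenceSubgroup
open scoped Manifold

/-- The element of `SL(2, ℤ)` with the given entries. -/
def mkSL (a b c d : ℤ) (h : a * d - b * c = 1) : SL(2, ℤ) :=
  ⟨!![a, b; c, d], by rw [Matrix.det_fin_two_of, h]⟩

section mkSL
variable (a b c d : ℤ) (h : a * d - b * c = 1)

@[simp] theorem mkSL_apply_zero_zero : mkSL a b c d h 0 0 = a := rfl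
@[simp] theorem mkSL_apply_zero_one : mkSL a b c d h 0 1 = b := rfl
@[simp] theorem mkSL_apply_one_zero : mkSL a b c d h 1 0 = c := rfl
@[simp] theorem mkSL_apply_one_one : mkSL a b c d h 1 1 = d := rfl

end mkSL

theorem SL_ext {γ δ : SL(2, ℤ)} (h00 : γ 0 0 = δ 0 0) (h01 : γ 0 1 = δ 0 1)
    (h10 : γ 1 0 = δ 1 0) (h11 : γ 1 1 = δ 1 1) : γ = δ := by
  ext i j
  fin_cases i <;> fin_cases j <;> assumption

theorem SL_det (γ : SL(2, ℤ)) : γ 0 0 * γ 1 1 - γ 0 1 * γ 1 0 = 1 := by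
  have := γ.det_coe
  rwa [Matrix.det_fin_two] at this

theorem SL_mul_entries (γ δ : SL(2, ℤ)) :
    (γ * δ) 0 0 = γ 0 0 * δ 0 0 + γ 0 1 * δ 1 0 ∧
    (γ * δ) 0 1 = γ 0 0 * δ 0 1 + γ 0 1 * δ 1 1 ∧
    (γ * δ) 1 0 = γ 1 0 * δ 0 0 + γ 1 1 * δ 1 0 ∧
    (γ * δ) 1 1 = γ 1 0 * δ 0 1 + γ 1 1 * δ 1 1 := by
  simp [Matrix.SpecialLinearGroup.coe_mul, Matrix.mul_apply, Fin.sum_univ_two]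

theorem SL_inv_entries (γ : SL(2, ℤ)) :
    γ⁻¹ 0 0 = γ 1 1 ∧ γ⁻¹ 0 1 = -γ 0 1 ∧ γ⁻¹ 1 0 = -γ 1 0 ∧ γ⁻¹ 1 1 = γ 0 0 := by
  simp [Matrix.SpecialLinearGroup.coe_inv, Matrix.adjugate_fin_two]

theorem coe_SL_smul (γ : SL(2, ℤ)) (τ : ℍ) :
    ((γ • τ : ℍ) : ℂ) = (γ 0 0 * τ + γ 0 1) / (γ 1 0 * τ + γ 1 1) := by
  rw [coe_specialLinearGroup_apply]
  simp

/-- `f` is a Hauptmodul for the subgroup `Γ` of the modular group. -/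
structure IsHauptmodul (Γ : Subgroup SL(2, ℤ)) (f : ℍ → ℂ) : Prop where
  mdiff : MDifferentiable 𝓘(ℂ) 𝓘(ℂ) f
  inv : ∀ γ ∈ Γ, ∀ τ : ℍ, f (γ • τ) = f τ
  sep : ∀ τ₁ τ₂ : ℍ, f τ₁ = f τ₂ → ∃ γ ∈ Γ, γ • τ₁ = τ₂
  cofinite : (Set.range f)ᶜ.Finite

theorem gammaPlus_one_eq_image (n : ℕ) :
    GammaPlus n {1} =
      (Matrix.SpecialLinearGroup.map (n := Fin 2) (Int.castRingHom ℝ)) ''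
        (Gamma0 n : Set SL(2, ℤ)) := by
  ext g
  constructor
  · rintro ⟨e, rfl, a, b, c, d, h1, h2⟩
    refine ⟨mkSL a b (c * n) d ?_, ?_, ?_⟩
    · simp only [Nat.cast_one, mul_one, Nat.div_one] at h1
      linarith
    · exact Gamma0_mem.2 (by simp)
    · ext i j
      rw [h2]
      fin_cases i <;> fin_cases j <;> simp
  · rintro ⟨γ, hγ, rfl⟩
    obtain ⟨c, hc⟩ := (ZMod.intCast_zmod_eq_zero_iff_dvd _ _).1 (Gamma0_mem.1 hγ)
    refine ⟨1, rfl, γ 0 0, γ 0 1, c, γ 1 1, ?_, ?_⟩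
    · have := γ.det_coe
      rw [Matrix.det_fin_two, hc] at this
      simp
      linarith
    · ext i j
      fin_cases i <;> fin_cases j <;> simp [hc, mul_comm]

theorem isPrincipalModulus_gammaPlus_iff (n : ℕ) (f : ℍ → ℂ) :
    IsPrincipalModulus (GammaPlus n {1}) f ↔ IsHauptmodul (Gamma0 n) f := by
  have key : ∀ (γ : SL(2, ℤ)) (τ : ℍ),
      (Matrix.SpecialLinearGroup.map (n := Fin 2) (Int.castRingHom ℝ) γ) • τ = γ • τ := by
    intro γ τ
    ext
    rw [coe_specialLinearGroup_apply, coe_specialLinearGroup_apply]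
    simp
  rw [IsPrincipalModulus, gammaPlus_one_eq_image]
  simp only [Set.forall_mem_image, Set.exists_mem_image, key]
  exact ⟨fun h => ⟨h.1, h.2.1, h.2.2.1, h.2.2.2⟩, fun h => ⟨h.1, h.2, h.3, h.4⟩⟩

theorem coxeterNumbers_eq :
    {m : ℕ | ∃ X ∈ NiemeierRootSystems, X.any ADE.isA = true ∧ ∀ C ∈ X, C.cox = m} =
      ({2, 3, 4, 5, 6, 7, 8, 9, 10, 12, 13, 16, 18, 25} : Set ℕ) := by
  ext m
  simp only [Set.mem_ofPred_eq, Set.mem_insert_iff, Set.mem_singleton_iff]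
  simp [NiemeierRootSystems, ADE.isA, ADE.cox]
  omega

end Bridge

section Geometry
open UpperHalfPlane MatrixGroups CongruenceSubgroup
open scoped Manifold

theorem continuous_SL_smul (γ : SL(2, ℤ)) : Continuous fun τ : ℍ => γ • τ :=
  continuous_const_smul (Matrix.SpecialLinearGroup.mapGL ℝ γ)

theorem im_SL_smul (γ : SL(2, ℤ)) (τ : ℍ) :
    (γ • τ).im = τ.im / Complex.normSq (γ 1 0 * τ + γ 1 1) := by
  rw [ModularGroup.im_smul_eq_div_normSq]
  simp [denom]

theorem apply_one_zero_eq_zero_of_one_lt_im {γ : SL(2, ℤ)} {τ : ℍ} (h1 : 1 < τ.im)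
    (h2 : 1 < (γ • τ).im) : γ 1 0 = 0 := by
  by_contra hc
  have hc1 : (1 : ℝ) ≤ (γ 1 0 : ℝ) ^ 2 := by
    exact_mod_cast (one_le_sq_iff_one_le_abs _).2 (Int.one_le_abs hc)
  have h3 : τ.im ^ 2 ≤ Complex.normSq (γ 1 0 * τ + γ 1 1) := by
    rw [Complex.normSq_apply]
    simp only [Complex.add_re, Complex.mul_re, Complex.intCast_re, coe_re, Complex.intCast_im,
      zero_mul, sub_zero, Complex.add_im, Complex.mul_im, coe_im, add_zero]
    nlinarith [sq_nonneg (τ.im), mul_self_nonneg ((γ 1 0 : ℝ) * τ.re + γ 1 1)]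
  rw [im_SL_smul, lt_div_iff₀ (by nlinarith)] at h2
  nlinarith

theorem exists_nhds_smul_disjoint_pair (τ₁ τ₂ : ℍ) :
    ∃ V₁ V₂ : Set ℍ, IsOpen V₁ ∧ IsOpen V₂ ∧ τ₁ ∈ V₁ ∧ τ₂ ∈ V₂ ∧
      ∀ γ : SL(2, ℤ), ∀ z ∈ V₁, γ • z ∈ V₂ → γ • τ₁ = τ₂ := by
  obtain ⟨K, hK, hτK⟩ := exists_compact_mem_nhds τ₁
  obtain ⟨L, hL, hτL⟩ := exists_compact_mem_nhds τ₂
  have hfin := ProperlyDiscontinuousSMul.finite_disjoint_inter_image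
    (Γ := (Matrix.SpecialLinearGroup.mapGL (n := Fin 2) (R := ℤ) ℝ).range) hK hL
  have hloc : ∀ γ : (Matrix.SpecialLinearGroup.mapGL (n := Fin 2) (R := ℤ) ℝ).range,
      ∀ᶠ V in (𝓝 (τ₁, τ₂)).smallSets, γ • τ₁ ≠ τ₂ → ∀ z ∈ V, γ • z.1 ≠ z.2 := by
    intro γ
    by_cases h : γ • τ₁ = τ₂
    · simp [h]
    · have hc : Continuous fun z : ℍ × ℍ => γ • z.1 :=
        (continuous_const_smul (γ : GL (Fin 2) ℝ)).comp continuous_fst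
      have : {z : ℍ × ℍ | γ • z.1 ≠ z.2} ∈ 𝓝 (τ₁, τ₂) :=
        (isOpen_ne_fun hc continuous_snd).mem_nhds h
      filter_upwards [Filter.eventually_smallSets_subset.2 this] with V hV _ z hz using hV hz
  have hall := ((Filter.eventually_all_finite hfin).2 fun γ _ => hloc γ).and
    (Filter.eventually_smallSets_subset.2 (prod_mem_nhds hτK hτL))
  obtain ⟨s, hs, hall⟩ := Filter.eventually_smallSets.1 hall
  obtain ⟨V₁, V₂, h₁, hτ₁, h₂, hτ₂, hV⟩ := mem_nhds_prod_iff'.1 hs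
  refine ⟨V₁, V₂, h₁, h₂, hτ₁, hτ₂, fun γ z hz hγz => ?_⟩
  by_contra hne
  obtain ⟨h3, h4⟩ := hall (V₁ ×ˢ V₂) hV
  have hm : (z, γ • z) ∈ V₁ ×ˢ V₂ := ⟨hz, hγz⟩
  exact h3 ⟨Matrix.SpecialLinearGroup.mapGL ℝ γ, ⟨γ, rfl⟩⟩
    ⟨γ • z, ⟨z, (h4 hm).1, rfl⟩, (h4 hm).2⟩ hne _ hm rfl

theorem exists_nhds_smul_disjoint (τ : ℍ) :
    ∃ V : Set ℍ, IsOpen V ∧ τ ∈ V ∧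
      ∀ γ : SL(2, ℤ), ∀ z ∈ V, γ • z ∈ V → γ • τ = τ := by
  obtain ⟨V₁, V₂, h₁, h₂, hτ₁, hτ₂, hV⟩ := exists_nhds_smul_disjoint_pair τ τ
  exact ⟨V₁ ∩ V₂, h₁.inter h₂, ⟨hτ₁, hτ₂⟩, fun γ z hz hγz => hV γ z hz.1 hγz.2⟩

theorem exists_finite_right_transversal (Γ : Subgroup SL(2, ℤ)) [Γ.FiniteIndex] :
    ∃ R : Set SL(2, ℤ), R.Finite ∧ ∀ g, ∃ γ ∈ Γ, ∃ r ∈ R, g = γ * r := by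
  refine ⟨Set.range fun q : SL(2, ℤ) ⧸ Γ => q.out⁻¹, Set.finite_range _, fun g => ?_⟩
  refine ⟨g * ((g⁻¹ : SL(2, ℤ)) : SL(2, ℤ) ⧸ Γ).out, ?_, _,
    ⟨((g⁻¹ : SL(2, ℤ)) : SL(2, ℤ) ⧸ Γ), rfl⟩, by simp⟩
  have := QuotientGroup.eq.1 (QuotientGroup.out_eq' ((g⁻¹ : SL(2, ℤ)) : SL(2, ℤ) ⧸ Γ)).symm
  simpa using this

/-- The part of the translates of the fundamental domain of height at most `Y`. -/
theorem exists_isCompact_cover (Γ : Subgroup SL(2, ℤ)) [Γ.FiniteIndex] (Y : ℝ) :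
    ∃ K : Set ℍ, IsCompact K ∧ ∀ τ : ℍ,
      (∃ γ ∈ Γ, γ • τ ∈ K) ∨ ∃ g : SL(2, ℤ), Y < (g • τ).im := by
  obtain ⟨R, hR, hRg⟩ := exists_finite_right_transversal Γ
  refine ⟨⋃ r ∈ R, (fun z => r • z) '' ModularGroup.truncatedFundamentalDomain Y,
    hR.isCompact_biUnion fun r _ =>
      (ModularGroup.isCompact_truncatedFundamentalDomain Y).image (continuous_SL_smul r),
    fun τ => ?_⟩
  obtain ⟨g, hg⟩ := ModularGroup.exists_smul_mem_fd τ
  by_cases h : (g • τ).im ≤ Y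
  · left
    obtain ⟨γ, hγ, r, hr, hgr⟩ := hRg g⁻¹
    refine ⟨γ⁻¹, inv_mem hγ, Set.mem_biUnion hr ⟨g • τ, ⟨hg, h⟩, ?_⟩⟩
    have : r = γ⁻¹ * g⁻¹ := by rw [hgr]; group
    simp only
    rw [this, ← mul_smul]
    simp
  · exact Or.inr ⟨g, not_le.1 h⟩

theorem isOpenMap_of_mdifferentiable {f : ℍ → ℂ} (hf : MDifferentiable 𝓘(ℂ) 𝓘(ℂ) f)
    (hne : ∃ z w, f z ≠ f w) : IsOpenMap f := by
  intro V hV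
  have hd := UpperHalfPlane.mdifferentiable_iff.1 hf
  have hU : IsOpen {z : ℂ | 0 < z.im} := isOpen_lt continuous_const Complex.continuous_im
  have hpre : IsPreconnected {z : ℂ | 0 < z.im} := (convex_halfSpace_im_gt 0).isPreconnected
  rcases (hd.analyticOnNhd hU).is_constant_or_isOpen hpre with ⟨w, hw⟩ | h
  · obtain ⟨z, z', hz⟩ := hne
    have h1 := hw z z.im_pos
    have h2 := hw z' z'.im_pos
    simp only [Function.comp_apply, ofComplex_apply] at h1 h2
    exact absurd (h1.trans h2.symm) hz
  · have := h (UpperHalfPlane.coe '' V) (by rintro _ ⟨z, -, rfl⟩; exact z.im_pos)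
      (isOpenEmbedding_coe.isOpenMap V hV)
    rwa [Set.image_image, show (fun x : ℍ => (f ∘ ofComplex) (x : ℂ)) = f by
      ext; simp [ofComplex_apply]] at this

end Geometry

section Rectangles

theorem isPreconnected_reProdIm_diff {a b c d : ℝ} {F : Set ℂ} (hF : F.Countable) :
    IsPreconnected ((Set.Ioo a b ×ℂ Set.Ioo c d) \ F) := by
  rcases le_or_gt b a with hab | hab
  · rw [Set.Ioo_eq_empty (not_lt.2 hab)]
    simpa [Complex.reProdIm] using isPreconnected_empty
  rcases le_or_gt d c with hcd | hcd
  · rw [Set.Ioo_eq_empty (not_lt.2 hcd)]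
    simpa [Complex.reProdIm] using isPreconnected_empty
  let u := OpenPartialHomeomorph.univBall ((a + b) / 2 : ℝ) ((b - a) / 2)
  let v := OpenPartialHomeomorph.univBall ((c + d) / 2 : ℝ) ((d - c) / 2)
  have hu : Continuous u := OpenPartialHomeomorph.continuous_univBall _ _
  have hv : Continuous v := OpenPartialHomeomorph.continuous_univBall _ _
  have hsu : u.source = Set.univ := OpenPartialHomeomorph.univBall_source _ _
  have hsv : v.source = Set.univ := OpenPartialHomeomorph.univBall_source _ _
  have hui : Function.Injective u := by
    have := u.injOn
    rwa [hsu, Set.injOn_univ] at this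
  have hvi : Function.Injective v := by
    have := v.injOn
    rwa [hsv, Set.injOn_univ] at this
  have hur : Set.range u = Set.Ioo a b := by
    rw [← Set.image_univ, ← hsu, u.image_source_eq_target,
      OpenPartialHomeomorph.univBall_target _ (by linarith), Real.ball_eq_Ioo]
    congr 1 <;> ring
  have hvr : Set.range v = Set.Ioo c d := by
    rw [← Set.image_univ, ← hsv, v.image_source_eq_target,
      OpenPartialHomeomorph.univBall_target _ (by linarith), Real.ball_eq_Ioo]
    congr 1 <;> ring
  let Φ : ℂ → ℂ := fun z => ⟨u z.re, v z.im⟩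
  have hΦ : Continuous Φ := by
    have : Φ = fun z => ((u z.re : ℝ) : ℂ) + ((v z.im : ℝ) : ℂ) * Complex.I := by
      ext z
      exact Complex.mk_eq_add_mul_I _ _
    rw [this]
    fun_prop
  have hΦi : Function.Injective Φ := fun z w h =>
    Complex.ext (hui (congrArg Complex.re h)) (hvi (congrArg Complex.im h))
  have himg : (Set.Ioo a b ×ℂ Set.Ioo c d) \ F = Φ '' (Φ ⁻¹' F)ᶜ := by
    ext z
    constructor
    · rintro ⟨hz, hzF⟩
      rw [Complex.mem_reProdIm, ← hur, ← hvr] at hz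
      obtain ⟨⟨x, hx⟩, ⟨y, hy⟩⟩ := hz
      have hz' : Φ ⟨x, y⟩ = z := Complex.ext hx hy
      exact ⟨⟨x, y⟩, by simpa [hz'] using hzF, hz'⟩
    · rintro ⟨w, hw, rfl⟩
      refine ⟨?_, hw⟩
      rw [Complex.mem_reProdIm, ← hur, ← hvr]
      exact ⟨⟨_, rfl⟩, ⟨_, rfl⟩⟩
  rw [himg]
  exact ((hF.preimage hΦi).isConnected_compl_of_one_lt_rank
    (by simp [Complex.rank_real_complex])).isPreconnected.image _ hΦ.continuousOn

/-- A property of intervals that holds locally and can be glued along overlaps holds for all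
intervals. -/
theorem interval_induction (P : ℝ → ℝ → Prop)
    (mono : ∀ a b a' b', P a b → a ≤ a' → b' ≤ b → P a' b')
    (loc : ∀ x, ∃ ε > 0, P (x - ε) (x + ε))
    (glue : ∀ a b c d, P a b → P c d → max a c < min b d → P (min a c) (max b d))
    (a b : ℝ) : P a b := by
  have key : ∀ x y : ℝ, ∃ ε > 0, P (min x y - ε) (max x y + ε) := by
    intro x y
    refine isPreconnected_univ.induction₂ (fun x y => ∃ ε > 0, P (min x y - ε) (max x y + ε))
      ?_ ?_ ?_ (Set.mem_univ x) (Set.mem_univ y)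
    · intro x _
      obtain ⟨ε, hε, h⟩ := loc x
      rw [nhdsWithin_univ]
      filter_upwards [Metric.ball_mem_nhds x (half_pos hε)] with y hy
      rw [Metric.mem_ball, Real.dist_eq, abs_lt] at hy
      refine ⟨ε / 2, half_pos hε, mono _ _ _ _ h ?_ ?_⟩
      · rcases min_cases x y with h | h <;> linarith
      · rcases max_cases x y with h | h <;> linarith
    · rintro x y z _ _ _ ⟨ε, hε, h⟩ ⟨δ, hδ, h'⟩
      refine ⟨min ε δ, lt_min hε hδ, ?_⟩
      refine mono _ _ _ _ (glue _ _ _ _ h h' ?_) ?_ ?_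
      · rw [max_lt_iff, lt_min_iff, lt_min_iff]
        have := min_le_right x y
        have := le_max_right x y
        have := min_le_left y z
        have := le_max_left y z
        have := min_le_left x y
        have := le_max_left x y
        refine ⟨⟨?_, ?_⟩, ?_, ?_⟩ <;> linarith
      · have := min_le_left ε δ
        have := min_le_right ε δ
        rcases min_cases x z with h | h
        · exact (min_le_left _ _).trans (by linarith [min_le_left x y])
        · exact (min_le_right _ _).trans (by linarith [min_le_right y z])
      · have := min_le_left ε δ
        have := min_le_right ε δ
        rcases max_cases x z with h | h
        · exact le_trans (by linarith [le_max_left x y]) (le_max_left _ _)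
        · exact le_trans (by linarith [le_max_right y z]) (le_max_right _ _)
    · rintro x y _ _ h
      rwa [min_comm, max_comm]
  obtain ⟨ε, hε, h⟩ := key a b
  exact mono _ _ _ _ h (by linarith [min_le_left a b]) (by linarith [le_max_right a b])

/-- A property of open sets in the plane that holds locally, is monotone, and can be glued along
overlapping rectangles holds for all rectangles. -/
theorem rectangle_induction (Q : Set ℂ → Prop)
    (mono : ∀ V W, Q W → V ⊆ W → Q V)
    (loc : ∀ c, ∃ W, IsOpen W ∧ c ∈ W ∧ Q W)
    (glue : ∀ a b c d a' b' c' d',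
      Q (Set.Ioo a b ×ℂ Set.Ioo c d) → Q (Set.Ioo a' b' ×ℂ Set.Ioo c' d') →
      ((Set.Ioo a b ×ℂ Set.Ioo c d) ∩ (Set.Ioo a' b' ×ℂ Set.Ioo c' d')).Nonempty →
      Q ((Set.Ioo a b ×ℂ Set.Ioo c d) ∪ (Set.Ioo a' b' ×ℂ Set.Ioo c' d')))
    (a b c d : ℝ) : Q (Set.Ioo a b ×ℂ Set.Ioo c d) := by
  have step : ∀ y, ∃ ε > 0, Q (Set.Ioo a b ×ℂ Set.Ioo (y - ε) (y + ε)) := by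
    intro y
    refine interval_induction (fun a b => ∃ ε > 0, Q (Set.Ioo a b ×ℂ Set.Ioo (y - ε) (y + ε)))
      ?_ ?_ ?_ a b
    · rintro a b a' b' ⟨ε, hε, h⟩ ha hb
      exact ⟨ε, hε, mono _ _ h fun z hz => ⟨Set.Ioo_subset_Ioo ha hb hz.1, hz.2⟩⟩
    · intro x
      obtain ⟨W, hW, hc, hQ⟩ := loc ⟨x, y⟩
      obtain ⟨ε, hε, hb⟩ := Metric.isOpen_iff.1 hW _ hc
      refine ⟨ε / 2, half_pos hε, ε / 2, half_pos hε, mono _ _ hQ fun z hz => hb ?_⟩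
      rw [Complex.mem_reProdIm] at hz
      rw [Metric.mem_ball, dist_eq_norm]
      refine (Complex.norm_le_abs_re_add_abs_im _).trans_lt ?_
      have h1 : |(z - ⟨x, y⟩ : ℂ).re| < ε / 2 := by
        rw [Complex.sub_re, abs_lt]
        constructor <;> linarith [hz.1.1, hz.1.2]
      have h2 : |(z - ⟨x, y⟩ : ℂ).im| < ε / 2 := by
        rw [Complex.sub_im, abs_lt]
        constructor <;> linarith [hz.2.1, hz.2.2]
      linarith
    · rintro p q r s ⟨ε, hε, h⟩ ⟨δ, hδ, h'⟩ hlt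
      have hm := lt_min hε hδ
      refine ⟨min ε δ, hm, ?_⟩
      have m1 := min_le_left ε δ
      have m2 := min_le_right ε δ
      have e1 : Q (Set.Ioo p q ×ℂ Set.Ioo (y - min ε δ) (y + min ε δ)) :=
        mono _ _ h fun z hz => ⟨hz.1, Set.Ioo_subset_Ioo (by linarith) (by linarith) hz.2⟩
      have e2 : Q (Set.Ioo r s ×ℂ Set.Ioo (y - min ε δ) (y + min ε δ)) :=
        mono _ _ h' fun z hz => ⟨hz.1, Set.Ioo_subset_Ioo (by linarith) (by linarith) hz.2⟩
      obtain ⟨x, hx⟩ := exists_between hlt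
      rw [max_lt_iff, lt_min_iff] at hx
      refine mono _ _ (glue _ _ _ _ _ _ _ _ e1 e2
        ⟨⟨x, y⟩, ⟨⟨hx.1.1, hx.2.1⟩, ?_⟩, ⟨⟨hx.1.2, hx.2.2⟩, ?_⟩⟩) ?_
      · exact ⟨by simpa using hm, by simpa using hm⟩
      · exact ⟨by simpa using hm, by simpa using hm⟩
      · intro z hz
        rw [Complex.mem_reProdIm, ← Set.Ioo_union_Ioo' (hx.1.2.trans hx.2.1)
          (hx.1.1.trans hx.2.2)] at hz
        exact hz.1.imp (fun h => ⟨h, hz.2⟩) fun h => ⟨h, hz.2⟩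
  refine interval_induction (fun c d => Q (Set.Ioo a b ×ℂ Set.Ioo c d)) ?_ step ?_ c d
  · intro p q p' q' h hp hq
    exact mono _ _ h fun z hz => ⟨hz.1, Set.Ioo_subset_Ioo hp hq hz.2⟩
  · intro p q r s h h' hlt
    obtain ⟨y, hy⟩ := exists_between hlt
    rw [max_lt_iff, lt_min_iff] at hy
    rcases le_or_gt b a with hab | hab
    · refine mono _ _ h fun z hz => ?_
      rw [Complex.mem_reProdIm, Set.Ioo_eq_empty (not_lt.2 hab)] at hz
      exact hz.1.elim
    refine mono _ _ (glue _ _ _ _ _ _ _ _ h h' ⟨⟨(a + b) / 2, y⟩,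
      ⟨⟨by simp; linarith, by simp; linarith⟩, ⟨hy.1.1, hy.2.1⟩⟩,
      ⟨⟨by simp; linarith, by simp; linarith⟩, ⟨hy.1.2, hy.2.2⟩⟩⟩) ?_
    intro z hz
    rw [Complex.mem_reProdIm, ← Set.Ioo_union_Ioo' (hy.1.2.trans hy.2.1)
      (hy.1.1.trans hy.2.2)] at hz
    exact hz.2.imp (fun h => ⟨hz.1, h⟩) fun h => ⟨hz.1, h⟩

end Rectangles

section Trivialization
open UpperHalfPlane MatrixGroups CongruenceSubgroup
open scoped Manifold

variable {Γ : Subgroup SL(2, ℤ)} {f : ℍ → ℂ} {A : Type*} [Group A]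

/-- `s` is a locally constant `φ`-equivariant map on the preimage of `W` under `f`. -/
structure IsTriv (f : ℍ → ℂ) (φ : Γ →* A) (W : Set ℂ) (s : ℍ → A) : Prop where
  equivariant : ∀ γ : Γ, ∀ z, f z ∈ W → s ((γ : SL(2, ℤ)) • z) = φ γ * s z
  locConst : ∀ z, f z ∈ W → ∀ᶠ w in 𝓝 z, s w = s z

theorem IsTriv.mono {φ : Γ →* A} {V W : Set ℂ} {s : ℍ → A} (h : IsTriv f φ W s) (hVW : V ⊆ W) :
    IsTriv f φ V s :=
  ⟨fun γ z hz => h.1 γ z (hVW hz), fun z hz => h.2 z (hVW hz)⟩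

theorem IsTriv.mul_right {φ : Γ →* A} {W : Set ℂ} {s : ℍ → A} (h : IsTriv f φ W s) (a : A) :
    IsTriv f φ W fun z => s z * a :=
  ⟨fun γ z hz => by rw [h.1 γ z hz, mul_assoc],
    fun z hz => (h.2 z hz).mono fun w hw => by rw [hw]⟩

theorem IsHauptmodul.continuous (hf : IsHauptmodul Γ f) : Continuous f := hf.mdiff.continuous

theorem IsHauptmodul.isOpenMap (hf : IsHauptmodul Γ f) : IsOpenMap f := by
  refine isOpenMap_of_mdifferentiable hf.mdiff ?_
  by_contra! h
  have h1 : (Set.range f).Finite :=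
    (Set.finite_singleton (f I)).subset (by rintro _ ⟨z, rfl⟩; exact h z I)
  exact Set.infinite_univ (α := ℂ) (by simpa using h1.union hf.cofinite)

theorem IsTriv.eq_of_isPreconnected (hf : IsHauptmodul Γ f) {φ : Γ →* A} {W : Set ℂ}
    {s t : ℍ → A} (hW : IsOpen W) (hc : IsPreconnected (W \ (Set.range f)ᶜ))
    (hs : IsTriv f φ W s) (ht : IsTriv f φ W t) {z w : ℍ} (hz : f z ∈ W) (hw : f w ∈ W) :
    (t z)⁻¹ * s z = (t w)⁻¹ * s w := by
  have hinv : ∀ x y, f x ∈ W → f x = f y → (t x)⁻¹ * s x = (t y)⁻¹ * s y := by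
    intro x y hx hxy
    obtain ⟨γ, hγ, rfl⟩ := hf.sep x y hxy
    rw [hs.1 ⟨γ, hγ⟩ x hx, ht.1 ⟨γ, hγ⟩ x hx]
    group
  have key := hc.induction₂ (fun c d => ∀ x y, f x = c → f y = d → (t x)⁻¹ * s x = (t y)⁻¹ * s y)
    ?_ ?_ ?_ ⟨hz, not_not_intro ⟨z, rfl⟩⟩ ⟨hw, not_not_intro ⟨w, rfl⟩⟩
  · exact key z w rfl rfl
  · rintro c ⟨hc, hcr⟩
    obtain ⟨x₀, rfl⟩ := not_not.1 hcr
    have h1 := (hs.2 x₀ hc).and (ht.2 x₀ hc)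
    have h2 := hf.isOpenMap.image_mem_nhds h1
    refine mem_nhdsWithin_of_mem_nhds ?_
    filter_upwards [h2, hW.mem_nhds hc] with d hd hdW x y hx hy
    obtain ⟨u, ⟨hu1, hu2⟩, rfl⟩ := hd
    rw [← hinv x₀ x hc hx.symm, ← hinv u y hdW hy.symm, hu1, hu2]
  · rintro c d e _ ⟨_, hdr⟩ _ h1 h2 x y hx hy
    obtain ⟨u, rfl⟩ := not_not.1 hdr
    rw [h1 x u hx rfl, h2 u y rfl hy]
  · intro c d _ _ h x y hx hy
    rw [h y x hy hx]

theorem exists_isTriv_union (hf : IsHauptmodul Γ f) {φ : Γ →* A} {V W : Set ℂ}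
    (hV : IsOpen V) (hW : IsOpen W)
    (hc : IsPreconnected ((V ∩ W) \ (Set.range f)ᶜ))
    (h1 : ∃ s, IsTriv f φ V s) (h2 : ∃ s, IsTriv f φ W s) : ∃ s, IsTriv f φ (V ∪ W) s := by
  classical
  obtain ⟨s, hs⟩ := h1
  obtain ⟨t, ht⟩ := h2
  obtain ⟨t', ht', hst⟩ : ∃ t', IsTriv f φ W t' ∧ ∀ z, f z ∈ V ∩ W → t' z = s z := by
    by_cases he : ∃ z, f z ∈ V ∩ W
    · obtain ⟨z₀, hz₀⟩ := he
      refine ⟨_, ht.mul_right ((t z₀)⁻¹ * s z₀), fun z hz => ?_⟩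
      rw [IsTriv.eq_of_isPreconnected hf (hV.inter hW) hc (hs.mono Set.inter_subset_left)
        (ht.mono Set.inter_subset_right) hz₀ hz]
      group
    · exact ⟨t, ht, fun z hz => absurd ⟨z, hz⟩ he⟩
  refine ⟨fun z => if f z ∈ V then s z else t' z, fun γ z hz => ?_, fun z hz => ?_⟩
  · simp only [hf.inv γ γ.2]
    split_ifs with h
    · exact hs.1 γ z h
    · exact ht'.1 γ z (hz.resolve_left h)
  · by_cases h : f z ∈ V
    · filter_upwards [hs.2 z h, (hV.preimage hf.continuous).mem_nhds h] with w hw hwV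
      rw [if_pos h, if_pos (Set.mem_preimage.1 hwV), hw]
    · have hzW := hz.resolve_left h
      filter_upwards [ht'.2 z hzW, (hW.preimage hf.continuous).mem_nhds hzW] with w hw hwW
      rw [if_neg h]
      split_ifs with hwV
      · rw [← hst w ⟨hwV, hwW⟩, hw]
      · exact hw

theorem exists_isTriv_of_cover (φ : Γ →* A) {ι : Type*} (V : ι → Set ℍ)
    (W : Set ℂ) (hV : ∀ i, IsOpen (V i))
    (hcover : ∀ z, f z ∈ W → ∃ i, ∃ γ : Γ, (γ : SL(2, ℤ)) • z ∈ V i)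
    (hsep : ∀ i j, ∀ γ : Γ, ∀ z ∈ V i, (γ : SL(2, ℤ)) • z ∈ V j → φ γ = 1) :
    ∃ s, IsTriv f φ W s := by
  classical
  let s : ℍ → A := fun z => if h : ∃ γ : Γ, ∃ i, (γ : SL(2, ℤ)) • z ∈ V i
    then (φ h.choose)⁻¹ else 1
  have hs : ∀ z i, ∀ γ : Γ, (γ : SL(2, ℤ)) • z ∈ V i → s z = (φ γ)⁻¹ := by
    intro z i γ hγ
    have h : ∃ γ : Γ, ∃ i, (γ : SL(2, ℤ)) • z ∈ V i := ⟨γ, i, hγ⟩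
    simp only [s, dif_pos h]
    obtain ⟨j, hj⟩ := h.choose_spec
    have := hsep i j (h.choose * γ⁻¹) _ hγ (by rw [← mul_smul]; simpa using hj)
    rw [map_mul, map_inv, mul_inv_eq_one] at this
    rw [this]
  refine ⟨s, fun γ z hz => ?_, fun z hz => ?_⟩
  · obtain ⟨i, δ, hδ⟩ := hcover z hz
    rw [hs z i δ hδ, hs _ i (δ * γ⁻¹) (by rw [← mul_smul]; simpa using hδ)]
    simp
  · obtain ⟨i, δ, hδ⟩ := hcover z hz
    filter_upwards [((hV i).preimage (continuous_SL_smul δ)).mem_nhds hδ] with w hw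
    rw [hs w i δ hw, hs z i δ hδ]

/-- The upper triangular subgroup of the modular group. -/
def upperTriangular : Subgroup SL(2, ℤ) where
  carrier := {g | g 1 0 = 0}
  mul_mem' := by
    intro a b ha hb
    have := (SL_mul_entries a b).2.2.1
    simp_all
  one_mem' := by simp
  inv_mem' := by
    intro a ha
    have := (SL_inv_entries a).2.2.1
    simp_all

theorem mem_upperTriangular {g : SL(2, ℤ)} : g ∈ upperTriangular ↔ g 1 0 = 0 := Iff.rfl

theorem im_smul_of_mem_upperTriangular {g : SL(2, ℤ)} (hg : g ∈ upperTriangular) (τ : ℍ) :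
    (g • τ).im = τ.im := by
  rw [im_SL_smul]
  rw [mem_upperTriangular] at hg
  have h1 := SL_det g
  rw [hg, mul_zero, sub_zero] at h1
  rw [hg]
  rcases Int.eq_one_or_neg_one_of_mul_eq_one' h1 with h | h <;> simp [h]

/-- A homomorphism killing all elliptic and parabolic elements is trivial if there is a
Hauptmodul. -/
theorem IsHauptmodul.hom_trivial [Γ.FiniteIndex] (hf : IsHauptmodul Γ f) (φ : Γ →* A)
    (hell : ∀ γ : Γ, (∃ τ : ℍ, (γ : SL(2, ℤ)) • τ = τ) → φ γ = 1)
    (hpar : ∀ γ : Γ, ∀ g : SL(2, ℤ), (g⁻¹ * γ * g) 1 0 = 0 → φ γ = 1) (γ : Γ) : φ γ = 1 := by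
  have hQ := rectangle_induction (fun W => ∃ s, IsTriv f φ W s)
    (fun V W ⟨s, hs⟩ hVW => ⟨s, hs.mono hVW⟩) ?_ ?_
  · obtain ⟨p⟩ : Joined (I : ℍ) ((γ : SL(2, ℤ)) • I) := PathConnectedSpace.joined _ _
    have hK : IsCompact (f '' Set.range p) := (isCompact_range p.continuous).image hf.continuous
    obtain ⟨B, hB⟩ := hK.isBounded.exists_norm_le
    obtain ⟨s, hs⟩ := hQ (-(B + 1)) (B + 1) (-(B + 1)) (B + 1)
    have hmem : ∀ t, f (p t) ∈ Set.Ioo (-(B + 1)) (B + 1) ×ℂ Set.Ioo (-(B + 1)) (B + 1) := by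
      intro t
      have h := hB _ ⟨p t, ⟨t, rfl⟩, rfl⟩
      have h1 := abs_le.1 ((Complex.abs_re_le_norm _).trans h)
      have h2 := abs_le.1 ((Complex.abs_im_le_norm _).trans h)
      exact ⟨⟨by linarith, by linarith⟩, ⟨by linarith, by linarith⟩⟩
    have hconst : IsLocallyConstant fun t => s (p t) := by
      rw [IsLocallyConstant.iff_eventually_eq]
      intro t
      exact p.continuous.continuousAt.eventually (hs.2 _ (hmem t))
    have h01 := hconst.apply_eq_of_isPreconnected isPreconnected_univ
      (Set.mem_univ 0) (Set.mem_univ 1)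
    have h0 := hmem 0
    simp only [Path.source, Path.target] at h01 h0
    rw [hs.1 γ _ h0] at h01
    simpa using h01
  · intro c
    by_cases hc : c ∈ Set.range f
    · obtain ⟨τ, rfl⟩ := hc
      obtain ⟨V, hV, hτV, hsep⟩ := exists_nhds_smul_disjoint τ
      refine ⟨f '' V, hf.isOpenMap V hV, ⟨τ, hτV, rfl⟩,
        exists_isTriv_of_cover φ (fun _ : Unit => V) _ (fun _ => hV) ?_ ?_⟩
      · rintro z ⟨w, hw, hwz⟩
        obtain ⟨γ, hγ, h⟩ := hf.sep z w hwz.symm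
        exact ⟨(), ⟨γ, hγ⟩, by rwa [h]⟩
      · intro _ _ γ z hz hγz
        exact hell γ ⟨τ, hsep γ z hz hγz⟩
    · obtain ⟨K, hK, hcov⟩ := exists_isCompact_cover Γ 1
      refine ⟨(f '' K)ᶜ, (hK.image hf.continuous).isClosed.isOpen_compl,
        fun ⟨z, _, hz⟩ => hc ⟨z, hz⟩, exists_isTriv_of_cover φ
        (fun q : DoubleCoset.Quotient (Γ : Set SL(2, ℤ)) (upperTriangular : Set SL(2, ℤ)) =>
          {z : ℍ | 1 < (q.out⁻¹ • z).im}) _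
        (fun q => isOpen_lt continuous_const (continuous_im.comp (continuous_SL_smul _))) ?_ ?_⟩
      · intro z hz
        rcases hcov z with ⟨δ, hδ, hδK⟩ | ⟨g, hg⟩
        · exact absurd ⟨_, hδK, hf.inv δ hδ z⟩ hz
        · obtain ⟨h, k, hh, hk, heq⟩ := DoubleCoset.mk_out_eq_mul Γ upperTriangular g⁻¹
          refine ⟨DoubleCoset.mk Γ upperTriangular g⁻¹, ⟨h, hh⟩, ?_⟩
          rw [Set.mem_ofPred_eq]
          have e : (h * g⁻¹ * k)⁻¹ • h • z = k⁻¹ • g • z := by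
            rw [← mul_smul, ← mul_smul]
            congr 1
            group
          rw [heq, e, im_smul_of_mem_upperTriangular (inv_mem hk)]
          exact hg
      · intro q r γ z hz hγz
        rw [Set.mem_ofPred_eq] at hz hγz
        have e : (r.out⁻¹ * γ * q.out) • q.out⁻¹ • z = r.out⁻¹ • (γ : SL(2, ℤ)) • z := by
          rw [← mul_smul, ← mul_smul]
          congr 1
          group
        have h0 := apply_one_zero_eq_zero_of_one_lt_im hz (γ := r.out⁻¹ * γ * q.out)
          (by rw [e]; exact hγz)
        have hqr : q = r := by
          rw [← DoubleCoset.out_eq' _ _ q, ← DoubleCoset.out_eq' _ _ r]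
          refine (DoubleCoset.eq _ _ _ _).2 ⟨γ, γ.2, _, inv_mem (mem_upperTriangular.2 h0), ?_⟩
          group
        subst hqr
        exact hpar γ _ h0
  · rintro a b c d a' b' c' d' h h' -
    refine exists_isTriv_union hf ?_ ?_ ?_ h h'
    · exact isOpen_Ioo.reProdIm isOpen_Ioo
    · exact isOpen_Ioo.reProdIm isOpen_Ioo
    · rw [show (Set.Ioo a b ×ℂ Set.Ioo c d) ∩ (Set.Ioo a' b' ×ℂ Set.Ioo c' d') =
        Set.Ioo (max a a') (min b b') ×ℂ Set.Ioo (max c c') (min d d') by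
          rw [← Set.Ioo_inter_Ioo, ← Set.Ioo_inter_Ioo]
          ext z
          simp only [Set.mem_inter_iff, Complex.mem_reProdIm]
          tauto]
      exact isPreconnected_reProdIm_diff hf.cofinite.countable

end Trivialization

section Characters
open UpperHalfPlane MatrixGroups CongruenceSubgroup
open scoped Manifold

theorem trace_sq_lt_of_smul_eq {γ : SL(2, ℤ)} {τ : ℍ} (h : γ • τ = τ) (hc : γ 1 0 ≠ 0) :
    (γ 0 0 + γ 1 1) ^ 2 < 4 := by
  have him := im_SL_smul γ τ
  rw [h, eq_div_iff (by
    intro h0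
    have := Complex.normSq_eq_zero.1 h0
    have him2 := congrArg Complex.im this
    simp at him2
    exact him2.elim (fun h => hc h) τ.im_pos.ne')] at him
  have hn : Complex.normSq (γ 1 0 * τ + γ 1 1) = 1 :=
    mul_left_cancel₀ τ.im_pos.ne' (by rw [him, mul_one])
  have hre : ((γ 1 0 : ℂ) * τ + γ 1 1) * τ = γ 0 0 * τ + γ 0 1 := by
    have h1 := coe_SL_smul γ τ
    rw [h, eq_div_iff (by
      intro h0
      rw [h0] at hn
      simp at hn)] at h1
    rw [mul_comm, h1]
  have h2 := congrArg Complex.im hre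
  simp only [Complex.mul_im, Complex.add_re, Complex.mul_re, Complex.intCast_re, coe_re,
    Complex.intCast_im, zero_mul, sub_zero, coe_im, Complex.add_im, add_zero] at h2
  have h3 : 2 * (γ 1 0 : ℝ) * τ.re = γ 0 0 - γ 1 1 := by
    refine mul_left_cancel₀ τ.im_pos.ne' ?_
    linear_combination h2
  rw [Complex.normSq_apply] at hn
  simp only [Complex.add_re, Complex.mul_re, Complex.intCast_re, coe_re, Complex.intCast_im,
    zero_mul, sub_zero, Complex.add_im, Complex.mul_im, coe_im, add_zero] at hn
  have hpos : 0 < (γ 1 0 * τ.im) ^ 2 := by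
    have : (γ 1 0 : ℝ) ≠ 0 := by exact_mod_cast hc
    have := τ.im_pos.ne'
    positivity
  have : ((γ 0 0 : ℝ) + γ 1 1) ^ 2 < 4 := by
    have e : (γ 0 0 : ℝ) + γ 1 1 = 2 * (γ 1 0 * τ.re + γ 1 1) := by linarith
    rw [e]
    nlinarith
  exact_mod_cast this

theorem trace_conj (γ g : SL(2, ℤ)) :
    (g⁻¹ * γ * g) 0 0 + (g⁻¹ * γ * g) 1 1 = γ 0 0 + γ 1 1 := by
  obtain ⟨i1, i2, i3, i4⟩ := SL_inv_entries g
  obtain ⟨m1, m2, m3, m4⟩ := SL_mul_entries g⁻¹ γ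
  obtain ⟨n1, n2, n3, n4⟩ := SL_mul_entries (g⁻¹ * γ) g
  rw [n1, n4, m1, m2, m3, m4, i1, i2, i3, i4]
  linear_combination (γ 0 0 + γ 1 1) * SL_det g

theorem trace_eq_of_apply_one_zero {γ : SL(2, ℤ)} (h : γ 1 0 = 0) :
    γ 0 0 + γ 1 1 = 2 ∨ γ 0 0 + γ 1 1 = -2 := by
  have h1 := SL_det γ
  rw [h, mul_zero, sub_zero] at h1
  rcases Int.eq_one_or_neg_one_of_mul_eq_one' h1 with h | h <;> simp [h]

theorem exists_trace_of_smul_eq {γ : SL(2, ℤ)} {τ : ℍ} (h : γ • τ = τ) :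
    ∃ j : ℕ, j < 5 ∧ γ 0 0 + γ 1 1 = 2 - j := by
  by_cases hc : γ 1 0 = 0
  · rcases trace_eq_of_apply_one_zero hc with h | h
    · exact ⟨0, by norm_num, by simp [h]⟩
    · exact ⟨4, by norm_num, by simp [h]⟩
  · have := trace_sq_lt_of_smul_eq h hc
    have h1 : γ 0 0 + γ 1 1 < 2 := by nlinarith
    have h2 : -2 < γ 0 0 + γ 1 1 := by nlinarith
    exact ⟨(2 - (γ 0 0 + γ 1 1)).toNat, by omega, by omega⟩

theorem exists_trace_of_conj {γ g : SL(2, ℤ)} (h : (g⁻¹ * γ * g) 1 0 = 0) :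
    ∃ j : ℕ, j < 5 ∧ γ 0 0 + γ 1 1 = 2 - j := by
  rw [← trace_conj γ g]
  rcases trace_eq_of_apply_one_zero h with h | h
  · exact ⟨0, by norm_num, by rw [h]; norm_num⟩
  · exact ⟨4, by norm_num, by rw [h]; norm_num⟩

/-- The reduction modulo a divisor of the level of the lower right entry. -/
def lowerRightHom {M N : ℕ} (h : M ∣ N) : Gamma0 N →* (ZMod M)ˣ :=
  MonoidHom.toHomUnits ((ZMod.castHom h (ZMod M)).toMonoidHom.comp (Gamma0Map N))

theorem coe_lowerRightHom {M N : ℕ} (h : M ∣ N) (γ : Gamma0 N) :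
    ((lowerRightHom h γ : (ZMod M)ˣ) : ZMod M) = ((γ : SL(2, ℤ)) 1 1 : ℤ) := by
  simp [lowerRightHom, Gamma0Map]

theorem lowerRightHom_surjective {M N : ℕ} (hN : N ≠ 0) (h : M ∣ N) :
    Function.Surjective (lowerRightHom h) := by
  intro u
  have : NeZero N := ⟨hN⟩
  obtain ⟨v, rfl⟩ := ZMod.unitsMap_surjective h u
  have hco := ZMod.val_coe_unit_coprime v
  obtain ⟨x, y, hxy⟩ := (Nat.isCoprime_iff_coprime.2 hco)
  refine ⟨⟨mkSL x (-y) N (v : ZMod N).val (by linarith), Gamma0_mem.2 (by simp)⟩, ?_⟩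
  ext
  rw [coe_lowerRightHom]
  simp [ZMod.unitsMap_val]

theorem IsHauptmodul.char_trivial {N M : ℕ} (hN : N ≠ 0) (hM : M ∣ N) {f : ℍ → ℂ}
    (hf : IsHauptmodul (Gamma0 N) f) {A : Type*} [Group A] (χ : (ZMod M)ˣ →* A)
    (hχ : ∀ u : (ZMod M)ˣ, ∀ j : ℕ, j < 5 → (u : ZMod M) ^ 2 + 1 + j * u = 2 * u → χ u = 1)
    (u : (ZMod M)ˣ) : χ u = 1 := by
  have : NeZero N := ⟨hN⟩
  obtain ⟨γ, rfl⟩ := lowerRightHom_surjective hN hM u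
  have key : ∀ γ : Gamma0 N, (∃ j : ℕ, j < 5 ∧ (γ : SL(2, ℤ)) 0 0 + (γ : SL(2, ℤ)) 1 1 = 2 - j) →
      (χ.comp (lowerRightHom hM)) γ = 1 := by
    rintro γ ⟨j, hj, htr⟩
    refine hχ _ j hj ?_
    rw [coe_lowerRightHom]
    have h0 : (((γ : SL(2, ℤ)) 1 0 : ℤ) : ZMod M) = 0 :=
      (ZMod.intCast_zmod_eq_zero_iff_dvd _ _).2 ((Int.natCast_dvd_natCast.2 hM).trans
        ((ZMod.intCast_zmod_eq_zero_iff_dvd _ _).1 (Gamma0_mem.1 γ.2)))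
    have h1 := congrArg (Int.cast : ℤ → ZMod M) (SL_det (γ : SL(2, ℤ)))
    have h2 := congrArg (Int.cast : ℤ → ZMod M) htr
    push_cast at h1 h2
    rw [h0] at h1
    linear_combination (((γ : SL(2, ℤ)) 1 1 : ℤ) : ZMod M) * h2 - h1
  exact hf.hom_trivial (χ.comp (lowerRightHom hM))
    (fun γ ⟨τ, hτ⟩ => key γ (exists_trace_of_smul_eq hτ))
    (fun γ g hg => key γ (exists_trace_of_conj hg)) γ

theorem mem_zpowers_neg_one {R : Type*} [Ring R] {u : Rˣ} :
    u ∈ Subgroup.zpowers (-1 : Rˣ) ↔ u = 1 ∨ u = -1 := by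
  constructor
  · rintro ⟨n, rfl⟩
    exact n.even_or_odd.imp (fun h => h.neg_one_zpow) fun h => h.neg_one_zpow
  · rintro (rfl | rfl)
    · exact one_mem _
    · exact Subgroup.mem_zpowers _

/-- A numerical criterion for the nonexistence of a Hauptmodul. -/
theorem not_isHauptmodul_of_pow {N M D k w : ℕ} (hN : N ≠ 0) (hM : M ∣ N) (hD : D ∣ M)
    (hw : w.Coprime M)
    (hC : ∀ u < M, ∀ j < 5, (u ^ 2 + 1 + j * u) % M = (2 * u) % M →
      u ^ k % D = 1 % D ∨ (u ^ k + 1) % D = 0)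
    (hw' : w ^ k % D ≠ 1 % D ∧ (w ^ k + 1) % D ≠ 0) (f : ℍ → ℂ) :
    ¬ IsHauptmodul (Gamma0 N) f := by
  intro hf
  have hM0 : M ≠ 0 := fun h => hN (by simpa [h] using hM)
  have : NeZero M := ⟨hM0⟩
  have key : ∀ u : (ZMod M)ˣ, ∀ v : ℕ, (u : ZMod M) = v →
      ((ZMod.unitsMap hD u) ^ k ∈ Subgroup.zpowers (-1 : (ZMod D)ˣ) ↔
        v ^ k % D = 1 % D ∨ (v ^ k + 1) % D = 0) := by
    intro u v huv
    rw [mem_zpowers_neg_one]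
    have e : ((ZMod.unitsMap hD u : (ZMod D)ˣ) : ZMod D) = v := by
      rw [ZMod.unitsMap_val, huv]
      exact ZMod.cast_natCast hD v
    refine or_congr ?_ ?_
    · rw [← Units.val_inj, Units.val_pow_eq_pow_val, e, Units.val_one]
      have := ZMod.natCast_eq_natCast_iff (v ^ k) 1 D
      push_cast at this
      exact this
    · rw [← Units.val_inj, Units.val_pow_eq_pow_val, e, Units.val_neg, Units.val_one,
        ← Nat.dvd_iff_mod_eq_zero, ← ZMod.natCast_eq_zero_iff, eq_neg_iff_add_eq_zero]
      push_cast
      rfl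
  have htriv := hf.char_trivial hN hM
    ((QuotientGroup.mk' (Subgroup.zpowers (-1 : (ZMod D)ˣ))).comp
      ((powMonoidHom k).comp (ZMod.unitsMap hD))) ?_ (ZMod.unitOfCoprime w hw)
  · have := (key _ w (ZMod.coe_unitOfCoprime w hw)).1 ((QuotientGroup.eq_one_iff _).1 htriv)
    exact this.elim hw'.1 hw'.2
  · intro u j hj huj
    refine (QuotientGroup.eq_one_iff _).2 ((key u (u : ZMod M).val (by simp)).2
      (hC _ (ZMod.val_lt _) j hj ?_))
    rw [← Nat.ModEq, ← ZMod.natCast_eq_natCast_iff]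
    push_cast
    simpa using huj

theorem not_isHauptmodul_of_prime_dvd {N p : ℕ} (hN : N ≠ 0) (hp : p.Prime) (hpN : p ∣ N)
    (h12 : ¬ (p - 1) ∣ 12) (f : ℍ → ℂ) : ¬ IsHauptmodul (Gamma0 N) f := by
  intro hf
  have : Fact p.Prime := ⟨hp⟩
  have htriv := hf.char_trivial hN hpN (powMonoidHom 12) ?_
  · obtain ⟨g, hg⟩ := IsCyclic.exists_generator (α := (ZMod p)ˣ)
    have h1 := htriv g
    rw [powMonoidHom_apply] at h1
    have h2 := orderOf_dvd_of_pow_eq_one h1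
    rw [orderOf_eq_card_of_forall_mem_zpowers hg, Nat.card_eq_fintype_card,
      ZMod.card_units] at h2
    exact h12 h2
  · intro u j hj hu
    rw [powMonoidHom_apply, ← Units.val_inj, Units.val_pow_eq_pow_val, Units.val_one]
    interval_cases j
    · have : ((u : ZMod p) - 1) ^ 2 = 0 := by push_cast at hu; linear_combination hu
      rw [sub_eq_zero.1 (pow_eq_zero_iff two_ne_zero |>.1 this), one_pow]
    · have : (u : ZMod p) ^ 3 = -1 := by
        push_cast at hu
        linear_combination ((u : ZMod p) + 1) * hu
      calc (u : ZMod p) ^ 12 = (u ^ 3) ^ 4 := by ring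
        _ = 1 := by rw [this]; norm_num
    · have : (u : ZMod p) ^ 2 = -1 := by
        push_cast at hu
        linear_combination hu
      calc (u : ZMod p) ^ 12 = (u ^ 2) ^ 6 := by ring
        _ = 1 := by rw [this]; norm_num
    · have : (u : ZMod p) ^ 3 = 1 := by
        push_cast at hu
        linear_combination ((u : ZMod p) - 1) * hu
      calc (u : ZMod p) ^ 12 = (u ^ 3) ^ 4 := by ring
        _ = 1 := by rw [this]; norm_num
    · have : ((u : ZMod p) + 1) ^ 2 = 0 := by push_cast at hu; linear_combination hu
      rw [eq_neg_of_add_eq_zero_left (pow_eq_zero_iff two_ne_zero |>.1 this)]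
      norm_num

end Characters

section Levels
open UpperHalfPlane MatrixGroups CongruenceSubgroup

set_option synthInstance.maxSize 1000 in
set_option synthInstance.maxHeartbeats 400000 in
theorem mem_of_not_dvd_of_prime_factors {N : ℕ} (hN : 1 < N)
    (hp : ∀ p : ℕ, p.Prime → p ∣ N → p = 2 ∨ p = 3 ∨ p = 5 ∨ p = 7 ∨ p = 13)
    (hM : ∀ M ∈ [14, 15, 20, 21, 24, 26, 27, 32, 35, 39, 65, 91, 125, 343, 2197], ¬ M ∣ N) :
    N ∈ [2, 3, 4, 5, 6, 7, 8, 9, 10, 12, 13, 16, 18, 25, 36, 49, 50, 169] := by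
  obtain ⟨a, m₂, h₂, e₂⟩ := Nat.exists_eq_pow_mul_and_not_dvd (n := N) (by omega) 2 (by norm_num)
  obtain ⟨b, m₃, h₃, e₃⟩ := Nat.exists_eq_pow_mul_and_not_dvd (n := m₂)
    (by rintro rfl; simp at h₂) 3 (by norm_num)
  obtain ⟨c, m₅, h₅, e₅⟩ := Nat.exists_eq_pow_mul_and_not_dvd (n := m₃)
    (by rintro rfl; simp at h₃) 5 (by norm_num)
  obtain ⟨d, m₇, h₇, e₇⟩ := Nat.exists_eq_pow_mul_and_not_dvd (n := m₅)
    (by rintro rfl; simp at h₅) 7 (by norm_num)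
  obtain ⟨e, m, hm, e₁₃⟩ := Nat.exists_eq_pow_mul_and_not_dvd (n := m₇)
    (by rintro rfl; simp at h₇) 13 (by norm_num)
  have d₇ : m ∣ m₇ := ⟨_, by rw [e₁₃, mul_comm]⟩
  have d₅ : m ∣ m₅ := d₇.trans ⟨_, by rw [e₇, mul_comm]⟩
  have d₃ : m ∣ m₃ := d₅.trans ⟨_, by rw [e₅, mul_comm]⟩
  have d₂ : m ∣ m₂ := d₃.trans ⟨_, by rw [e₃, mul_comm]⟩
  have dN : m ∣ N := d₂.trans ⟨_, by rw [e₂, mul_comm]⟩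
  have m1 : m = 1 := by
    by_contra hm1
    obtain ⟨p, hpp, hpm⟩ := Nat.exists_prime_and_dvd hm1
    rcases hp p hpp (hpm.trans dN) with rfl | rfl | rfl | rfl | rfl
    · exact h₂ (hpm.trans d₂)
    · exact h₃ (hpm.trans d₃)
    · exact h₅ (hpm.trans d₅)
    · exact h₇ (hpm.trans d₇)
    · exact hm hpm
  have hN' : N = 2 ^ a * (3 ^ b * (5 ^ c * (7 ^ d * 13 ^ e))) := by
    rw [e₂, e₃, e₅, e₇, e₁₃, m1, mul_one]
  have bound : ∀ (p k j : ℕ), p ^ j ∣ N → ¬ p ^ k ∣ N → j < k := fun p k j h h' => by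
    by_contra hjk
    exact h' ((pow_dvd_pow p (not_lt.1 hjk)).trans h)
  have ha : a < 5 := bound 2 5 a ⟨_, hN'⟩ (hM 32 (by simp))
  have hb : b < 3 := bound 3 3 b ⟨2 ^ a * (5 ^ c * (7 ^ d * 13 ^ e)), by rw [hN']; ring⟩
    (hM 27 (by simp))
  have hc : c < 3 := bound 5 3 c ⟨2 ^ a * (3 ^ b * (7 ^ d * 13 ^ e)), by rw [hN']; ring⟩
    (hM 125 (by simp))
  have hd : d < 3 := bound 7 3 d ⟨2 ^ a * (3 ^ b * (5 ^ c * 13 ^ e)), by rw [hN']; ring⟩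
    (hM 343 (by simp))
  have he : e < 3 := bound 13 3 e ⟨2 ^ a * (3 ^ b * (5 ^ c * 7 ^ d)), by rw [hN']; ring⟩
    (hM 2197 (by simp))
  subst hN'
  have key : ∀ a < 5, ∀ b < 3, ∀ c < 3, ∀ d < 3, ∀ e < 3,
      1 < 2 ^ a * (3 ^ b * (5 ^ c * (7 ^ d * 13 ^ e))) →
      (∀ M ∈ [14, 15, 20, 21, 24, 26, 27, 32, 35, 39, 65, 91, 125, 343, 2197],
        ¬ M ∣ 2 ^ a * (3 ^ b * (5 ^ c * (7 ^ d * 13 ^ e)))) →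
      2 ^ a * (3 ^ b * (5 ^ c * (7 ^ d * 13 ^ e))) ∈
        [2, 3, 4, 5, 6, 7, 8, 9, 10, 12, 13, 16, 18, 25, 36, 49, 50, 169] := by
    decide +kernel
  exact key a ha b hb c hc d hd e he hN hM

theorem not_isHauptmodul_of_dvd {N M : ℕ} (hN : N ≠ 0) (hMN : M ∣ N)
    (hM : M ∈ [14, 15, 20, 21, 24, 26, 27, 32, 35, 39, 65, 91, 125, 343, 2197]) (f : ℍ → ℂ) :
    ¬ IsHauptmodul (Gamma0 N) f := by
  simp only [List.mem_cons, List.not_mem_nil, or_false] at hM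
  rcases hM with rfl | rfl | rfl | rfl | rfl | rfl | rfl | rfl | rfl | rfl | rfl | rfl | rfl |
    rfl | rfl
  · exact not_isHauptmodul_of_pow (D := 7) (k := 1) (w := 3) hN hMN (by norm_num) (by norm_num)
      (by decide +kernel) (by decide) f
  · exact not_isHauptmodul_of_pow (D := 5) (k := 1) (w := 2) hN hMN (by norm_num) (by norm_num)
      (by decide +kernel) (by decide) f
  · exact not_isHauptmodul_of_pow (D := 5) (k := 1) (w := 3) hN hMN (by norm_num) (by norm_num)
      (by decide +kernel) (by decide) f
  · exact not_isHauptmodul_of_pow (D := 21) (k := 3) (w := 2) hN hMN (by norm_num) (by norm_num)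
      (by decide +kernel) (by decide) f
  · exact not_isHauptmodul_of_pow (D := 12) (k := 1) (w := 5) hN hMN (by norm_num) (by norm_num)
      (by decide +kernel) (by decide) f
  · exact not_isHauptmodul_of_pow (D := 13) (k := 2) (w := 3) hN hMN (by norm_num) (by norm_num)
      (by decide +kernel) (by decide) f
  · exact not_isHauptmodul_of_pow (D := 9) (k := 1) (w := 2) hN hMN (by norm_num) (by norm_num)
      (by decide +kernel) (by decide) f
  · exact not_isHauptmodul_of_pow (D := 8) (k := 1) (w := 3) hN hMN (by norm_num) (by norm_num)
      (by decide +kernel) (by decide) f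
  · exact not_isHauptmodul_of_pow (D := 5) (k := 1) (w := 2) hN hMN (by norm_num) (by norm_num)
      (by decide +kernel) (by decide) f
  · exact not_isHauptmodul_of_pow (D := 13) (k := 3) (w := 2) hN hMN (by norm_num) (by norm_num)
      (by decide +kernel) (by decide) f
  · exact not_isHauptmodul_of_pow (D := 13) (k := 2) (w := 2) hN hMN (by norm_num) (by norm_num)
      (by decide +kernel) (by decide) f
  · exact not_isHauptmodul_of_pow (D := 13) (k := 3) (w := 2) hN hMN (by norm_num) (by norm_num)
      (by decide +kernel) (by decide) f
  · exact not_isHauptmodul_of_pow (D := 25) (k := 2) (w := 2) hN hMN (by norm_num) (by norm_num)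
      (by decide +kernel) (by decide) f
  · exact not_isHauptmodul_of_pow (D := 49) (k := 3) (w := 2) hN hMN (by norm_num) (by norm_num)
      (by decide +kernel) (by decide) f
  · exact not_isHauptmodul_of_pow (D := 169) (k := 6) (w := 2) hN hMN (by norm_num) (by norm_num)
      (by decide +kernel) (by decide) f

theorem IsHauptmodul.level_mem {N : ℕ} (hN : 1 < N) {f : ℍ → ℂ} (hf : IsHauptmodul (Gamma0 N) f) :
    N ∈ [2, 3, 4, 5, 6, 7, 8, 9, 10, 12, 13, 16, 18, 25, 36, 49, 50, 169] := by
  refine mem_of_not_dvd_of_prime_factors hN (fun p hp hpN => ?_) fun M hM hMN =>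
    not_isHauptmodul_of_dvd (by omega) hMN hM f hf
  have h12 : (p - 1) ∣ 12 := by
    by_contra h12
    exact not_isHauptmodul_of_prime_dvd (by omega) hp hpN h12 f hf
  have := Nat.le_of_dvd (by norm_num) h12
  have : p ≤ 13 := by omega
  interval_cases p <;> first | omega | (revert hp; norm_num)

end Levels

section ModularSymbols
open UpperHalfPlane MatrixGroups CongruenceSubgroup

/-- Functions of the bottom row satisfying the two-term and three-term Manin relations. -/
structure IsManinSymbol (f : ℤ → ℤ → ℤ) : Prop where
  swap : ∀ c d, f d (-c) = -f c d
  add : ∀ c d, IsCoprime c d → f c d = f (c + d) d + f c (c + d)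

theorem IsManinSymbol.neg_neg {f : ℤ → ℤ → ℤ} (hf : IsManinSymbol f) (c d : ℤ) :
    f (-c) (-d) = f c d := by
  rw [hf.swap, hf.swap, _root_.neg_neg]

/-- The value of the modular symbol from `∞` to `p / q`, computed by the continued fraction
algorithm. -/
def cuspSymbol (f : ℤ → ℤ → ℤ) (p : ℤ) (q : ℕ) : ℤ :=
  if _h : q = 0 then 0 else
    cuspSymbol f ((p * ((p : ZMod q)⁻¹).val - 1) / q) ((p : ZMod q)⁻¹).val
      - f q ((p : ZMod q)⁻¹).val
  termination_by q
  decreasing_by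
    have : NeZero q := ⟨_h⟩
    exact ZMod.val_lt _

theorem cuspSymbol_zero (f : ℤ → ℤ → ℤ) (p : ℤ) : cuspSymbol f p 0 = 0 := by
  rw [cuspSymbol, dif_pos rfl]

theorem cuspSymbol_of_lt (f : ℤ → ℤ → ℤ) {p r : ℤ} {q s : ℕ} (h : p * s - r * q = 1)
    (hs : s < q) : cuspSymbol f p q = cuspSymbol f r s - f q s := by
  have hq : q ≠ 0 := by omega
  have : NeZero q := ⟨hq⟩
  have e : ((p : ZMod q)⁻¹).val = s := by
    have h1 : (p : ZMod q) * (s : ZMod q) = 1 := by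
      have := congrArg (Int.cast : ℤ → ZMod q) h
      push_cast at this
      simpa using this
    rw [ZMod.inv_eq_of_mul_eq_one _ _ _ h1, ZMod.val_natCast, Nat.mod_eq_of_lt hs]
  rw [cuspSymbol, dif_neg hq, e]
  congr 2
  rw [show p * s - 1 = r * q by linarith]
  exact Int.mul_ediv_cancel _ (by exact_mod_cast hq)

theorem cuspSymbol_edge {f : ℤ → ℤ → ℤ} (hf : IsManinSymbol f) (n : ℕ) :
    ∀ (p r : ℤ) (q s : ℕ), q + s ≤ n → p * s - r * q = 1 →
      cuspSymbol f r s - cuspSymbol f p q = f q s := by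
  induction n with
  | zero =>
    intro p r q s hqs h
    obtain ⟨rfl, rfl⟩ : q = 0 ∧ s = 0 := by omega
    simp at h
  | succ n ih =>
    intro p r q s hqs h
    by_cases hs : s < q
    · rw [cuspSymbol_of_lt f h hs]
      ring
    rw [not_lt] at hs
    obtain ⟨t, rfl⟩ := Nat.exists_eq_add_of_le hs
    rcases Nat.eq_zero_or_pos q with rfl | hq
    · have h1 : p * t = 1 := by simpa using h
      have ht : t = 1 := by
        rcases Int.eq_one_or_neg_one_of_mul_eq_one' h1 with h | h <;> omega
      subst ht
      have hp : p = 1 := by simpa using h1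
      rw [cuspSymbol_zero, zero_add, cuspSymbol_of_lt f (r := -1) (s := 0) (by simp) (by simp),
        cuspSymbol_zero]
      have := hf.swap 1 0
      have := hf.neg_neg 0 1
      simp at *
      linarith
    · have h1 := ih p (r - p) q t (by omega) (by push_cast at h; linarith)
      have h2 : cuspSymbol f r (q + t) = cuspSymbol f (r - p) t - f ((q + t : ℕ) : ℤ) t :=
        cuspSymbol_of_lt f (by push_cast at h ⊢; linarith) (by omega)
      have h3 := hf.add q t ⟨p - r, p, by push_cast at h; linarith⟩
      push_cast at *
      linarith

/-- The value at the cusp `g ∞`. -/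
def symbolAt (f : ℤ → ℤ → ℤ) (g : SL(2, ℤ)) : ℤ :=
  if 0 ≤ g 1 0 then cuspSymbol f (g 0 0) (g 1 0).toNat
  else cuspSymbol f (-g 0 0) (-g 1 0).toNat

theorem symbolAt_of_nonneg (f : ℤ → ℤ → ℤ) {g : SL(2, ℤ)} (h : 0 ≤ g 1 0) :
    symbolAt f g = cuspSymbol f (g 0 0) (g 1 0).toNat := if_pos h

theorem symbolAt_of_nonpos (f : ℤ → ℤ → ℤ) {g : SL(2, ℤ)} (h : g 1 0 ≤ 0) :
    symbolAt f g = cuspSymbol f (-g 0 0) (-g 1 0).toNat := by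
  rcases h.lt_or_eq with h | h
  · exact if_neg (not_le.2 h)
  · rw [symbolAt, if_pos h.ge, h]
    simp [cuspSymbol_zero]

theorem symbolAt_congr (f : ℤ → ℤ → ℤ) {g h : SL(2, ℤ)} (h0 : g 0 0 = h 0 0)
    (h1 : g 1 0 = h 1 0) : symbolAt f g = symbolAt f h := by
  rw [symbolAt, symbolAt, h0, h1]

theorem symbolAt_of_apply_one_zero (f : ℤ → ℤ → ℤ) {g : SL(2, ℤ)} (h : g 1 0 = 0) :
    symbolAt f g = 0 := by
  rw [symbolAt_of_nonneg f h.ge, h]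
  exact cuspSymbol_zero _ _

theorem S_entries (g : SL(2, ℤ)) : (g * ModularGroup.S) 0 0 = g 0 1 ∧
    (g * ModularGroup.S) 0 1 = -g 0 0 ∧ (g * ModularGroup.S) 1 0 = g 1 1 ∧
    (g * ModularGroup.S) 1 1 = -g 1 0 := by
  obtain ⟨h1, h2, h3, h4⟩ := SL_mul_entries g ModularGroup.S
  rw [h1, h2, h3, h4]
  simp [ModularGroup.S]

theorem symbolAt_mul_S {f : ℤ → ℤ → ℤ} (hf : IsManinSymbol f) (g : SL(2, ℤ)) :
    symbolAt f (g * ModularGroup.S) - symbolAt f g = f (g 1 0) (g 1 1) := by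
  obtain ⟨h1, -, h3, -⟩ := S_entries g
  have hdet := SL_det g
  rcases le_total 0 (g 1 0) with hc | hc <;> rcases le_total 0 (g 1 1) with hd | hd
  · rw [symbolAt_of_nonneg f (by rwa [h3]), symbolAt_of_nonneg f hc, h1, h3]
    rw [cuspSymbol_edge hf _ (g 0 0) (g 0 1) _ _ le_rfl (by
      rw [Int.toNat_of_nonneg hc, Int.toNat_of_nonneg hd]; linarith), Int.toNat_of_nonneg hc,
      Int.toNat_of_nonneg hd]
  · rw [symbolAt_of_nonpos f (by rwa [h3]), symbolAt_of_nonneg f hc, h1, h3]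
    have hd' : 0 ≤ -g 1 1 := by linarith
    have := cuspSymbol_edge hf _ (-g 0 1) (g 0 0) (-g 1 1).toNat (g 1 0).toNat le_rfl (by
      rw [Int.toNat_of_nonneg hc, Int.toNat_of_nonneg hd']; linarith)
    rw [Int.toNat_of_nonneg hc, Int.toNat_of_nonneg hd'] at this
    have h5 := hf.swap (g 1 0) (-g 1 1)
    have h6 := hf.swap (-g 1 1) (g 1 0)
    rw [_root_.neg_neg] at h6
    linarith
  · rw [symbolAt_of_nonneg f (by rwa [h3]), symbolAt_of_nonpos f hc, h1, h3]
    have hc' : 0 ≤ -g 1 0 := by linarith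
    have := cuspSymbol_edge hf _ (g 0 1) (-g 0 0) (g 1 1).toNat (-g 1 0).toNat le_rfl (by
      rw [Int.toNat_of_nonneg hc', Int.toNat_of_nonneg hd]; linarith)
    rw [Int.toNat_of_nonneg hc', Int.toNat_of_nonneg hd] at this
    have h5 := hf.swap (g 1 0) (g 1 1)
    linarith
  · rw [symbolAt_of_nonpos f (by rwa [h3]), symbolAt_of_nonpos f hc, h1, h3]
    have hc' : 0 ≤ -g 1 0 := by linarith
    have hd' : 0 ≤ -g 1 1 := by linarith
    rw [cuspSymbol_edge hf _ (-g 0 0) (-g 0 1) _ _ le_rfl (by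
      rw [Int.toNat_of_nonneg hc', Int.toNat_of_nonneg hd']; linarith), Int.toNat_of_nonneg hc',
      Int.toNat_of_nonneg hd', hf.neg_neg]

theorem Matrix.pow_twelve_eq_one {A : Matrix (Fin 2) (Fin 2) ℤ}
    (hdet : A 0 0 * A 1 1 - A 0 1 * A 1 0 = 1) (h : (A 0 0 + A 1 1) ^ 2 < 4) : A ^ 12 = 1 := by
  have h1 : A 0 0 + A 1 1 < 2 := by nlinarith
  have h2 : -2 < A 0 0 + A 1 1 := by nlinarith
  have hsq : A * A = (A 0 0 + A 1 1) • A - 1 := by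
    ext i j
    fin_cases i <;> fin_cases j <;>
      simp only [Matrix.mul_apply, Fin.sum_univ_two, Matrix.sub_apply, Matrix.smul_apply,
        smul_eq_mul, Matrix.one_apply, Fin.zero_eta, Fin.mk_one, Fin.isValue, ite_true,
        zero_ne_one, one_ne_zero, ite_false]
    · linear_combination -hdet
    · ring
    · ring
    · linear_combination -hdet
  obtain h | h | h : A 0 0 + A 1 1 = -1 ∨ A 0 0 + A 1 1 = 0 ∨ A 0 0 + A 1 1 = 1 := by omega
  all_goals rw [h] at hsq
  · have e : A ^ 3 = 1 := by
      rw [pow_succ, pow_two, hsq]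
      simp [sub_mul, hsq]
    rw [show 12 = 3 * 4 by norm_num, pow_mul, e, one_pow]
  · have e : A ^ 2 = -1 := by rw [pow_two, hsq]; simp
    rw [show 12 = 2 * 6 by norm_num, pow_mul, e]
    simp [pow_succ]
  · have e : A ^ 3 = -1 := by
      rw [pow_succ, pow_two, hsq]
      simp [sub_mul, hsq]
    rw [show 12 = 3 * 4 by norm_num, pow_mul, e]
    simp [pow_succ]

theorem SL_pow_twelve {γ : SL(2, ℤ)} (h : (γ 0 0 + γ 1 1) ^ 2 < 4) : γ ^ 12 = 1 :=
  Subtype.ext (by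
    rw [Matrix.SpecialLinearGroup.coe_pow]
    exact Matrix.pow_twelve_eq_one (SL_det γ) h)

theorem symbolAt_mul {f : ℤ → ℤ → ℤ} (hf : IsManinSymbol f) {γ : SL(2, ℤ)}
    (hγ : ∀ g : SL(2, ℤ), f ((γ * g) 1 0) ((γ * g) 1 1) = f (g 1 0) (g 1 1)) (g : SL(2, ℤ)) :
    symbolAt f (γ * g) = symbolAt f γ + symbolAt f g := by
  have hS : ∀ g : SL(2, ℤ), symbolAt f (γ * (g * ModularGroup.S)) - symbolAt f (g * ModularGroup.S)
      = symbolAt f (γ * g) - symbolAt f g := by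
    intro g
    have h1 := symbolAt_mul_S hf (γ * g)
    have h2 := symbolAt_mul_S hf g
    rw [hγ, mul_assoc] at h1
    linarith
  have hT : ∀ g : SL(2, ℤ), ∀ k : ℤ, symbolAt f (g * ModularGroup.T ^ k) = symbolAt f g := by
    intro g k
    obtain ⟨h1, -, h3, -⟩ := SL_mul_entries g (ModularGroup.T ^ k)
    refine symbolAt_congr f ?_ ?_
    · rw [h1, ModularGroup.coe_T_zpow]; simp
    · rw [h3, ModularGroup.coe_T_zpow]; simp
  have hS' : ∀ g : SL(2, ℤ), symbolAt f (γ * (g * ModularGroup.S⁻¹)) -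
      symbolAt f (g * ModularGroup.S⁻¹) = symbolAt f (γ * g) - symbolAt f g := by
    intro g
    rw [← hS, inv_mul_cancel_right]
  have key : symbolAt f (γ * g) - symbolAt f g = symbolAt f γ := by
    have hg : g ∈ Subgroup.closure ({ModularGroup.S, ModularGroup.T} : Set SL(2, ℤ)) := by
      rw [SpecialLinearGroup.SL2Z_generators]; trivial
    induction hg using Subgroup.closure_induction_right with
    | one =>
      rw [mul_one, symbolAt_of_apply_one_zero f (g := 1) (by simp), sub_zero]
    | mul_right x _ y hy ih =>
      rcases hy with rfl | rfl
      · rw [hS, ih]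
      · have := hT x 1
        have := hT (γ * x) 1
        rw [zpow_one, mul_assoc] at *
        simp_all
    | mul_inv_cancel x _ y hy ih =>
      rcases hy with rfl | rfl
      · rw [hS', ih]
      · have h1 := hT x (-1)
        have h2 := hT (γ * x) (-1)
        rw [zpow_neg_one] at h1 h2
        rw [← mul_assoc, h1, h2, ih]
  linarith

/-- A Manin symbol invariant under a finite index subgroup and with a nonzero period obstructs the
existence of a Hauptmodul. -/
theorem IsHauptmodul.symbolAt_eq_zero {Γ : Subgroup SL(2, ℤ)} [Γ.FiniteIndex] {F : ℍ → ℂ}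
    (hF : IsHauptmodul Γ F) {f : ℤ → ℤ → ℤ} (hf : IsManinSymbol f)
    (hΓ : ∀ γ ∈ Γ, ∀ g : SL(2, ℤ), f ((γ * g) 1 0) ((γ * g) 1 1) = f (g 1 0) (g 1 1))
    {γ : SL(2, ℤ)} (hγ : γ ∈ Γ) : symbolAt f γ = 0 := by
  let φ : Γ →* Multiplicative ℤ :=
    { toFun := fun γ => Multiplicative.ofAdd (symbolAt f γ)
      map_one' := by
        rw [OneMemClass.coe_one, symbolAt_of_apply_one_zero f (by simp)]; rfl
      map_mul' := fun x y => by
        rw [Subgroup.coe_mul, symbolAt_mul hf (hΓ x x.2)]; rfl }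
  have hpar : ∀ γ : Γ, ∀ g : SL(2, ℤ), (g⁻¹ * γ * g) 1 0 = 0 → φ γ = 1 := by
    intro γ g hg
    change Multiplicative.ofAdd (symbolAt f γ) = 1
    rw [ofAdd_eq_one]
    have h1 := symbolAt_mul hf (hΓ γ γ.2) g
    have h2 : symbolAt f (γ * g) = symbolAt f g := by
      have e : (γ : SL(2, ℤ)) * g = g * (g⁻¹ * γ * g) := by group
      obtain ⟨m1, -, m3, -⟩ := SL_mul_entries g (g⁻¹ * γ * g)
      have hd := SL_det (g⁻¹ * γ * g)
      rw [← e, hg, mul_zero, add_zero] at m1 m3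
      rw [hg, mul_zero, sub_zero] at hd
      rcases Int.eq_one_or_neg_one_of_mul_eq_one hd with h | h <;> rw [h] at m1 m3
      · exact symbolAt_congr f (by rw [m1, mul_one]) (by rw [m3, mul_one])
      · rcases le_total 0 (g 1 0) with h0 | h0
        · rw [symbolAt_of_nonpos f (by rw [m3]; linarith), symbolAt_of_nonneg f h0, m1, m3]
          simp
        · rw [symbolAt_of_nonneg f (by rw [m3]; linarith), symbolAt_of_nonpos f h0, m1, m3]
          simp
    linarith
  have h := hF.hom_trivial φ (fun γ ⟨τ, hτ⟩ => ?_) hpar ⟨γ, hγ⟩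
  · exact ofAdd_eq_one.1 h
  · by_cases hc : (γ : SL(2, ℤ)) 1 0 = 0
    · exact hpar γ 1 (by simpa using hc)
    · have h12 : γ ^ 12 = 1 := Subtype.ext (SL_pow_twelve (trace_sq_lt_of_smul_eq hτ hc))
      have h := congrArg φ h12
      rw [map_pow, map_one] at h
      have h' : (12 : ℕ) • symbolAt f γ = 0 := h
      have : symbolAt f γ = 0 := by simpa using h'
      exact ofAdd_eq_one.2 this

/-- The function on bottom rows counting signed incidences modulo `N` with a list of edges. -/
def edgeSum (N : ℕ) (L : List (ℤ × ℤ)) (c d : ℤ) : ℤ :=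
  (L.map fun e => (if (N : ℤ) ∣ c * e.2 - d * e.1 then (1 : ℤ) else 0) -
    if (N : ℤ) ∣ c * e.1 + d * e.2 then 1 else 0).sum

theorem edgeSum_congr {N : ℕ} (L : List (ℤ × ℤ)) {u c d c' d' : ℤ} (hu : IsCoprime u N)
    (hc : (N : ℤ) ∣ c' - u * c) (hd : (N : ℤ) ∣ d' - u * d) :
    edgeSum N L c' d' = edgeSum N L c d := by
  unfold edgeSum
  congr 2
  ext e
  obtain ⟨x, hx⟩ := hc
  obtain ⟨y, hy⟩ := hd
  have h1 : (N : ℤ) ∣ c' * e.2 - d' * e.1 ↔ (N : ℤ) ∣ c * e.2 - d * e.1 := by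
    rw [show c' * e.2 - d' * e.1 = u * (c * e.2 - d * e.1) + N * (x * e.2 - y * e.1) by
      linear_combination e.2 * hx - e.1 * hy, dvd_add_left (dvd_mul_right _ _)]
    exact ⟨hu.symm.dvd_of_dvd_mul_left, fun h => h.mul_left _⟩
  have h2 : (N : ℤ) ∣ c' * e.1 + d' * e.2 ↔ (N : ℤ) ∣ c * e.1 + d * e.2 := by
    rw [show c' * e.1 + d' * e.2 = u * (c * e.1 + d * e.2) + N * (x * e.1 + y * e.2) by
      linear_combination e.1 * hx + e.2 * hy, dvd_add_left (dvd_mul_right _ _)]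
    exact ⟨hu.symm.dvd_of_dvd_mul_left, fun h => h.mul_left _⟩
  simp only [h1, h2]

/-- The edges at which the three-term relation for `edgeSum` has to be tested. -/
def incidentEdges (e : ℤ × ℤ) : List (ℤ × ℤ) :=
  [e, (-e.2, e.1), (e.1 - e.2, e.2), (-e.2 - e.1, e.1), (e.1, e.2 - e.1), (-e.2, e.1 + e.2)]

theorem exists_unit_smul {N : ℕ} {a b c d : ℤ} (hab : IsCoprime a b)
    (hcd : IsCoprime c d) (h : (N : ℤ) ∣ c * b - d * a) :
    ∃ u, IsCoprime u (N : ℤ) ∧ (N : ℤ) ∣ c - u * a ∧ (N : ℤ) ∣ d - u * b := by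
  obtain ⟨x, y, hxy⟩ := hab
  obtain ⟨z, w, hzw⟩ := hcd
  obtain ⟨k, hk⟩ := h
  refine ⟨x * c + y * d, ⟨z * a + w * b, k * (y * z - x * w), ?_⟩, ⟨y * k, ?_⟩, ⟨-x * k, ?_⟩⟩
  · linear_combination hxy + (x * a + y * b) * hzw - (y * z - x * w) * hk
  · linear_combination y * hk - c * hxy
  · linear_combination -x * hk - d * hxy

theorem isManinSymbol_edgeSum {N : ℕ} {L : List (ℤ × ℤ)}
    (h : ∀ e ∈ L.flatMap incidentEdges, e.1.gcd e.2 = 1 ∧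
      edgeSum N L e.1 e.2 = edgeSum N L (e.1 + e.2) e.2 + edgeSum N L e.1 (e.1 + e.2)) :
    IsManinSymbol (edgeSum N L) where
  swap c d := by
    unfold edgeSum
    rw [List.sum_neg, List.map_map]
    refine congrArg List.sum (List.map_congr_left fun e _ => ?_)
    have h1 : (N : ℤ) ∣ d * e.2 - -c * e.1 ↔ (N : ℤ) ∣ c * e.1 + d * e.2 := by ring_nf
    have h2 : (N : ℤ) ∣ d * e.1 + -c * e.2 ↔ (N : ℤ) ∣ c * e.2 - d * e.1 := by
      rw [← dvd_neg]; ring_nf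
    rw [Function.comp_apply, neg_sub]
    simp only [h1, h2]
  add c d hcd := by
    by_cases hx : ∃ e ∈ L.flatMap incidentEdges, (N : ℤ) ∣ c * e.2 - d * e.1
    · obtain ⟨e, he, hdvd⟩ := hx
      obtain ⟨u, hu, hc, hd⟩ :=
        exists_unit_smul (Int.isCoprime_iff_gcd_eq_one.2 (h e he).1) hcd hdvd
      have hcd' : (N : ℤ) ∣ (c + d) - u * (e.1 + e.2) := by
        have := dvd_add hc hd
        ring_nf at this ⊢
        exact this
      rw [edgeSum_congr L hu hc hd, edgeSum_congr L hu hcd' hd, edgeSum_congr L hu hc hcd',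
        (h e he).2]
    · have hx' : ∀ e ∈ L, ∀ y ∈ incidentEdges e, ¬ (N : ℤ) ∣ c * y.2 - d * y.1 :=
        fun e he y hy hdvd => hx ⟨y, List.mem_flatMap.2 ⟨e, he, hy⟩, hdvd⟩
      have zero : ∀ c' d' : ℤ, (∀ e ∈ L, ¬ (N : ℤ) ∣ c' * e.2 - d' * e.1 ∧
          ¬ (N : ℤ) ∣ c' * e.1 + d' * e.2) → edgeSum N L c' d' = 0 := by
        intro c' d' h0
        unfold edgeSum
        rw [List.map_congr_left (g := fun _ => (0 : ℤ)) fun e he => by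
          rw [if_neg (h0 e he).1, if_neg (h0 e he).2, sub_zero]]
        simp
      simp only [incidentEdges, List.forall_mem_cons, List.not_mem_nil, false_implies,
        implies_true, and_true] at hx'
      rw [zero c d, zero (c + d) d, zero c (c + d), add_zero]
      all_goals
        intro e he
        obtain ⟨h1, h2, h3, h4, h5, h6⟩ := hx' e he
        ring_nf at h1 h2 h3 h4 h5 h6 ⊢
        tauto

theorem IsHauptmodul.cuspSymbol_eq_zero {N : ℕ} (hN : N ≠ 0) {L : List (ℤ × ℤ)} {F : ℍ → ℂ}
    (hF : IsHauptmodul (Gamma0 N) F)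
    (h : ∀ e ∈ L.flatMap incidentEdges, e.1.gcd e.2 = 1 ∧
      edgeSum N L e.1 e.2 = edgeSum N L (e.1 + e.2) e.2 + edgeSum N L e.1 (e.1 + e.2))
    {a : ℤ} {c : ℕ} (hc : N ∣ c) (hac : IsCoprime a c) : cuspSymbol (edgeSum N L) a c = 0 := by
  have : NeZero N := ⟨hN⟩
  obtain ⟨d, b, hdb⟩ := hac
  have hmem : mkSL a (-b) c d (by linarith) ∈ Gamma0 N := by
    rw [Gamma0_mem]
    simpa [ZMod.natCast_eq_zero_iff] using hc
  have := hF.symbolAt_eq_zero (isManinSymbol_edgeSum h) (fun γ hγ g => ?_) hmem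
  · rw [symbolAt_of_nonneg _ (by simp)] at this
    simpa using this
  · obtain ⟨-, -, m3, m4⟩ := SL_mul_entries γ g
    have hN : (N : ℤ) ∣ γ 1 0 := (ZMod.intCast_zmod_eq_zero_iff_dvd _ _).1 (Gamma0_mem.1 hγ)
    obtain ⟨k, hk⟩ := hN
    refine edgeSum_congr L (u := γ 1 1) ⟨γ 0 0, -γ 0 1 * k, ?_⟩ ⟨k * g 0 0, ?_⟩ ⟨k * g 0 1, ?_⟩
    · have := SL_det γ
      rw [hk] at this
      linear_combination this
    · rw [m3, hk]; ring
    · rw [m4, hk]; ring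

end ModularSymbols

section ExceptionalLevels
open UpperHalfPlane MatrixGroups CongruenceSubgroup

theorem not_isHauptmodul_36 (F : ℍ → ℂ) : ¬ IsHauptmodul (Gamma0 36) F := by
  intro hF
  have h := hF.cuspSymbol_eq_zero (by norm_num) (a := 5) (c := 72)
    (L := [(3, 2), (5, 2), (7, 2), (9, 2), (9, 11), (20, 11), (20, 31), (15, 31)])
    (by decide +kernel) (by norm_num) (by norm_num)
  rw [cuspSymbol_of_lt _ (r := 2) (s := 29) (by norm_num) (by norm_num),
    cuspSymbol_of_lt _ (r := 1) (s := 15) (by norm_num) (by norm_num),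
    cuspSymbol_of_lt _ (r := 0) (s := 1) (by norm_num) (by norm_num),
    cuspSymbol_of_lt _ (r := -1) (s := 0) (by norm_num) (by norm_num), cuspSymbol_zero] at h
  revert h
  decide +kernel

theorem not_isHauptmodul_49 (F : ℍ → ℂ) : ¬ IsHauptmodul (Gamma0 49) F := by
  intro hF
  have h := hF.cuspSymbol_eq_zero (by norm_num) (a := 5) (c := 49)
    (L := [(1, 11), (12, 11), (23, 11), (23, 34)])
    (by decide +kernel) (by norm_num) (by norm_num)
  rw [cuspSymbol_of_lt _ (r := 1) (s := 10) (by norm_num) (by norm_num),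
    cuspSymbol_of_lt _ (r := 0) (s := 1) (by norm_num) (by norm_num),
    cuspSymbol_of_lt _ (r := -1) (s := 0) (by norm_num) (by norm_num), cuspSymbol_zero] at h
  revert h
  decide +kernel

theorem not_isHauptmodul_50 (F : ℍ → ℂ) : ¬ IsHauptmodul (Gamma0 50) F := by
  intro hF
  have h := hF.cuspSymbol_eq_zero (by norm_num) (a := 17) (c := 50)
    (L := [(1, 18), (19, 18), (37, 18), (5, 18), (23, 18), (23, 41)])
    (by decide +kernel) (by norm_num) (by norm_num)
  rw [cuspSymbol_of_lt _ (r := 1) (s := 3) (by norm_num) (by norm_num),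
    cuspSymbol_of_lt _ (r := 0) (s := 1) (by norm_num) (by norm_num),
    cuspSymbol_of_lt _ (r := -1) (s := 0) (by norm_num) (by norm_num), cuspSymbol_zero] at h
  revert h
  decide +kernel

theorem not_isHauptmodul_169 (F : ℍ → ℂ) : ¬ IsHauptmodul (Gamma0 169) F := by
  intro hF
  have h := hF.cuspSymbol_eq_zero (by norm_num) (a := 123) (c := 338)
    (L := [(1, 31), (32, 31), (63, 31)])
    (by decide +kernel) (by norm_num) (by norm_num)
  rw [cuspSymbol_of_lt _ (r := 4) (s := 11) (by norm_num) (by norm_num),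
    cuspSymbol_of_lt _ (r := 1) (s := 3) (by norm_num) (by norm_num),
    cuspSymbol_of_lt _ (r := 0) (s := 1) (by norm_num) (by norm_num),
    cuspSymbol_of_lt _ (r := -1) (s := 0) (by norm_num) (by norm_num), cuspSymbol_zero] at h
  revert h
  decide +kernel

theorem IsHauptmodul.level_mem_of_one_lt {N : ℕ} (hN : 1 < N) {f : ℍ → ℂ}
    (hf : IsHauptmodul (Gamma0 N) f) :
    N ∈ ({2, 3, 4, 5, 6, 7, 8, 9, 10, 12, 13, 16, 18, 25} : Set ℕ) := by
  have h := hf.level_mem hN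
  have h36 : N ≠ 36 := by rintro rfl; exact not_isHauptmodul_36 f hf
  have h49 : N ≠ 49 := by rintro rfl; exact not_isHauptmodul_49 f hf
  have h50 : N ≠ 50 := by rintro rfl; exact not_isHauptmodul_50 f hf
  have h169 : N ≠ 169 := by rintro rfl; exact not_isHauptmodul_169 f hf
  simp only [List.mem_cons, List.not_mem_nil, or_false] at h
  simp only [Set.mem_insert_iff, Set.mem_singleton_iff]
  tauto

end ExceptionalLevels

section DegreeOne
open UpperHalfPlane MatrixGroups CongruenceSubgroup
open scoped Manifold

theorem compl_subset_of_isOpen_of_closure_subset {U D : Set ℂ} (hU : IsOpen U)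
    (hne : U.Nonempty) (hD : D.Countable) (hcl : closure U ⊆ U ∪ D) : Dᶜ ⊆ U := by
  have hpre : IsPreconnected Dᶜ := (hD.isConnected_compl_of_one_lt_rank
    (by rw [Complex.rank_real_complex]; exact Nat.one_lt_ofNat)).isPreconnected
  have hdense : Dense Dᶜ := hD.dense_compl ℝ
  by_contra hnot
  obtain ⟨c, hcD, hcU⟩ := Set.not_subset.1 hnot
  obtain ⟨z, hz, hzD⟩ := hdense.inter_open_nonempty U hU hne
  obtain ⟨w, -, hwU, hw⟩ := hpre U (closure U)ᶜ hU isClosed_closure.isOpen_compl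
    (fun x hx => by
      by_cases h : x ∈ closure U
      · exact Or.inl ((hcl h).resolve_right hx)
      · exact Or.inr h)
    ⟨z, hzD, hz⟩ ⟨c, hcD, fun h => (hcl h).elim hcU hcD⟩
  exact hw (subset_closure hwU)

variable {Γ : Subgroup SL(2, ℤ)} {t : ℍ → ℂ}

theorem exists_nhds_isCompact_of_cusp_limits [Γ.FiniteIndex]
    (hinv : ∀ γ ∈ Γ, ∀ τ : ℍ, t (γ • τ) = t τ) {R : Set SL(2, ℤ)} (hR : R.Finite)
    (hRg : ∀ g, ∃ γ ∈ Γ, ∃ r ∈ R, g = γ * r) {c : ℂ}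
    (hc : ∀ r ∈ R, ∃ V ∈ 𝓝 c, ∀ᶠ τ in atImInfty, t (r • τ) ∉ V) :
    ∃ V ∈ 𝓝 c, ∃ K : Set ℍ, IsCompact K ∧ ∀ τ, t τ ∈ V → ∃ γ ∈ Γ, γ • τ ∈ K := by
  choose! V hV hVt using hc
  have hall := (Filter.eventually_all_finite hR).2 hVt
  rw [Filter.eventually_iff, atImInfty_mem] at hall
  obtain ⟨Y, hY⟩ := hall
  obtain ⟨K, hK, hKc⟩ := exists_isCompact_cover Γ Y
  refine ⟨⋂ r ∈ R, V r, (Filter.biInter_mem hR).2 hV, K, hK, fun τ hτ => ?_⟩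
  refine (hKc τ).resolve_right ?_
  rintro ⟨g, hg⟩
  obtain ⟨γ, hγ, r, hr, hgr⟩ := hRg g⁻¹
  have h1 : τ = γ • r • g • τ := by
    rw [← mul_smul, ← mul_smul, ← hgr, inv_mul_cancel, one_smul]
  have h2 : t (r • g • τ) = t τ := by rw [← hinv γ hγ, ← h1]
  exact hY (g • τ) hg.le r hr (h2 ▸ Set.mem_iInter₂.1 hτ r hr)

theorem exists_lt_im_of_lt_norm [Γ.FiniteIndex] (ht : Continuous t)
    (hinv : ∀ γ ∈ Γ, ∀ τ : ℍ, t (γ • τ) = t τ)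
    (hcusp : ∀ g ∉ Γ, ∃ L, Filter.Tendsto (fun τ : ℍ => t (g • τ)) atImInfty (𝓝 L)) (Y : ℝ) :
    ∃ M : ℝ, ∀ τ, M < ‖t τ‖ → ∃ γ ∈ Γ, Y < (γ • τ).im := by
  obtain ⟨R, hR, hRg⟩ := exists_finite_right_transversal Γ
  have hb : ∀ r ∈ R, ∃ B : ℝ, ∀ᶠ τ in atImInfty, r ∉ Γ → ‖t (r • τ)‖ ≤ B := by
    intro r _
    by_cases hr : r ∈ Γ
    · exact ⟨0, by simp [hr]⟩
    · obtain ⟨L, hL⟩ := hcusp r hr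
      exact ⟨‖L‖ + 1, (hL.norm.eventually_le_const (lt_add_one _)).mono fun _ h _ => h⟩
  choose! B hB using hb
  have hall := (Filter.eventually_all_finite hR).2 hB
  rw [Filter.eventually_iff, atImInfty_mem] at hall
  obtain ⟨Y', hY'⟩ := hall
  obtain ⟨K, hK, hKc⟩ := exists_isCompact_cover Γ (max Y Y')
  obtain ⟨M, hM⟩ := hK.exists_bound_of_continuousOn ht.continuousOn
  obtain ⟨M', hM'⟩ := (hR.image B).bddAbove
  refine ⟨max M M', fun τ hτ => ?_⟩
  rcases hKc τ with ⟨γ, hγ, h⟩ | ⟨g, hg⟩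
  · have := hM _ h
    rw [hinv γ hγ] at this
    exact absurd hτ (not_lt.2 (this.trans (le_max_left _ _)))
  · obtain ⟨γ, hγ, r, hr, hgr⟩ := hRg g⁻¹
    have h1 : τ = γ • r • g • τ := by
      rw [← mul_smul, ← mul_smul, ← hgr, inv_mul_cancel, one_smul]
    have h2 : t (r • g • τ) = t τ := by rw [← hinv γ hγ, ← h1]
    by_cases hrΓ : r ∈ Γ
    · refine ⟨g, ?_, (le_max_left _ _).trans_lt hg⟩
      rw [← inv_mem_iff, hgr]
      exact mul_mem hγ hrΓ
    · have := hY' (g • τ) ((le_max_right _ _).trans hg.le) r hr hrΓ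
      rw [h2] at this
      exact absurd hτ (not_lt.2 ((this.trans (hM' ⟨r, hr, rfl⟩)).trans (le_max_right _ _)))

/-- The critical points of a nonconstant holomorphic function are countable, and it is
injective near all other points. -/
theorem exists_countable_forall_injOn_nhds (ht : MDifferentiable 𝓘(ℂ) 𝓘(ℂ) t)
    (hne : ∃ z w, t z ≠ t w) :
    ∃ D : Set ℍ, D.Countable ∧ ∀ τ ∉ D, ∃ V ∈ 𝓝 τ, Set.InjOn t V := by
  set F := t ∘ ofComplex with hF
  have hd := UpperHalfPlane.mdifferentiable_iff.1 ht
  have hU : IsOpen {z : ℂ | 0 < z.im} := isOpen_lt continuous_const Complex.continuous_im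
  have hpre : IsPreconnected {z : ℂ | 0 < z.im} := (convex_halfSpace_im_gt 0).isPreconnected
  have hA := hd.analyticOnNhd hU
  have hA' := hA.deriv
  have hcount : ({z : ℂ | 0 < z.im} ∩ {z | deriv F z = 0}).Countable := by
    by_cases h0 : Set.EqOn (deriv F) 0 {z : ℂ | 0 < z.im}
    · obtain ⟨z, w, hzw⟩ := hne
      have := hU.is_const_of_deriv_eq_zero hpre hd h0 z.im_pos w.im_pos
      simp only [Function.comp_apply, ofComplex_apply] at this
      exact absurd this hzw
    · have hcod : {z | deriv F z = 0}ᶜ ∈ Filter.codiscreteWithin {z : ℂ | 0 < z.im} :=  by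
        exact (hA'.eqOn_zero_or_eventually_ne_zero_of_preconnected hpre).resolve_left h0
      have := (HereditarilyLindelofSpace.isLindelof _).countable_of_isDiscrete
        (isDiscrete_of_codiscreteWithin hcod)
      rwa [Set.inter_comm] at this
  refine ⟨UpperHalfPlane.coe ⁻¹' ({z : ℂ | 0 < z.im} ∩ {z | deriv F z = 0}),
    hcount.preimage UpperHalfPlane.coe_injective, fun τ hτ => ?_⟩
  have hτ' : deriv F τ ≠ 0 := fun h => hτ ⟨τ.im_pos, h⟩
  have hs : HasStrictDerivAt F (deriv F τ) τ := (hA τ τ.im_pos).hasStrictDerivAt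
  obtain ⟨V, hV, hinj⟩ : ∃ V ∈ 𝓝 (τ : ℂ), Set.InjOn F V := by
    refine ⟨_, hs.eventually_left_inverse hτ', fun z hz w hw h => ?_⟩
    rw [Set.mem_ofPred_eq] at hz hw
    rw [← hz, h, hw]
  refine ⟨UpperHalfPlane.coe ⁻¹' V, continuous_coe.continuousAt hV, fun z hz w hw h => ?_⟩
  exact UpperHalfPlane.coe_injective (hinj hz hw (by simpa [hF, ofComplex_apply] using h))

theorem isHauptmodul_of_injective_at_infinity [Γ.FiniteIndex] (ht : MDifferentiable 𝓘(ℂ) 𝓘(ℂ) t)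
    (hinv : ∀ γ ∈ Γ, ∀ τ : ℍ, t (γ • τ) = t τ)
    (hcusp : ∀ g ∉ Γ, ∃ L, Filter.Tendsto (fun τ : ℍ => t (g • τ)) atImInfty (𝓝 L))
    (hinf : Filter.Tendsto t atImInfty (Bornology.cobounded ℂ)) {Y : ℝ}
    (hinj : ∀ τ τ' : ℍ, Y < τ.im → Y < τ'.im → t τ = t τ' → ∃ γ ∈ Γ, γ • τ = τ') :
    IsHauptmodul Γ t := by
  have hne : ∃ z w, t z ≠ t w := by
    have := (_root_.tendsto_norm_cobounded_atTop.comp hinf).eventually_gt_atTop ‖t I‖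
    obtain ⟨w, hw⟩ := this.exists
    exact ⟨I, w, fun h => hw.ne (by rw [Function.comp_apply, h])⟩
  have hcont : Continuous t := ht.continuous
  have hopen := isOpenMap_of_mdifferentiable ht hne
  obtain ⟨R, hR, hRg⟩ := exists_finite_right_transversal Γ
  choose! L hL using hcusp
  have hproper : ∀ c ∉ L '' R, ∃ V ∈ 𝓝 c, ∃ K : Set ℍ, IsCompact K ∧
      ∀ τ, t τ ∈ V → ∃ γ ∈ Γ, γ • τ ∈ K := by
    intro c hc
    refine exists_nhds_isCompact_of_cusp_limits hinv hR hRg fun r hr => ?_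
    by_cases hrΓ : r ∈ Γ
    · refine ⟨Metric.ball c 1, Metric.ball_mem_nhds c one_pos, ?_⟩
      have := hinf (Metric.isBounded_ball (x := c) (r := 1))
      filter_upwards [this] with τ hτ h
      exact hτ (hinv r hrΓ τ ▸ h)
    · have hLc : L r ≠ c := fun h => hc ⟨r, hr, h⟩
      obtain ⟨A, B, hA, hB, hLA, hcB, hAB⟩ := t2_separation hLc
      refine ⟨B, hB.mem_nhds hcB, ?_⟩
      filter_upwards [(hL r hrΓ).eventually (hA.mem_nhds hLA)] with τ hτ h
      exact Set.disjoint_left.1 hAB hτ h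
  refine ⟨ht, hinv, ?_, ?_⟩
  · obtain ⟨M, hM⟩ := exists_lt_im_of_lt_norm hcont hinv (fun g hg => ⟨L g, hL g hg⟩) Y
    obtain ⟨D, hD, hDinj⟩ := exists_countable_forall_injOn_nhds ht hne
    set U : Set ℂ := {c | ∃ τ₁ τ₂, t τ₁ = c ∧ t τ₂ = c ∧ ∀ γ ∈ Γ, γ • τ₁ ≠ τ₂} with hUdef
    have hUopen : IsOpen U := by
      rw [isOpen_iff_mem_nhds]
      rintro c ⟨τ₁, τ₂, h1, h2, h12⟩
      obtain ⟨V₁, V₂, hV₁, hV₂, hτ₁, hτ₂, hV⟩ := exists_nhds_smul_disjoint_pair τ₁ τ₂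
      have m1 : t '' V₁ ∈ 𝓝 c := (hopen _ hV₁).mem_nhds ⟨τ₁, hτ₁, h1⟩
      have m2 : t '' V₂ ∈ 𝓝 c := (hopen _ hV₂).mem_nhds ⟨τ₂, hτ₂, h2⟩
      filter_upwards [m1, m2]
      rintro x ⟨z, hz, rfl⟩ ⟨w, hw, hzw⟩
      exact ⟨z, w, rfl, hzw, fun γ hγ h => h12 γ hγ (hV γ z hz (h ▸ hw))⟩
    have hUcl : closure U ⊆ U ∪ (L '' R ∪ t '' D) := by
      intro c hc
      by_contra hcn
      simp only [Set.mem_union, not_or] at hcn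
      obtain ⟨hcU, hcL, hcD⟩ := hcn
      obtain ⟨V, hV, K, hK, hVK⟩ := hproper c hcL
      have hcU' : c ∈ closure (U ∩ V) := by
        rw [mem_closure_iff_nhds] at hc ⊢
        intro W hW
        obtain ⟨x, hx, hxU⟩ := hc _ (Filter.inter_mem hW hV)
        exact ⟨x, hx.1, hxU, hx.2⟩
      obtain ⟨x, hx, hxc⟩ := mem_closure_iff_seq_limit.1 hcU'
      have hpts : ∀ n, ∃ p : ℍ × ℍ, p ∈ K ×ˢ K ∧ t p.1 = x n ∧ t p.2 = x n ∧
          ∀ γ ∈ Γ, γ • p.1 ≠ p.2 := by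
        intro n
        obtain ⟨⟨τ₁, τ₂, h1, h2, h12⟩, hxV⟩ := hx n
        obtain ⟨γ₁, hγ₁, hK₁⟩ := hVK τ₁ (h1 ▸ hxV)
        obtain ⟨γ₂, hγ₂, hK₂⟩ := hVK τ₂ (h2 ▸ hxV)
        refine ⟨(γ₁ • τ₁, γ₂ • τ₂), ⟨hK₁, hK₂⟩, by rw [hinv γ₁ hγ₁, h1], by rw [hinv γ₂ hγ₂, h2],
          fun γ hγ h => h12 (γ₂⁻¹ * γ * γ₁) (mul_mem (mul_mem (inv_mem hγ₂) hγ) hγ₁) ?_⟩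
        rw [mul_smul, mul_smul, h, inv_smul_smul]
      choose p hpK hp1 hp2 hp using hpts
      obtain ⟨⟨τ₁, τ₂⟩, -, φ, hφ, hlim⟩ := (hK.prod hK).tendsto_subseq hpK
      have l1 : Filter.Tendsto (fun n => (p (φ n)).1) Filter.atTop (𝓝 τ₁) :=
        (continuous_fst.tendsto _).comp hlim
      have l2 : Filter.Tendsto (fun n => (p (φ n)).2) Filter.atTop (𝓝 τ₂) :=
        (continuous_snd.tendsto _).comp hlim
      have hxφ := hxc.comp hφ.tendsto_atTop
      have e1 : t τ₁ = c := tendsto_nhds_unique ((hcont.tendsto _).comp l1)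
        (hxφ.congr fun n => (hp1 (φ n)).symm)
      have e2 : t τ₂ = c := tendsto_nhds_unique ((hcont.tendsto _).comp l2)
        (hxφ.congr fun n => (hp2 (φ n)).symm)
      by_cases hγ : ∃ γ ∈ Γ, γ • τ₁ = τ₂
      · obtain ⟨γ, hγ, hγτ⟩ := hγ
        obtain ⟨W, hW, hWinj⟩ := hDinj τ₂ fun h => hcD ⟨τ₂, h, e2⟩
        have l3 : Filter.Tendsto (fun n => γ • (p (φ n)).1) Filter.atTop (𝓝 τ₂) :=
          hγτ ▸ ((continuous_SL_smul γ).tendsto _).comp l1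
        obtain ⟨n, hn1, hn2⟩ := ((l3.eventually hW).and (l2.eventually hW)).exists
        exact hp (φ n) γ hγ (hWinj hn1 hn2 (by rw [hinv γ hγ, hp1, hp2]))
      · push Not at hγ
        exact hcU ⟨τ₁, τ₂, e1, e2, hγ⟩
    intro τ₁ τ₂ h
    by_contra hnot
    push Not at hnot
    have hsub := compl_subset_of_isOpen_of_closure_subset hUopen ⟨t τ₂, τ₁, τ₂, h, rfl, hnot⟩
      ((hR.image L).countable.union (hD.image t)) hUcl
    have hdense : Dense (L '' R ∪ t '' D)ᶜ :=
      ((hR.image L).countable.union (hD.image t)).dense_compl ℝ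
    obtain ⟨c, hcM, hc⟩ := hdense.inter_open_nonempty {c : ℂ | M < ‖c‖}
      (isOpen_lt continuous_const continuous_norm) ⟨(|M| + 1 : ℝ), by
        rw [Set.mem_ofPred_eq, Complex.norm_real, Real.norm_eq_abs, abs_of_pos (by positivity)]
        linarith [le_abs_self M]⟩
    obtain ⟨z, w, hz, hw, hzw⟩ := hsub hc
    rw [Set.mem_ofPred_eq] at hcM
    obtain ⟨γ₁, hγ₁, h1⟩ := hM z (by rwa [hz])
    obtain ⟨γ₂, hγ₂, h2⟩ := hM w (by rwa [hw])
    obtain ⟨γ, hγ, hγz⟩ := hinj _ _ h1 h2 (by rw [hinv γ₁ hγ₁, hinv γ₂ hγ₂, hz, hw])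
    refine hzw (γ₂⁻¹ * γ * γ₁) (mul_mem (mul_mem (inv_mem hγ₂) hγ) hγ₁) ?_
    rw [mul_smul, mul_smul, hγz, inv_smul_smul]
  · refine (hR.image L).subset ?_
    rw [Set.compl_subset_comm]
    refine compl_subset_of_isOpen_of_closure_subset hopen.isOpen_range ⟨_, I, rfl⟩
      (hR.image L).countable fun c hc => ?_
    by_contra hcn
    simp only [Set.mem_union, not_or] at hcn
    obtain ⟨hcU, hcL⟩ := hcn
    obtain ⟨V, hV, K, hK, hVK⟩ := hproper c hcL
    refine hcU ?_
    have hKc : IsClosed (t '' K) := (hK.image hcont).isClosed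
    have : c ∈ closure (t '' K) := by
      rw [mem_closure_iff_nhds] at hc ⊢
      intro W hW
      obtain ⟨_, hx, τ, rfl⟩ := hc _ (Filter.inter_mem hW hV)
      obtain ⟨γ, hγ, hγK⟩ := hVK τ hx.2
      exact ⟨t τ, hx.1, γ • τ, hγK, hinv γ hγ τ⟩
    rw [hKc.closure_eq] at this
    exact Set.image_subset_range _ _ this

end DegreeOne

section EtaTransformation
open UpperHalfPlane MatrixGroups CongruenceSubgroup
open scoped Manifold

/-- The polynomial giving the exponent of the multiplier system of `η ^ 2`. -/
def etaPoly {A : Type*} [CommRing A] (a b c d : A) : A :=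
  (1 - c ^ 2) * (b * d + 3 * (c - 1) * d + c + 3) + c * (a + d - 3)

/-- The exponent `n` such that `η ^ 2` has multiplier `exp (2 π i n / 12)` at `γ`. -/
def etaExp (γ : SL(2, ℤ)) : ℤ := etaPoly (γ 0 0) (γ 0 1) (γ 1 0) (γ 1 1)

/-- The twelfth root of unity `exp (2 π i n / 12)`. -/
def zeta12 (n : ℤ) : ℂ := Complex.exp (2 * Real.pi * Complex.I / 12) ^ n

theorem zeta12_ne_zero (n : ℤ) : zeta12 n ≠ 0 := zpow_ne_zero _ (Complex.exp_ne_zero _)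

theorem zeta12_add (m n : ℤ) : zeta12 (m + n) = zeta12 m * zeta12 n :=
  zpow_add₀ (Complex.exp_ne_zero _) m n

theorem zeta12_zsmul (m n : ℤ) : zeta12 (m * n) = zeta12 n ^ m := by
  rw [zeta12, zeta12, mul_comm m n, zpow_mul]

theorem prod_zpow_eq_zpow_sum {ι K : Type*} [Field K] {a : K} (ha : a ≠ 0) (s : Finset ι)
    (f : ι → ℤ) : ∏ i ∈ s, a ^ f i = a ^ ∑ i ∈ s, f i := by
  classical
  induction s using Finset.induction_on with
  | empty => simp
  | insert i s hi ih => rw [Finset.sum_insert hi, Finset.prod_insert hi, zpow_add₀ ha, ih]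

theorem zeta12_sum {ι : Type*} (s : Finset ι) (f : ι → ℤ) :
    zeta12 (∑ i ∈ s, f i) = ∏ i ∈ s, zeta12 (f i) :=
  (prod_zpow_eq_zpow_sum (Complex.exp_ne_zero _) s f).symm

theorem zeta12_eq_one {n : ℤ} (h : 12 ∣ n) : zeta12 n = 1 := by
  obtain ⟨k, rfl⟩ := h
  rw [zeta12, zpow_mul, ← Complex.exp_int_mul]
  rw [show ((12 : ℤ) : ℂ) * (2 * Real.pi * Complex.I / 12) = 2 * Real.pi * Complex.I by
    push_cast; ring, Complex.exp_two_pi_mul_I, one_zpow]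

theorem zeta12_congr {m n : ℤ} (h : 12 ∣ m - n) : zeta12 m = zeta12 n := by
  rw [show m = (m - n) + n by ring, zeta12_add, zeta12_eq_one h, one_mul]

theorem norm_zeta12 (n : ℤ) : ‖zeta12 n‖ = 1 := by
  rw [zeta12, norm_zpow, show 2 * (Real.pi : ℂ) * Complex.I / 12 =
    ((2 * Real.pi / 12 : ℝ) : ℂ) * Complex.I by push_cast; ring, Complex.norm_exp_ofReal_mul_I,
    one_zpow]

theorem twelve_dvd_of_zmod {n : ℤ} (h4 : (n : ZMod 4) = 0) (h3 : (n : ZMod 3) = 0) : 12 ∣ n := by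
  rw [ZMod.intCast_zmod_eq_zero_iff_dvd] at h4 h3
  omega

theorem etaPoly_intCast {A : Type*} [CommRing A] (a b c d : ℤ) :
    ((etaPoly a b c d : ℤ) : A) = etaPoly (a : A) (b : A) (c : A) (d : A) := by
  simp [etaPoly]

theorem etaExp_mul_T (γ : SL(2, ℤ)) : 12 ∣ etaExp (γ * ModularGroup.T) - (etaExp γ + 1) := by
  obtain ⟨h00, h01, h10, h11⟩ := SL_mul_entries γ ModularGroup.T
  have e4 : ∀ a b c d : ZMod 4, a * d - b * c = 1 →
      etaPoly a (a + b) c (c + d) - (etaPoly a b c d + 1) = 0 := by decide +kernel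
  have e3 : ∀ a b c d : ZMod 3, a * d - b * c = 1 →
      etaPoly a (a + b) c (c + d) - (etaPoly a b c d + 1) = 0 := by decide +kernel
  have hdet := SL_det γ
  simp only [show ModularGroup.T 0 0 = 1 from rfl, show ModularGroup.T 0 1 = 1 from rfl,
    show ModularGroup.T 1 0 = 0 from rfl, show ModularGroup.T 1 1 = 1 from rfl, mul_one, mul_zero,
    add_zero] at h00 h01 h10 h11
  rw [etaExp, etaExp, h00, h01, h10, h11]
  refine twelve_dvd_of_zmod ?_ ?_
  · push_cast [etaPoly_intCast]
    exact e4 _ _ _ _ (by exact_mod_cast congrArg (Int.cast : ℤ → ZMod 4) hdet)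
  · push_cast [etaPoly_intCast]
    exact e3 _ _ _ _ (by exact_mod_cast congrArg (Int.cast : ℤ → ZMod 3) hdet)

theorem etaExp_mul_S (γ : SL(2, ℤ)) : 12 ∣ etaExp (γ * ModularGroup.S) - (etaExp γ - 3) := by
  obtain ⟨h00, h01, h10, h11⟩ := S_entries γ
  have e4 : ∀ a b c d : ZMod 4, a * d - b * c = 1 →
      etaPoly b (-a) d (-c) - (etaPoly a b c d - 3) = 0 := by decide +kernel
  have e3 : ∀ a b c d : ZMod 3, a * d - b * c = 1 →
      etaPoly b (-a) d (-c) - (etaPoly a b c d - 3) = 0 := by decide +kernel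
  have hdet := SL_det γ
  rw [etaExp, etaExp, h00, h01, h10, h11]
  refine twelve_dvd_of_zmod ?_ ?_
  · push_cast [etaPoly_intCast]
    exact e4 _ _ _ _ (by exact_mod_cast congrArg (Int.cast : ℤ → ZMod 4) hdet)
  · push_cast [etaPoly_intCast]
    exact e3 _ _ _ _ (by exact_mod_cast congrArg (Int.cast : ℤ → ZMod 3) hdet)

theorem eta_add_one (z : ℂ) :
    ModularForm.eta (z + 1) = Complex.exp (2 * Real.pi * Complex.I / 24) * ModularForm.eta z := by
  have h1 : Function.Periodic.qParam 24 (z + 1) =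
      Complex.exp (2 * Real.pi * Complex.I / 24) * Function.Periodic.qParam 24 z := by
    rw [Function.Periodic.qParam, Function.Periodic.qParam, ← Complex.exp_add]
    congr 1
    push_cast
    ring
  have h2 : Function.Periodic.qParam 1 (z + 1) = Function.Periodic.qParam 1 z := by
    rw [Function.Periodic.qParam, Function.Periodic.qParam]
    rw [show 2 * (Real.pi : ℂ) * Complex.I * (z + 1) / (1 : ℝ) =
      2 * Real.pi * Complex.I * z / (1 : ℝ) + 2 * Real.pi * Complex.I by push_cast; ring,
      Complex.exp_periodic]
  simp only [ModularForm.eta, ModularForm.eta_q, h1, h2, mul_assoc]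

theorem eta_T_smul_sq (τ : ℍ) : ModularForm.eta (ModularGroup.T • τ : ℍ) ^ 2 =
    zeta12 1 * ModularForm.eta τ ^ 2 := by
  have h : ((ModularGroup.T • τ : ℍ) : ℂ) = τ + 1 := by
    rw [modular_T_smul, coe_vadd, add_comm]
    norm_num
  rw [h, eta_add_one, mul_pow, zeta12, zpow_one, ← Complex.exp_nat_mul]
  congr 2
  push_cast
  ring

theorem sqrt_complex_sq {z : ℂ} (hz : z ≠ 0) : Complex.sqrt z ^ 2 = z := by
  rw [Complex.sqrt, Complex.cpow_def_of_ne_zero hz, ← Complex.exp_nat_mul]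
  conv_rhs => rw [← Complex.exp_log hz]
  congr 1
  push_cast
  ring

theorem zeta12_neg_three : zeta12 (-3) = Complex.I⁻¹ := by
  rw [zeta12, zpow_neg, ← Complex.exp_int_mul, inv_inj]
  rw [show ((3 : ℤ) : ℂ) * (2 * Real.pi * Complex.I / 12) = Real.pi / 2 * Complex.I by
    push_cast; ring, Complex.exp_pi_div_two_mul_I]

theorem eta_S_smul_sq (τ : ℍ) : ModularForm.eta (ModularGroup.S • τ : ℍ) ^ 2 =
    zeta12 (-3) * τ * ModularForm.eta τ ^ 2 := by
  have h := ModularForm.eta_comp_eq_csqrt_I_inv τ.im_pos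
  have h' : ((ModularGroup.S • τ : ℍ) : ℂ) = -1 / τ := by
    rw [modular_S_smul, coe_mk, neg_div, one_div, inv_neg]
  simp only [Function.comp_apply, Pi.smul_apply, Pi.mul_apply, smul_eq_mul] at h
  rw [h', h, mul_pow, mul_pow, inv_pow, sqrt_complex_sq Complex.I_ne_zero,
    sqrt_complex_sq τ.ne_zero, zeta12_neg_three, mul_assoc]

theorem denom_mul_smul (γ δ : SL(2, ℤ)) (τ : ℍ) :
    ((γ * δ) 1 0 * τ + (γ * δ) 1 1 : ℂ) =
      (γ 1 0 * (δ • τ : ℍ) + γ 1 1) * (δ 1 0 * τ + δ 1 1) := by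
  obtain ⟨-, -, h10, h11⟩ := SL_mul_entries γ δ
  have hne : (δ 1 0 * τ + δ 1 1 : ℂ) ≠ 0 := by
    simpa [denom] using denom_ne_zero (Matrix.SpecialLinearGroup.mapGL ℝ δ) τ
  rw [coe_SL_smul, h10, h11]
  push_cast
  field_simp
  ring

/-- The transformation law of `η ^ 2`. -/
theorem eta_smul_sq (γ : SL(2, ℤ)) (τ : ℍ) : ModularForm.eta (γ • τ : ℍ) ^ 2 =
    zeta12 (etaExp γ) * (γ 1 0 * τ + γ 1 1) * ModularForm.eta τ ^ 2 := by
  have hmem : γ ∈ Subgroup.closure {ModularGroup.S, ModularGroup.T} := by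
    rw [SpecialLinearGroup.SL2Z_generators]
    trivial
  have hT : ∀ g : SL(2, ℤ), ∀ z : ℍ, (g * ModularGroup.T) 1 0 * (z : ℂ) +
      (g * ModularGroup.T) 1 1 = g 1 0 * (ModularGroup.T • z : ℍ) + g 1 1 := by
    intro g z
    rw [denom_mul_smul, show ModularGroup.T 1 0 = 0 from rfl, show ModularGroup.T 1 1 = 1 from rfl]
    simp
  have hS : ∀ g : SL(2, ℤ), ∀ z : ℍ, (g * ModularGroup.S) 1 0 * (z : ℂ) +
      (g * ModularGroup.S) 1 1 = (g 1 0 * (ModularGroup.S • z : ℍ) + g 1 1) * z := by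
    intro g z
    rw [denom_mul_smul, show ModularGroup.S 1 0 = 1 from rfl, show ModularGroup.S 1 1 = 0 from rfl]
    simp
  induction hmem using Subgroup.closure_induction_right generalizing τ with
  | one =>
    rw [one_smul, zeta12_eq_one (by decide)]
    simp
  | mul_right x _ y hy ih =>
    rcases hy with rfl | rfl
    · rw [mul_smul, ih, eta_S_smul_sq, hS, zeta12_congr (etaExp_mul_S x), sub_eq_add_neg,
        zeta12_add]
      ring
    · rw [mul_smul, ih, eta_T_smul_sq, hT, zeta12_congr (etaExp_mul_T x), zeta12_add]
      ring
  | mul_inv_cancel x _ y hy ih =>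
    obtain ⟨g, rfl⟩ : ∃ g, x = g * y := ⟨x * y⁻¹, by simp⟩
    obtain ⟨w, rfl⟩ : ∃ w, τ = y • w := ⟨y⁻¹ • τ, by simp⟩
    rw [mul_inv_cancel_right]
    have h := ih w
    rw [mul_smul] at h
    rw [h]
    rcases hy with rfl | rfl
    · rw [eta_S_smul_sq, hS, zeta12_congr (etaExp_mul_S g), sub_eq_add_neg, zeta12_add]
      ring
    · rw [eta_T_smul_sq, hT, zeta12_congr (etaExp_mul_T g), zeta12_add]
      ring

theorem norm_eta_smul (γ : SL(2, ℤ)) (τ : ℍ) :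
    ‖ModularForm.eta (γ • τ : ℍ)‖ ^ 4 * (γ • τ).im = ‖ModularForm.eta τ‖ ^ 4 * τ.im := by
  have hne : (γ 1 0 * τ + γ 1 1 : ℂ) ≠ 0 := by
    simpa [denom] using denom_ne_zero (Matrix.SpecialLinearGroup.mapGL ℝ γ) τ
  have h := congrArg (fun z => ‖z‖ ^ 2) (eta_smul_sq γ τ)
  simp only [norm_pow, norm_mul, norm_zeta12, one_mul] at h
  rw [show ‖ModularForm.eta (γ • τ : ℍ)‖ ^ 4 = (‖ModularForm.eta (γ • τ : ℍ)‖ ^ 2) ^ 2 by ring, h,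
    im_SL_smul, Complex.normSq_eq_norm_sq]
  have : ‖(γ 1 0 * τ + γ 1 1 : ℂ)‖ ≠ 0 := norm_ne_zero_iff.2 hne
  field_simp

end EtaTransformation

section EtaQuotient
open UpperHalfPlane MatrixGroups CongruenceSubgroup
open scoped Manifold

/-- The Euler product `∏ (1 - q ^ n)`. -/
def eulerProd (q : ℂ) : ℂ := ∏' n : ℕ, (1 - q ^ (n + 1))

theorem eta_eq_mul_eulerProd (z : ℂ) : ModularForm.eta z =
    Function.Periodic.qParam 24 z * eulerProd (Function.Periodic.qParam 1 z) := rfl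

theorem eulerProd_zero : eulerProd 0 = 1 := by simp [eulerProd]

theorem differentiableAt_eulerProd {q : ℂ} (hq : ‖q‖ < 1) : DifferentiableAt ℂ eulerProd q :=
  ModularForm.differentiableOn_tprod_one_sub_pow.differentiableAt
    (Metric.isOpen_ball.mem_nhds (by simpa using hq))

theorem tendsto_eulerProd_qParam : Filter.Tendsto
    (fun τ : ℍ => eulerProd (Function.Periodic.qParam 1 τ)) atImInfty (𝓝 1) := by
  have h := (differentiableAt_eulerProd (q := 0) (by simp)).continuousAt.tendsto
  rw [eulerProd_zero] at h
  exact h.comp (qParam_tendsto_atImInfty one_pos)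

theorem norm_eta_pow_four (τ : ℍ) : ‖ModularForm.eta τ‖ ^ 4 =
    ‖eulerProd (Function.Periodic.qParam 1 τ)‖ ^ 4 * Real.exp (-(Real.pi / 3) * τ.im) := by
  rw [eta_eq_mul_eulerProd, norm_mul, mul_pow, Function.Periodic.norm_qParam, ← Real.exp_nat_mul,
    mul_comm]
  congr 2
  push_cast [coe_im]
  ring

/-- The decomposition of `diag(δ, 1) * g` as an element of `SL(2, ℤ)` times an upper triangular
matrix. -/
theorem exists_smul_eq_mul_smul (g : SL(2, ℤ)) {δ : ℕ} (hδ : 0 < δ) :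
    ∃ γ : SL(2, ℤ), ∃ A D : ℕ, ∃ B : ℤ, A = Int.gcd (g 1 0) δ ∧ A * D = δ ∧
      ∀ τ w : ℍ, (w : ℂ) = (A * τ + B) / D → ((γ • w : ℍ) : ℂ) = δ * (g • τ : ℍ) := by
  have hdet := SL_det g
  set A := Int.gcd (g 1 0) δ with hA
  have hApos : 0 < A := Int.gcd_pos_of_ne_zero_right _ (by exact_mod_cast hδ.ne')
  obtain ⟨c', hc'⟩ : (A : ℤ) ∣ g 1 0 := Int.gcd_dvd_left ..
  obtain ⟨D, hD⟩ : A ∣ δ := by exact_mod_cast Int.gcd_dvd_right (g 1 0) δ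
  have hDpos : 0 < D := Nat.pos_of_ne_zero (by rintro rfl; simp at hD; omega)
  have hcop0 : IsCoprime c' (D : ℤ) := by
    have h := Int.gcd_eq_gcd_ab (g 1 0) δ
    rw [← hA, hD] at h
    refine ⟨Int.gcdA (g 1 0) δ, Int.gcdB (g 1 0) δ, ?_⟩
    have hA0 : (A : ℤ) ≠ 0 := by exact_mod_cast hApos.ne'
    apply mul_left_cancel₀ hA0
    rw [hc', hD] at *
    push_cast at h ⊢
    linarith
  have hcop1 : IsCoprime c' (g 0 0) := ⟨-g 0 1 * A, g 1 1, by rw [hc'] at hdet; linarith⟩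
  obtain ⟨x, y, hxy⟩ := hcop1.mul_right hcop0
  have hdet' : (D * g 0 0) * y - (-x) * c' = 1 := by linarith
  refine ⟨mkSL (D * g 0 0) (-x) c' y hdet', A, D, y * (δ * g 0 1) + x * g 1 1, rfl, hD.symm,
    fun τ w hw => ?_⟩
  have hne : (g 1 0 * τ + g 1 1 : ℂ) ≠ 0 := by
    simpa [denom] using denom_ne_zero (Matrix.SpecialLinearGroup.mapGL ℝ g) τ
  have hne' : ((c' : ℂ) * w + y) ≠ 0 := by
    simpa [denom] using
      denom_ne_zero (Matrix.SpecialLinearGroup.mapGL ℝ (mkSL (D * g 0 0) (-x) c' y hdet')) w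
  have hDc : (D : ℂ) ≠ 0 := by exact_mod_cast hDpos.ne'
  have hdetc : (g 0 0 * g 1 1 - g 0 1 * (A * c') : ℂ) = 1 := by
    rw [hc'] at hdet
    exact_mod_cast hdet
  have hxyc : (x * c' + y * (g 0 0 * D) : ℂ) = 1 := by exact_mod_cast hxy
  have hδc : (δ : ℂ) = A * D := by exact_mod_cast hD
  have hcc : (g 1 0 : ℂ) = A * c' := by exact_mod_cast hc'
  rw [coe_SL_smul, coe_SL_smul]
  simp only [mkSL_apply_zero_zero, mkSL_apply_zero_one, mkSL_apply_one_zero, mkSL_apply_one_one]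
  rw [← mul_div_assoc, div_eq_div_iff hne' hne]
  have h1 : (c' : ℂ) * w + y = (g 1 0 * τ + g 1 1) / D := by
    rw [hw, hcc, eq_div_iff hDc, add_mul, mul_assoc, div_mul_cancel₀ _ hDc]
    push_cast
    rw [hδc]
    linear_combination (y * D) * hdetc * (-1) + g 1 1 * hxyc
  have h2 : ((D * g 0 0 : ℤ) : ℂ) * w + ((-x : ℤ) : ℂ) = A * (g 0 0 * τ + g 0 1) := by
    rw [hw]
    push_cast
    rw [hδc]
    field_simp
    linear_combination (A * g 0 1) * hxyc + x * hdetc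
  rw [h1, h2, hδc]
  field_simp

theorem exists_norm_eta_asymptotic (g : SL(2, ℤ)) {δ : ℕ} (hδ : 0 < δ) :
    ∃ u : ℍ → ℝ, ∃ k : ℝ, k ≠ 0 ∧ Filter.Tendsto u atImInfty (𝓝 k) ∧ ∀ τ : ℍ,
      ‖ModularForm.eta (δ * (g • τ : ℍ))‖ ^ 4 =
        u τ * Real.exp (-(Real.pi / 3) * τ.im * ((Int.gcd (g 1 0) δ : ℝ) ^ 2 / δ)) *
          (τ.im / (g • τ).im) := by
  obtain ⟨γ, A, D, B, hA, hAD, hγ⟩ := exists_smul_eq_mul_smul g hδ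
  have hApos : 0 < A := Nat.pos_of_ne_zero (by rintro rfl; simp at hAD; omega)
  have hDpos : 0 < D := Nat.pos_of_ne_zero (by rintro rfl; simp at hAD; omega)
  have hA' : (0 : ℝ) < A := by exact_mod_cast hApos
  have hD' : (0 : ℝ) < D := by exact_mod_cast hDpos
  have him : ∀ τ : ℍ, (((A : ℂ) * τ + B) / D).im = A / D * τ.im := by
    intro τ
    rw [Complex.div_natCast_im]
    simp
    ring
  have hw : ∀ τ : ℍ, ∃ w : ℍ, (w : ℂ) = (A * τ + B) / D := fun τ =>
    ⟨⟨(A * τ + B) / D, by rw [him]; have := τ.im_pos; positivity⟩, rfl⟩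
  choose w hw using hw
  have hwim : ∀ τ, (w τ).im = A / D * τ.im := fun τ => by rw [← him, ← hw, coe_im]
  have hlim : Filter.Tendsto w atImInfty atImInfty := by
    rw [atImInfty, Filter.tendsto_comap_iff]
    have : im ∘ w = fun τ : ℍ => A / D * τ.im := funext hwim
    rw [this]
    exact Filter.Tendsto.const_mul_atTop (by positivity) Filter.tendsto_comap
  refine ⟨fun τ => ‖eulerProd (Function.Periodic.qParam 1 (w τ))‖ ^ 4 * (A / (D * δ)),
    A / (D * δ), by positivity, ?_, fun τ => ?_⟩
  · have h := ((tendsto_eulerProd_qParam.comp hlim).norm.pow 4).mul_const ((A : ℝ) / (D * δ))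
    simpa using h
  · have h := norm_eta_smul γ (w τ)
    have hg := hγ τ (w τ) (hw τ)
    have him' : (γ • w τ).im = δ * (g • τ).im := by
      rw [← coe_im, hg, ← coe_im]
      simp
    have hpos := (g • τ).im_pos
    rw [hg, him', hwim, norm_eta_pow_four, hwim] at h
    have hδ' : (0 : ℝ) < δ := by exact_mod_cast hδ
    have hexp : -(Real.pi / 3) * τ.im * ((Int.gcd (g 1 0) δ : ℝ) ^ 2 / δ) =
        -(Real.pi / 3) * (A / D * τ.im) := by
      rw [← hA, ← hAD]
      push_cast
      field_simp
    rw [hexp]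
    rw [← eq_div_iff (by positivity)] at h
    rw [h]
    field_simp

/-- The eta quotient `∏ η(δ τ) ^ r(δ)` over the divisors `δ` of `N`. -/
def etaQuot (N : ℕ) (r : ℕ → ℤ) (τ : ℍ) : ℂ :=
  ∏ δ ∈ N.divisors, ModularForm.eta (δ * τ) ^ r δ

theorem im_natCast_mul_pos {δ : ℕ} (hδ : 0 < δ) {z : ℂ} (hz : 0 < z.im) :
    0 < ((δ : ℂ) * z).im := by
  have : (0 : ℝ) < δ := by exact_mod_cast hδ
  simpa using mul_pos this hz

theorem eta_natCast_mul_ne_zero {δ : ℕ} (hδ : 0 < δ) (τ : ℍ) :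
    ModularForm.eta (δ * τ) ≠ 0 :=
  ModularForm.eta_ne_zero (im_natCast_mul_pos hδ τ.im_pos)

theorem mdifferentiable_etaQuot (N : ℕ) (r : ℕ → ℤ) :
    MDifferentiable 𝓘(ℂ) 𝓘(ℂ) (etaQuot N r) := by
  rw [UpperHalfPlane.mdifferentiable_iff]
  have h : DifferentiableOn ℂ (fun z : ℂ => ∏ δ ∈ N.divisors, ModularForm.eta (δ * z) ^ r δ)
      {z : ℂ | 0 < z.im} := by
    refine DifferentiableOn.fun_finsetProd fun δ hδ z hz => ?_
    have hpos := im_natCast_mul_pos (Nat.pos_of_mem_divisors hδ) hz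
    have h1 : DifferentiableAt ℂ (fun z : ℂ => ModularForm.eta (δ * z)) z :=
      (ModularForm.differentiableAt_eta_of_mem_upperHalfPlaneSet hpos).comp z
        (by fun_prop)
    exact (h1.zpow (Or.inl (ModularForm.eta_ne_zero hpos))).differentiableWithinAt
  refine h.congr fun z hz => ?_
  simp only [Function.comp_apply, etaQuot, ofComplex_apply_of_im_pos hz, coe_mk]

theorem eventually_norm_etaQuot_le {N : ℕ} {r : ℕ → ℤ} (hr : ∑ δ ∈ N.divisors, r δ = 0)
    (g : SL(2, ℤ))
    (hord : 0 ≤ ∑ δ ∈ N.divisors, (r δ : ℝ) * ((Int.gcd (g 1 0) δ : ℝ) ^ 2 / δ)) :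
    ∃ M : ℝ, ∀ᶠ τ in atImInfty, ‖etaQuot N r (g • τ)‖ ≤ M := by
  have h := fun (δ : ℕ) (hδ : δ ∈ N.divisors) =>
    exists_norm_eta_asymptotic g (Nat.pos_of_mem_divisors hδ)
  choose! u k hk hu heq using h
  have hlim : Filter.Tendsto (fun τ => ∏ δ ∈ N.divisors, u δ τ ^ r δ) atImInfty
      (𝓝 (∏ δ ∈ N.divisors, k δ ^ r δ)) :=
    tendsto_finsetProd _ fun δ hδ => (hu δ hδ).zpow₀ _ (Or.inl (hk δ hδ))
  have hform : ∀ τ : ℍ, ‖etaQuot N r (g • τ)‖ ^ 4 = (∏ δ ∈ N.divisors, u δ τ ^ r δ) *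
      Real.exp (-(Real.pi / 3) * τ.im *
        ∑ δ ∈ N.divisors, (r δ : ℝ) * ((Int.gcd (g 1 0) δ : ℝ) ^ 2 / δ)) := by
    intro τ
    have hne : τ.im / (g • τ).im ≠ 0 := (div_pos τ.im_pos (g • τ).im_pos).ne'
    rw [etaQuot, norm_prod, ← Finset.prod_pow, Finset.mul_sum, Real.exp_sum,
      ← Finset.prod_mul_distrib]
    have h1 : ∏ δ ∈ N.divisors, (τ.im / (g • τ).im) ^ r δ = 1 := by
      rw [prod_zpow_eq_zpow_sum hne, hr, zpow_zero]
    rw [← mul_one (∏ δ ∈ N.divisors, _ * _), ← h1, ← Finset.prod_mul_distrib]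
    refine Finset.prod_congr rfl fun δ hδ => ?_
    rw [norm_zpow, ← zpow_natCast, zpow_comm, zpow_natCast, heq δ hδ τ, mul_zpow, mul_zpow,
      ← Real.rpow_intCast (Real.exp _), ← Real.exp_mul]
    congr 3
    ring
  obtain ⟨M, hM⟩ : ∃ M : ℝ, ∀ᶠ τ in atImInfty, ∏ δ ∈ N.divisors, u δ τ ^ r δ ≤ M :=
    ⟨_, hlim.eventually_le_const (lt_add_one _)⟩
  refine ⟨max M 1, hM.mono fun τ hτ => ?_⟩
  have h4 : ‖etaQuot N r (g • τ)‖ ^ 4 ≤ max M 1 ^ 4 := by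
    have hexp : Real.exp (-(Real.pi / 3) * τ.im *
        ∑ δ ∈ N.divisors, (r δ : ℝ) * ((Int.gcd (g 1 0) δ : ℝ) ^ 2 / δ)) ≤ 1 := by
      rw [Real.exp_le_one_iff]
      have := mul_nonneg (mul_nonneg (by positivity : 0 ≤ Real.pi / 3) τ.im_pos.le) hord
      linarith
    calc _ ≤ max M 1 * 1 := by
          rw [hform]
          exact mul_le_mul (hτ.trans (le_max_left _ _)) hexp (Real.exp_pos _).le
            (zero_le_one.trans (le_max_right _ _))
      _ ≤ max M 1 ^ 4 := by
          rw [mul_one]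
          exact le_self_pow₀ (le_max_right _ _) (by norm_num)
  exact le_of_pow_le_pow_left₀ (by norm_num) (zero_le_one.trans (le_max_right _ _)) h4

end EtaQuotient

section EtaHauptmodul
open UpperHalfPlane MatrixGroups CongruenceSubgroup
open scoped Manifold

/-- A bounded modular function has a limit at each cusp. -/
theorem exists_tendsto_of_bounded {N : ℕ} (hN : 0 < N) {t : ℍ → ℂ}
    (ht : MDifferentiable 𝓘(ℂ) 𝓘(ℂ) t) (hinv : ∀ γ ∈ Gamma0 N, ∀ τ, t (γ • τ) = t τ)
    (g : SL(2, ℤ)) {M : ℝ} (hM : ∀ᶠ τ in atImInfty, ‖t (g • τ)‖ ≤ M) :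
    ∃ L, Filter.Tendsto (fun τ : ℍ => t (g • τ)) atImInfty (𝓝 L) := by
  set F : ℍ → ℂ := fun τ => t (g • τ) with hF
  have hFd : MDifferentiable 𝓘(ℂ) 𝓘(ℂ) F :=
    ht.comp (mdifferentiable_smul (g := Matrix.SpecialLinearGroup.mapGL ℝ g) (by simp))
  have hmem : g * ModularGroup.T ^ (N : ℤ) * g⁻¹ ∈ Gamma0 N := by
    rw [Gamma0_mem, SL_mul_entries _ _ |>.2.2.1]
    have h1 := SL_mul_entries g (ModularGroup.T ^ (N : ℤ))
    have h2 := SL_inv_entries g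
    rw [h1.2.2.1, h1.2.2.2, h2.1, h2.2.2.1]
    simp only [ModularGroup.coe_T_zpow]
    simp
    ring
  have hper1 : ∀ τ : ℍ, F (ModularGroup.T ^ (N : ℤ) • τ) = F τ := by
    intro τ
    rw [hF]
    have := hinv _ hmem (g • τ)
    rwa [← mul_smul, inv_mul_cancel_right, mul_smul] at this
  have hper : Function.Periodic (F ∘ ofComplex) ((N : ℝ) : ℂ) := by
    intro w
    by_cases! hw : 0 < w.im
    · have hw' : 0 < (w + ((N : ℝ) : ℂ)).im := by simpa using hw
      simp only [Function.comp_apply, ofComplex_apply_of_im_pos hw', ofComplex_apply_of_im_pos hw]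
      rw [← hper1 ⟨w, hw⟩]
      congr 1
      ext
      rw [ModularGroup.coe_T_zpow_smul_eq]
      simp
    · have hw' : (w + ((N : ℝ) : ℂ)).im ≤ 0 := by simpa using hw
      simp only [Function.comp_apply, ofComplex_apply_of_im_nonpos hw',
        ofComplex_apply_of_im_nonpos hw]
  have hhol : ∀ᶠ z in Filter.comap Complex.im Filter.atTop,
      DifferentiableAt ℂ (F ∘ ofComplex) z := by
    filter_upwards [Filter.preimage_mem_comap (Filter.Ioi_mem_atTop 0)] with z hz
    exact (UpperHalfPlane.mdifferentiable_iff.mp hFd).differentiableAt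
      (isOpen_upperHalfPlaneSet.mem_nhds hz)
  have hbd : Filter.BoundedAtFilter atImInfty F :=
    Asymptotics.IsBigO.of_bound M
      (hM.mono fun τ hτ => by simpa only [Pi.one_apply, norm_one, mul_one] using hτ)
  have hlim := Function.Periodic.tendsto_at_I_inf (by exact_mod_cast hN) hper hhol
    (hbd.comp_tendsto tendsto_comap_im_ofComplex)
  refine ⟨_, (hlim.comp tendsto_coe_atImInfty).congr fun τ => ?_⟩
  simp

/-- The expansion of the inverse of an eta quotient at `∞`, as a function of `q`. -/
def invEtaQuotCusp (N : ℕ) (r : ℕ → ℤ) (q : ℂ) : ℂ :=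
  q * ∏ δ ∈ N.divisors, eulerProd (q ^ δ) ^ (-r δ)

theorem hasStrictDerivAt_invEtaQuotCusp (N : ℕ) (r : ℕ → ℤ) :
    HasStrictDerivAt (invEtaQuotCusp N r) 1 0 := by
  have hzero : ∀ δ ∈ N.divisors, eulerProd ((0 : ℂ) ^ δ) = 1 := fun δ hδ => by
    rw [zero_pow (Nat.pos_of_mem_divisors hδ).ne', eulerProd_zero]
  have ha : AnalyticAt ℂ (fun q : ℂ => ∏ δ ∈ N.divisors, eulerProd (q ^ δ) ^ (-r δ)) 0 := by
    refine Finset.analyticAt_fun_prod _ fun δ hδ => ?_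
    have hδ0 := (Nat.pos_of_mem_divisors hδ).ne'
    refine AnalyticAt.fun_zpow ?_ (by rw [hzero δ hδ]; exact one_ne_zero)
    have h1 : AnalyticAt ℂ eulerProd ((0 : ℂ) ^ δ) := by
      rw [zero_pow hδ0]
      refine DifferentiableOn.analyticAt (s := Metric.ball 0 1) (fun q hq => ?_)
        (Metric.ball_mem_nhds _ one_pos)
      exact (differentiableAt_eulerProd (by simpa using hq)).differentiableWithinAt
    exact h1.comp (f := fun q : ℂ => q ^ δ) (by fun_prop)
  have h := (hasStrictDerivAt_id (0 : ℂ)).mul ha.hasStrictDerivAt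
  refine h.congr_deriv ?_
  simp only [id, one_mul, zero_mul, add_zero]
  exact Finset.prod_eq_one fun δ hδ => by rw [hzero δ hδ, one_zpow]

theorem qParam_natCast_mul (δ : ℕ) (z : ℂ) : Function.Periodic.qParam 1 (δ * z) =
    Function.Periodic.qParam 1 z ^ δ := by
  simp only [Function.Periodic.qParam, ← Complex.exp_nat_mul]
  congr 1
  ring

theorem inv_etaQuot_eq {N : ℕ} {r : ℕ → ℤ} (hr : ∑ δ ∈ N.divisors, (δ : ℤ) * r δ = -24) (τ : ℍ) :
    (etaQuot N r τ)⁻¹ = invEtaQuotCusp N r (Function.Periodic.qParam 1 τ) := by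
  have h24 : ∏ δ ∈ N.divisors, Function.Periodic.qParam 24 (δ * τ) ^ (-r δ) =
      Function.Periodic.qParam 1 τ := by
    have : ∀ δ ∈ N.divisors, Function.Periodic.qParam 24 (δ * τ) ^ (-r δ) =
        Function.Periodic.qParam 24 τ ^ (-((δ : ℤ) * r δ)) := by
      intro δ _
      simp only [Function.Periodic.qParam, ← Complex.exp_int_mul]
      congr 1
      push_cast
      ring
    rw [Finset.prod_congr rfl this, prod_zpow_eq_zpow_sum (Function.Periodic.qParam_ne_zero _),
      Finset.sum_neg_distrib, hr]
    simp only [Function.Periodic.qParam, ← Complex.exp_int_mul]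
    congr 1
    push_cast
    ring
  rw [etaQuot, ← Finset.prod_inv_distrib, invEtaQuotCusp]
  nth_rw 1 [← h24]
  rw [← Finset.prod_mul_distrib]
  refine Finset.prod_congr rfl fun δ _ => ?_
  rw [eta_eq_mul_eulerProd, ← zpow_neg, mul_zpow, qParam_natCast_mul]

theorem etaQuot_ne_zero (N : ℕ) (r : ℕ → ℤ) (τ : ℍ) : etaQuot N r τ ≠ 0 :=
  Finset.prod_ne_zero_iff.mpr fun _ hδ =>
    zpow_ne_zero _ (eta_natCast_mul_ne_zero (Nat.pos_of_mem_divisors hδ) τ)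

theorem tendsto_etaQuot_cobounded {N : ℕ} {r : ℕ → ℤ}
    (hr : ∑ δ ∈ N.divisors, (δ : ℤ) * r δ = -24) :
    Filter.Tendsto (etaQuot N r) atImInfty (Bornology.cobounded ℂ) := by
  have h0 : Filter.Tendsto (fun τ => (etaQuot N r τ)⁻¹) atImInfty (𝓝[≠] 0) := by
    refine tendsto_nhdsWithin_iff.mpr
      ⟨?_, Filter.Eventually.of_forall fun τ => inv_ne_zero (etaQuot_ne_zero N r τ)⟩
    have h1 := (hasStrictDerivAt_invEtaQuotCusp N r).hasDerivAt.continuousAt.tendsto.comp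
      (qParam_tendsto_atImInfty one_pos)
    have h2 : invEtaQuotCusp N r 0 = 0 := by simp [invEtaQuotCusp]
    rw [h2] at h1
    exact h1.congr fun τ => (inv_etaQuot_eq hr τ).symm
  simpa [Function.comp_def] using Filter.tendsto_inv₀_nhdsNE_zero.comp h0

theorem exists_T_zpow_smul_of_qParam_eq {τ τ' : ℍ}
    (h : Function.Periodic.qParam 1 τ = Function.Periodic.qParam 1 τ') :
    ∃ k : ℤ, ModularGroup.T ^ k • τ = τ' := by
  obtain ⟨n, hn⟩ := Complex.exp_eq_exp_iff_exists_int.mp h.symm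
  refine ⟨n, ?_⟩
  ext
  rw [ModularGroup.coe_T_zpow_smul_eq]
  have : (2 * Real.pi * Complex.I : ℂ) ≠ 0 := Complex.two_pi_I_ne_zero
  apply mul_left_cancel₀ this
  push_cast at hn
  linear_combination -hn

theorem exists_etaQuot_injective_at_infinity {N : ℕ} {r : ℕ → ℤ}
    (hr : ∑ δ ∈ N.divisors, (δ : ℤ) * r δ = -24) :
    ∃ Y : ℝ, ∀ τ τ' : ℍ, Y < τ.im → Y < τ'.im → etaQuot N r τ = etaQuot N r τ' →
      ∃ γ ∈ Gamma0 N, γ • τ = τ' := by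
  have hs := hasStrictDerivAt_invEtaQuotCusp N r
  have hleft := (hs.eventually_left_inverse (hf' := one_ne_zero))
  have hev := (qParam_tendsto_atImInfty one_pos).eventually hleft
  obtain ⟨Y, hY⟩ := (atImInfty_mem _).mp hev
  refine ⟨Y, fun τ τ' hτ hτ' heq => ?_⟩
  have h1 := hY τ hτ.le
  have h2 := hY τ' hτ'.le
  simp only [Set.mem_ofPred_eq, ← inv_etaQuot_eq hr] at h1 h2
  rw [heq] at h1
  obtain ⟨k, hk⟩ := exists_T_zpow_smul_of_qParam_eq (h1.symm.trans h2)
  refine ⟨_, ?_, hk⟩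
  rw [Gamma0_mem, ModularGroup.coe_T_zpow]
  simp

theorem isHauptmodul_etaQuot {N : ℕ} (hN : 0 < N) {r : ℕ → ℤ} (hr0 : ∑ δ ∈ N.divisors, r δ = 0)
    (hr24 : ∑ δ ∈ N.divisors, (δ : ℤ) * r δ = -24)
    (hord : ∀ k ∈ N.properDivisors,
      0 ≤ ∑ δ ∈ N.divisors, r δ * (Nat.gcd k δ : ℤ) ^ 2 * (N / δ : ℕ))
    (hinv : ∀ γ ∈ Gamma0 N, ∀ τ, etaQuot N r (γ • τ) = etaQuot N r τ) :
    IsHauptmodul (Gamma0 N) (etaQuot N r) := by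
  have : NeZero N := ⟨hN.ne'⟩
  obtain ⟨Y, hY⟩ := exists_etaQuot_injective_at_infinity hr24
  refine isHauptmodul_of_injective_at_infinity (mdifferentiable_etaQuot N r) hinv (fun g hg => ?_)
    (tendsto_etaQuot_cobounded hr24) hY
  suffices h : 0 ≤ ∑ δ ∈ N.divisors, (r δ : ℝ) * ((Int.gcd (g 1 0) δ : ℝ) ^ 2 / δ) by
    obtain ⟨M, hM⟩ := eventually_norm_etaQuot_le hr0 g h
    exact exists_tendsto_of_bounded hN (mdifferentiable_etaQuot N r) hinv g hM
  have hk : Int.gcd (g 1 0) N ∈ N.properDivisors := by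
    have hdvd : Int.gcd (g 1 0) N ∣ N := by exact_mod_cast Int.gcd_dvd_right (g 1 0) N
    refine Nat.mem_properDivisors.mpr ⟨hdvd, lt_of_le_of_ne (Nat.le_of_dvd hN hdvd) fun h => hg ?_⟩
    rw [Gamma0_mem, ZMod.intCast_zmod_eq_zero_iff_dvd]
    have := Int.gcd_dvd_left (g 1 0) N
    rwa [h] at this
  have hpos : (0 : ℝ) < N := by exact_mod_cast hN
  refine nonneg_of_mul_nonneg_right (a := (N : ℝ)) ?_ hpos
  have h : (0 : ℝ) ≤ ((∑ δ ∈ N.divisors,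
      r δ * (Nat.gcd (Int.gcd (g 1 0) N) δ : ℤ) ^ 2 * (N / δ : ℕ) : ℤ) : ℝ) := by
    exact_mod_cast hord _ hk
  refine h.trans_eq ?_
  symm
  rw [Finset.mul_sum, Int.cast_sum]
  refine Finset.sum_congr rfl fun δ hδ => ?_
  have hδN := Nat.dvd_of_mem_divisors hδ
  have hδ0 : (δ : ℝ) ≠ 0 := by exact_mod_cast (Nat.pos_of_mem_divisors hδ).ne'
  have hg' : Nat.gcd (Int.gcd (g 1 0) N) δ = Int.gcd (g 1 0) δ := by
    rw [Int.gcd_eq_natAbs, Int.gcd_eq_natAbs, Int.natAbs_natCast, Int.natAbs_natCast, Nat.gcd_assoc,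
      Nat.gcd_eq_right hδN]
  rw [hg']
  rw [Int.cast_mul, Int.cast_natCast, Nat.cast_div hδN hδ0]
  push_cast
  field_simp

end EtaHauptmodul

section EtaInvariance
open UpperHalfPlane MatrixGroups CongruenceSubgroup
open scoped Manifold

/-- Conjugation of `γ` by `diag(δ, 1)`, where `δ * c'` is the lower left entry of `γ`. -/
def conjDiag (γ : SL(2, ℤ)) (δ : ℕ) (c' : ℤ) (h : γ 1 0 = δ * c') : SL(2, ℤ) :=
  mkSL (γ 0 0) (δ * γ 0 1) c' (γ 1 1) (by have := SL_det γ; rw [h] at this; linarith)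

/-- Multiplication by a positive integer on the upper half plane. -/
def natMul (δ : ℕ) (hδ : 0 < δ) (τ : ℍ) : ℍ := ⟨δ * τ, im_natCast_mul_pos hδ τ.im_pos⟩

@[simp] theorem coe_natMul (δ : ℕ) (hδ : 0 < δ) (τ : ℍ) : (natMul δ hδ τ : ℂ) = δ * τ := rfl

theorem natMul_smul {γ : SL(2, ℤ)} {δ : ℕ} (hδ : 0 < δ) {c' : ℤ} (h : γ 1 0 = δ * c') (τ : ℍ) :
    natMul δ hδ (γ • τ) = conjDiag γ δ c' h • natMul δ hδ τ := by
  ext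
  rw [coe_natMul, coe_SL_smul, coe_SL_smul]
  simp only [conjDiag, mkSL_apply_zero_zero, mkSL_apply_zero_one, mkSL_apply_one_zero,
    mkSL_apply_one_one, coe_natMul, h]
  push_cast
  rw [← mul_div_assoc]
  congr 1 <;> ring

theorem eta_natCast_mul_smul_sq {γ : SL(2, ℤ)} {δ : ℕ} (hδ : 0 < δ) {c' : ℤ}
    (h : γ 1 0 = δ * c') (τ : ℍ) : ModularForm.eta (δ * (γ • τ : ℍ)) ^ 2 =
      zeta12 (etaPoly (γ 0 0) (δ * γ 0 1) c' (γ 1 1)) * (γ 1 0 * τ + γ 1 1) *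
        ModularForm.eta (δ * τ) ^ 2 := by
  have h1 := eta_smul_sq (conjDiag γ δ c' h) (natMul δ hδ τ)
  rw [← natMul_smul, coe_natMul, coe_natMul] at h1
  rw [h1]
  simp only [etaExp, conjDiag, mkSL_apply_zero_zero, mkSL_apply_zero_one, mkSL_apply_one_zero,
    mkSL_apply_one_one, h]
  push_cast
  ring

theorem etaQuot_two_mul (N : ℕ) (s : ℕ → ℤ) (τ : ℍ) :
    etaQuot N (fun δ => 2 * s δ) τ = etaQuot N s τ ^ 2 := by
  rw [etaQuot, etaQuot, ← Finset.prod_pow]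
  refine Finset.prod_congr rfl fun δ _ => ?_
  rw [mul_comm (2 : ℤ), zpow_mul, zpow_ofNat]

/-- The condition on the exponents of an eta quotient under which its square is modular for
`Γ₀(N)`, as a congruence over `A`. -/
def EtaCongruence (A : Type*) [CommRing A] (N : ℕ) (s : ℕ → ℤ) : Prop :=
  ∀ a b c d : A, a * d - b * (N * c) = 1 →
    ∑ δ ∈ N.divisors, (s δ : A) * etaPoly a (δ * b) ((N / δ : ℕ) * c) d = 0

theorem etaQuot_smul_sq {N : ℕ} {s : ℕ → ℤ} (hs : ∑ δ ∈ N.divisors, s δ = 0)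
    (h4 : EtaCongruence (ZMod 4) N s) (h3 : EtaCongruence (ZMod 3) N s) {γ : SL(2, ℤ)}
    (hγ : γ ∈ Gamma0 N) (τ : ℍ) : etaQuot N s (γ • τ) ^ 2 = etaQuot N s τ ^ 2 := by
  rw [Gamma0_mem, ZMod.intCast_zmod_eq_zero_iff_dvd] at hγ
  obtain ⟨c, hc⟩ := hγ
  have hdet := SL_det γ
  rw [hc] at hdet
  have hne : (γ 1 0 * τ + γ 1 1 : ℂ) ≠ 0 := by
    simpa [denom] using denom_ne_zero (Matrix.SpecialLinearGroup.mapGL ℝ γ) τ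
  have hterm : ∀ δ ∈ N.divisors, (ModularForm.eta (δ * (γ • τ : ℍ)) ^ s δ) ^ 2 =
      zeta12 (s δ * etaPoly (γ 0 0) (δ * γ 0 1) ((N / δ : ℕ) * c) (γ 1 1)) *
        (γ 1 0 * τ + γ 1 1) ^ s δ * (ModularForm.eta (δ * τ) ^ s δ) ^ 2 := by
    intro δ hδ
    have hcδ : γ 1 0 = δ * ((N / δ : ℕ) * c) := by
      rw [hc, ← mul_assoc]
      congr 1
      exact_mod_cast (Nat.mul_div_cancel' (Nat.dvd_of_mem_divisors hδ)).symm
    have h := eta_natCast_mul_smul_sq (Nat.pos_of_mem_divisors hδ) hcδ τ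
    rw [← zpow_natCast, zpow_comm, zpow_natCast, h, mul_zpow, mul_zpow, zeta12_zsmul,
      ← zpow_natCast, zpow_comm, ← zpow_natCast]
  rw [etaQuot, ← Finset.prod_pow, Finset.prod_congr rfl hterm, Finset.prod_mul_distrib,
    Finset.prod_mul_distrib, ← zeta12_sum, prod_zpow_eq_zpow_sum hne, hs, zeta12_eq_one, zpow_zero,
    one_mul, one_mul, etaQuot, Finset.prod_pow]
  apply twelve_dvd_of_zmod
  · have := h4 (γ 0 0) (γ 0 1) c (γ 1 1) (by exact_mod_cast congrArg (Int.cast (R := ZMod 4)) hdet)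
    simpa only [Int.cast_sum, Int.cast_mul, Int.cast_natCast, etaPoly_intCast] using this
  · have := h3 (γ 0 0) (γ 0 1) c (γ 1 1) (by exact_mod_cast congrArg (Int.cast (R := ZMod 3)) hdet)
    simpa only [Int.cast_sum, Int.cast_mul, Int.cast_natCast, etaPoly_intCast] using this

theorem isHauptmodul_etaQuot_sq {N : ℕ} (hN : 0 < N) {s : ℕ → ℤ}
    (hs0 : ∑ δ ∈ N.divisors, s δ = 0) (hs12 : ∑ δ ∈ N.divisors, (δ : ℤ) * s δ = -12)
    (hord : ∀ k ∈ N.properDivisors,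
      0 ≤ ∑ δ ∈ N.divisors, s δ * (Nat.gcd k δ : ℤ) ^ 2 * (N / δ : ℕ))
    (h4 : EtaCongruence (ZMod 4) N s) (h3 : EtaCongruence (ZMod 3) N s) :
    IsHauptmodul (Gamma0 N) (etaQuot N fun δ => 2 * s δ) := by
  refine isHauptmodul_etaQuot hN ?_ ?_ ?_ fun γ hγ τ => ?_
  · rw [← Finset.mul_sum, hs0, mul_zero]
  · simp only [mul_left_comm _ (2 : ℤ), ← Finset.mul_sum, hs12]
    norm_num
  · intro k hk
    simp only [mul_assoc (2 : ℤ), ← Finset.mul_sum]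
    exact mul_nonneg zero_le_two (hord k hk)
  · rw [etaQuot_two_mul, etaQuot_two_mul, etaQuot_smul_sq hs0 h4 h3 hγ]

/-- The function with value `(l.lookup δ)` on the keys of `l` and `0` elsewhere. -/
def exponents (l : List (ℕ × ℤ)) (δ : ℕ) : ℤ := (l.lookup δ).getD 0

instance (A : Type*) [CommRing A] [Fintype A] [DecidableEq A] (N : ℕ) (s : ℕ → ℤ) :
    Decidable (EtaCongruence A N s) := by
  unfold EtaCongruence
  infer_instance

theorem exists_isHauptmodul_of_exponents {N : ℕ} (l : List (ℕ × ℤ))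
    (h : 0 < N ∧ ∑ δ ∈ N.divisors, exponents l δ = 0 ∧
      ∑ δ ∈ N.divisors, (δ : ℤ) * exponents l δ = -12 ∧
      (∀ k ∈ N.properDivisors,
        0 ≤ ∑ δ ∈ N.divisors, exponents l δ * (Nat.gcd k δ : ℤ) ^ 2 * (N / δ : ℕ)) ∧
      EtaCongruence (ZMod 4) N (exponents l) ∧ EtaCongruence (ZMod 3) N (exponents l)) :
    ∃ f, IsHauptmodul (Gamma0 N) f :=
  ⟨_, isHauptmodul_etaQuot_sq h.1 h.2.1 h.2.2.1 h.2.2.2.1 h.2.2.2.2.1 h.2.2.2.2.2⟩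

theorem exists_isHauptmodul_of_even_exponents {N : ℕ}
    (hN : N ∈ ({2, 3, 4, 5, 6, 7, 8, 10, 12, 13, 16} : Set ℕ)) :
    ∃ f, IsHauptmodul (Gamma0 N) f := by
  obtain rfl | rfl | rfl | rfl | rfl | rfl | rfl | rfl | rfl | rfl | rfl := hN
  · exact exists_isHauptmodul_of_exponents [(1, 12), (2, -12)] (by decide +kernel)
  · exact exists_isHauptmodul_of_exponents [(1, 6), (3, -6)] (by decide +kernel)
  · exact exists_isHauptmodul_of_exponents [(1, 4), (4, -4)] (by decide +kernel)
  · exact exists_isHauptmodul_of_exponents [(1, 3), (5, -3)] (by decide +kernel)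
  · exact exists_isHauptmodul_of_exponents [(1, -2), (2, 4), (3, 2), (6, -4)] (by decide +kernel)
  · exact exists_isHauptmodul_of_exponents [(1, 2), (7, -2)] (by decide +kernel)
  · exact exists_isHauptmodul_of_exponents [(1, 2), (2, -1), (4, 1), (8, -2)] (by decide +kernel)
  · exact exists_isHauptmodul_of_exponents [(1, -1), (2, 2), (5, 1), (10, -2)] (by decide +kernel)
  · exact exists_isHauptmodul_of_exponents [(2, -1), (4, 2), (6, 1), (12, -2)] (by decide +kernel)
  · exact exists_isHauptmodul_of_exponents [(1, 1), (13, -1)] (by decide +kernel)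
  · exact exists_isHauptmodul_of_exponents [(4, -1), (8, 3), (16, -2)] (by decide +kernel)

end EtaInvariance

section EtaRatio
open UpperHalfPlane MatrixGroups CongruenceSubgroup
open scoped Manifold

theorem exists_const_of_sq_eq_mul_sq {f g : ℍ → ℂ} (hf : Continuous f) (hg : Continuous g)
    (hg0 : ∀ τ, g τ ≠ 0) {ν : ℂ} (h : ∀ τ, f τ ^ 2 = ν * g τ ^ 2) : ∃ μ, ∀ τ, f τ = μ * g τ := by
  have hsq : ∀ τ, (f τ / g τ) ^ 2 = ν := fun τ => by
    rw [div_pow, h, mul_div_cancel_right₀ _ (pow_ne_zero _ (hg0 τ))]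
  rcases eq_or_ne ν 0 with rfl | hν
  · exact ⟨0, fun τ => by simpa using h τ⟩
  obtain ⟨c, hc⟩ := IsAlgClosed.exists_pow_nat_eq ν two_pos
  have hc0 : c ≠ 0 := by
    rintro rfl
    exact hν (by simpa using hc.symm)
  have key := isPreconnected_univ.eq_or_eq_neg_of_sq_eq (f := fun τ => f τ / g τ)
    (g := fun _ => c) (hf.div hg hg0).continuousOn continuousOn_const
    (fun τ _ => by simp [hsq, hc]) (fun _ => hc0)
  rcases key with key | key
  · exact ⟨c, fun τ => (div_eq_iff (hg0 τ)).mp (key (Set.mem_univ τ))⟩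
  · exact ⟨-c, fun τ => (div_eq_iff (hg0 τ)).mp (key (Set.mem_univ τ))⟩

/-- The quotient `η(p τ) / η(τ)`. -/
def etaRatio (p : ℕ) (τ : ℍ) : ℂ := ModularForm.eta (p * τ) / ModularForm.eta τ

theorem continuous_eta_natCast_mul {p : ℕ} (hp : 0 < p) :
    Continuous fun τ : ℍ => ModularForm.eta (p * τ) := by
  refine continuous_iff_continuousAt.mpr fun τ => ?_
  have h1 : ContinuousAt ModularForm.eta (p * (τ : ℂ)) :=
    (ModularForm.differentiableAt_eta_of_mem_upperHalfPlaneSet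
      (im_natCast_mul_pos hp τ.im_pos)).continuousAt
  exact ContinuousAt.comp (f := fun τ : ℍ => (p * τ : ℂ)) h1
    (continuous_const.mul continuous_coe).continuousAt

theorem eta_coe_ne_zero (τ : ℍ) : ModularForm.eta τ ≠ 0 := ModularForm.eta_ne_zero τ.im_pos

theorem etaRatio_ne_zero {p : ℕ} (hp : 0 < p) (τ : ℍ) : etaRatio p τ ≠ 0 :=
  div_ne_zero (eta_natCast_mul_ne_zero hp τ) (eta_coe_ne_zero τ)

theorem continuous_etaRatio {p : ℕ} (hp : 0 < p) : Continuous (etaRatio p) :=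
  (continuous_eta_natCast_mul hp).div (by simpa using continuous_eta_natCast_mul one_pos)
    eta_coe_ne_zero

theorem exists_etaRatio_smul_eq {p : ℕ} (hp : 0 < p) {γ : SL(2, ℤ)} (hγ : γ ∈ Gamma0 p) :
    ∃ μ, ∀ τ, etaRatio p (γ • τ) = μ * etaRatio p τ := by
  rw [Gamma0_mem, ZMod.intCast_zmod_eq_zero_iff_dvd] at hγ
  obtain ⟨c, hc⟩ := hγ
  refine exists_const_of_sq_eq_mul_sq ((continuous_etaRatio hp).comp (continuous_SL_smul γ))
    (continuous_etaRatio hp) (etaRatio_ne_zero hp)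
    (ν := zeta12 (etaPoly (γ 0 0) (p * γ 0 1) c (γ 1 1)) / zeta12 (etaExp γ)) fun τ => ?_
  have hne : (γ 1 0 * τ + γ 1 1 : ℂ) ≠ 0 := by
    simpa [denom] using denom_ne_zero (Matrix.SpecialLinearGroup.mapGL ℝ γ) τ
  have h0 := eta_coe_ne_zero τ
  have h1 := zeta12_ne_zero (etaExp γ)
  change etaRatio p (γ • τ) ^ 2 = _
  rw [etaRatio, etaRatio, div_pow, div_pow, eta_natCast_mul_smul_sq hp hc, eta_smul_sq]
  field_simp

theorem eta_add_natCast (z : ℂ) (n : ℕ) : ModularForm.eta (z + n) =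
    Complex.exp (2 * Real.pi * Complex.I / 24) ^ n * ModularForm.eta z := by
  induction n with
  | zero => simp
  | succ n ih =>
    rw [Nat.cast_succ, ← add_assoc, eta_add_one, ih]
    ring

theorem etaRatio_T_smul (k : ℕ) (τ : ℍ) : etaRatio (2 * k + 1) (ModularGroup.T • τ) =
    zeta12 1 ^ k * etaRatio (2 * k + 1) τ := by
  have h : ((ModularGroup.T • τ : ℍ) : ℂ) = τ + 1 := by
    rw [modular_T_smul, coe_vadd, add_comm]
    norm_num
  have h12 : zeta12 1 = Complex.exp (2 * Real.pi * Complex.I / 24) ^ 2 := by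
    rw [zeta12, zpow_one, ← Complex.exp_nat_mul]
    congr 1
    push_cast
    ring
  have hne := Complex.exp_ne_zero (2 * Real.pi * Complex.I / 24)
  rw [etaRatio, etaRatio, h, mul_add, mul_one, eta_add_natCast, eta_add_one, h12]
  have h0 := eta_coe_ne_zero τ
  field_simp
  ring

/-- The Fricke involution `τ ↦ -1 / (p τ)`. -/
def fricke (p : ℕ) (hp : 0 < p) (τ : ℍ) : ℍ := ModularGroup.S • natMul p hp τ

theorem coe_fricke (p : ℕ) (hp : 0 < p) (τ : ℍ) : (fricke p hp τ : ℂ) = -1 / (p * τ) := by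
  rw [fricke, modular_S_smul, coe_mk, coe_natMul, neg_div, one_div, inv_neg]

theorem exists_etaRatio_fricke {p : ℕ} (hp : 0 < p) :
    ∃ C ≠ 0, ∀ τ, etaRatio p (fricke p hp τ) = C / etaRatio p τ := by
  have hcont : Continuous (fricke p hp) := by
    refine (continuous_SL_smul _).comp ?_
    rw [isEmbedding_coe.continuous_iff]
    exact continuous_const.mul continuous_coe
  have hpc : (p : ℂ) ≠ 0 := by exact_mod_cast hp.ne'
  obtain ⟨C, hC⟩ := exists_const_of_sq_eq_mul_sq (f := fun τ => etaRatio p (fricke p hp τ))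
    (g := fun τ => (etaRatio p τ)⁻¹) ((continuous_etaRatio hp).comp hcont)
    ((continuous_etaRatio hp).inv₀ (etaRatio_ne_zero hp))
    (fun τ => inv_ne_zero (etaRatio_ne_zero hp τ)) (ν := (p : ℂ)⁻¹) fun τ => by
      have h1 := eta_S_smul_sq τ
      have h2 := eta_S_smul_sq (natMul p hp τ)
      have h3 : (p * fricke p hp τ : ℂ) = (ModularGroup.S • τ : ℍ) := by
        rw [coe_fricke, modular_S_smul]
        change _ = (-(τ : ℂ))⁻¹
        rw [inv_neg]
        have hτ := τ.ne_zero
        field_simp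
      have h0 := eta_coe_ne_zero τ
      have h0' := eta_natCast_mul_ne_zero hp τ
      have hz := zeta12_ne_zero (-3)
      have hτ := τ.ne_zero
      rw [coe_natMul, ← fricke] at h2
      rw [etaRatio, etaRatio, h3, div_pow, h1, h2]
      field_simp
  refine ⟨C, ?_, fun τ => hC τ⟩
  rintro rfl
  exact etaRatio_ne_zero hp _ (by simpa using hC I)

/-- The lower triangular matrix with lower left entry `p`. -/
def lowerSL (p : ℕ) : SL(2, ℤ) := mkSL 1 0 p 1 (by ring)

theorem etaRatio_lowerSL_smul {p k : ℕ} (hp : p = 2 * k + 1) (τ : ℍ) :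
    etaRatio p (lowerSL p • τ) = zeta12 1 ^ k * etaRatio p τ := by
  have hp0 : 0 < p := by omega
  obtain ⟨C, hC0, hC⟩ := exists_etaRatio_fricke hp0
  have hpc : (p : ℂ) ≠ 0 := by exact_mod_cast hp0.ne'
  have h : ModularGroup.T • fricke p hp0 (lowerSL p • τ) = fricke p hp0 τ := by
    have hne : (p * τ + 1 : ℂ) ≠ 0 := by
      simpa [denom, lowerSL] using denom_ne_zero (Matrix.SpecialLinearGroup.mapGL ℝ (lowerSL p)) τ
    ext
    rw [modular_T_smul, coe_vadd, coe_fricke, coe_fricke, coe_SL_smul]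
    simp only [lowerSL, mkSL_apply_zero_zero, mkSL_apply_zero_one, mkSL_apply_one_zero,
      mkSL_apply_one_one]
    have hτ := τ.ne_zero
    simp only [Int.cast_one, Int.cast_zero, Int.cast_natCast, one_mul, add_zero]
    push_cast
    field_simp
    ring
  have h1 := hC τ
  have h2 : etaRatio p (ModularGroup.T • fricke p hp0 (lowerSL p • τ)) = _ :=
    hp ▸ etaRatio_T_smul k _
  rw [h, h1, hC] at h2
  have := etaRatio_ne_zero hp0 τ
  have := etaRatio_ne_zero hp0 (lowerSL p • τ)
  field_simp at h2
  rw [h2, mul_comm]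

theorem zeta12_etaExp_mul (γ δ : SL(2, ℤ)) :
    zeta12 (etaExp (γ * δ)) = zeta12 (etaExp γ) * zeta12 (etaExp δ) := by
  have h1 := eta_smul_sq (γ * δ) I
  rw [denom_mul_smul, mul_smul, eta_smul_sq, eta_smul_sq] at h1
  have hne : ∀ (γ : SL(2, ℤ)) (τ : ℍ), (γ 1 0 * τ + γ 1 1 : ℂ) ≠ 0 := fun γ τ => by
    simpa [denom] using denom_ne_zero (Matrix.SpecialLinearGroup.mapGL ℝ γ) τ
  have h2 := hne γ (δ • I)
  have h3 := hne δ I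
  have h4 := eta_coe_ne_zero I
  field_simp at h1
  exact h1.symm

end EtaRatio

section Generators
open UpperHalfPlane MatrixGroups CongruenceSubgroup

theorem mul_T_zpow_entries (γ : SL(2, ℤ)) (m : ℤ) :
    (γ * ModularGroup.T ^ m) 1 0 = γ 1 0 ∧ (γ * ModularGroup.T ^ m) 1 1 = γ 1 1 + m * γ 1 0 := by
  obtain ⟨-, -, h10, h11⟩ := SL_mul_entries γ (ModularGroup.T ^ m)
  rw [h10, h11]
  simp only [ModularGroup.coe_T_zpow]
  constructor
  · simp
  · simp
    ring

theorem mem_of_lower_left_eq_zero {H : Subgroup SL(2, ℤ)} (hT : ModularGroup.T ∈ H)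
    (hneg : -1 ∈ H) {γ : SL(2, ℤ)} (hγ : γ 1 0 = 0) : γ ∈ H := by
  have hdet := SL_det γ
  rw [hγ, mul_zero, sub_zero] at hdet
  rcases Int.eq_one_or_neg_one_of_mul_eq_one' hdet with ⟨ha, hd⟩ | ⟨ha, hd⟩
  · have : γ = ModularGroup.T ^ (γ 0 1) := by
      apply SL_ext <;> simp only [ModularGroup.coe_T_zpow] <;> simp [ha, hd, hγ]
    rw [this]
    exact H.zpow_mem hT _
  · have : γ = -1 * ModularGroup.T ^ (-γ 0 1) := by
      rw [neg_one_mul]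
      apply SL_ext <;> rw [Matrix.SpecialLinearGroup.coe_neg, Matrix.neg_apply] <;>
        simp only [ModularGroup.coe_T_zpow] <;> simp [ha, hd, hγ]
    rw [this]
    exact H.mul_mem hneg (H.zpow_mem hT _)

/-- Euclidean descent on the lower left entry. -/
theorem Gamma0_le_of_descent {p : ℕ} {H : Subgroup SL(2, ℤ)} (hT : ModularGroup.T ∈ H)
    (hneg : -1 ∈ H)
    (hdesc : ∀ γ ∈ Gamma0 p, γ 1 0 ≠ 0 → 2 * |γ 1 1| ≤ |γ 1 0| →
      ∃ δ ∈ H, γ * δ ∈ Gamma0 p ∧ |(γ * δ) 1 0| < |γ 1 0|) : Gamma0 p ≤ H := by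
  have hTp : ∀ m : ℤ, ModularGroup.T ^ m ∈ Gamma0 p := fun m => by
    rw [Gamma0_mem, ModularGroup.coe_T_zpow]
    simp
  suffices h : ∀ n : ℕ, ∀ γ ∈ Gamma0 p, (γ 1 0).natAbs = n → γ ∈ H from
    fun γ hγ => h _ γ hγ rfl
  intro n
  induction n using Nat.strong_induction_on with
  | _ n ih =>
    intro γ hγ hn
    rcases eq_or_ne (γ 1 0) 0 with h0 | h0
    · exact mem_of_lower_left_eq_zero hT hneg h0
    · obtain ⟨m, hm⟩ : ∃ m : ℤ, 2 * |γ 1 1 + m * γ 1 0| ≤ |γ 1 0| := by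
        refine ⟨-round ((γ 1 1 : ℚ) / γ 1 0), ?_⟩
        have hq : (γ 1 0 : ℚ) ≠ 0 := by exact_mod_cast h0
        have h1 := abs_sub_round ((γ 1 1 : ℚ) / γ 1 0)
        have h2 : ((γ 1 1 : ℚ) / γ 1 0 - round ((γ 1 1 : ℚ) / γ 1 0)) =
            (γ 1 1 + (-round ((γ 1 1 : ℚ) / γ 1 0) : ℤ) * γ 1 0) / γ 1 0 := by
          push_cast
          field_simp
          ring
        rw [h2, abs_div, div_le_iff₀ (abs_pos.mpr hq)] at h1
        have h3 : (2 : ℚ) * |(γ 1 1 : ℚ) + (-round ((γ 1 1 : ℚ) / γ 1 0) : ℤ) * γ 1 0| ≤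
            |(γ 1 0 : ℚ)| := by linarith
        exact_mod_cast h3
      obtain ⟨e10, e11⟩ := mul_T_zpow_entries γ m
      obtain ⟨δ, hδ, hmem, hlt⟩ := hdesc (γ * ModularGroup.T ^ m)
        (mul_mem hγ (hTp m)) (by rwa [e10]) (by rwa [e10, e11])
      rw [e10] at hlt
      have := ih _ (by
        rw [Int.abs_eq_natAbs, Int.abs_eq_natAbs] at hlt
        rw [← hn]
        exact_mod_cast hlt) _ hmem rfl
      exact (H.mul_mem_cancel_right (H.zpow_mem hT m)).mp ((H.mul_mem_cancel_right hδ).mp this)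

theorem exists_lowerSL_descent {p : ℕ} (hp : 0 < p) {H : Subgroup SL(2, ℤ)} (hV : lowerSL p ∈ H)
    {γ : SL(2, ℤ)} (hγ : γ ∈ Gamma0 p) (hd : γ 1 1 ≠ 0) (hlt : p * |γ 1 1| < 2 * |γ 1 0|) :
    ∃ δ ∈ H, γ * δ ∈ Gamma0 p ∧ |(γ * δ) 1 0| < |γ 1 0| := by
  have hVp : lowerSL p ∈ Gamma0 p := by simp [Gamma0_mem, lowerSL]
  have e1 : (γ * lowerSL p) 1 0 = γ 1 0 + p * γ 1 1 := by
    rw [(SL_mul_entries _ _).2.2.1]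
    simp [lowerSL, mul_comm]
  have e2 : (γ * (lowerSL p)⁻¹) 1 0 = γ 1 0 - p * γ 1 1 := by
    rw [(SL_mul_entries _ _).2.2.1, (SL_inv_entries _).1, (SL_inv_entries _).2.2.1]
    simp [lowerSL]
    ring
  have hx : p * γ 1 1 ≠ 0 := mul_ne_zero (by exact_mod_cast hp.ne') hd
  have hx' : |p * γ 1 1| < 2 * |γ 1 0| := by rwa [abs_mul, Nat.abs_cast]
  have key : |γ 1 0 + p * γ 1 1| < |γ 1 0| ∨ |γ 1 0 - p * γ 1 1| < |γ 1 0| := by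
    generalize (p * γ 1 1 : ℤ) = x at hx hx'
    generalize (γ 1 0 : ℤ) = c at hx'
    rcases abs_cases c with h1 | h1 <;> rcases abs_cases x with h2 | h2 <;>
      rcases abs_cases (c + x) with h3 | h3 <;> rcases abs_cases (c - x) with h4 | h4 <;> omega
  rcases key with key | key
  · exact ⟨_, hV, mul_mem hγ hVp, by rwa [e1]⟩
  · exact ⟨_, inv_mem hV, mul_mem hγ (inv_mem hVp), by rwa [e2]⟩

theorem lower_right_ne_zero {p : ℕ} (hp : 1 < p) {γ : SL(2, ℤ)} (hγ : γ ∈ Gamma0 p) :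
    (γ 1 1 : ZMod p) ≠ 0 := by
  have : Fact (1 < p) := ⟨hp⟩
  intro h
  have hdet := congrArg (Int.cast (R := ZMod p)) (SL_det γ)
  rw [Gamma0_mem] at hγ
  push_cast at hdet
  rw [hγ, h] at hdet
  simp at hdet

theorem Gamma0_three_le {H : Subgroup SL(2, ℤ)} (hT : ModularGroup.T ∈ H) (hneg : -1 ∈ H)
    (hV : lowerSL 3 ∈ H) : Gamma0 3 ≤ H := by
  refine Gamma0_le_of_descent hT hneg fun γ hγ hc hd => ?_
  refine exists_lowerSL_descent (by norm_num) hV hγ ?_ ?_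
  · intro h
    exact lower_right_ne_zero (by norm_num) hγ (by simp [h])
  · have := abs_pos.mpr hc
    push_cast
    linarith

theorem Gamma0_five_le {H : Subgroup SL(2, ℤ)} (hT : ModularGroup.T ∈ H) (hneg : -1 ∈ H)
    (hV : lowerSL 5 ∈ H) (hE : mkSL 2 (-1) 5 (-2) (by norm_num) ∈ H)
    (hE' : mkSL (-2) (-1) 5 2 (by norm_num) ∈ H) : Gamma0 5 ≤ H := by
  refine Gamma0_le_of_descent hT hneg fun γ hγ hc hd => ?_
  by_cases hlt : 5 * |γ 1 1| < 2 * |γ 1 0|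
  · refine exists_lowerSL_descent (by norm_num) hV hγ ?_ (by exact_mod_cast hlt)
    intro h
    exact lower_right_ne_zero (by norm_num) hγ (by simp [h])
  · have e1 : (γ * mkSL 2 (-1) 5 (-2) (by norm_num)) 1 0 = 2 * γ 1 0 + 5 * γ 1 1 := by
      rw [(SL_mul_entries _ _).2.2.1]
      simp [mul_comm]
    have e2 : (γ * mkSL (-2) (-1) 5 2 (by norm_num)) 1 0 = -2 * γ 1 0 + 5 * γ 1 1 := by
      rw [(SL_mul_entries _ _).2.2.1]
      simp [mul_comm]
    have key : |2 * γ 1 0 + 5 * γ 1 1| < |γ 1 0| ∨ |-2 * γ 1 0 + 5 * γ 1 1| < |γ 1 0| := by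
      generalize (γ 1 1 : ℤ) = d at hd hlt
      generalize (γ 1 0 : ℤ) = c at hd hlt hc
      rcases abs_cases c with h1 | h1 <;> rcases abs_cases d with h2 | h2 <;>
        rcases abs_cases (2 * c + 5 * d) with h3 | h3 <;>
        rcases abs_cases (-2 * c + 5 * d) with h4 | h4 <;> omega
    rcases key with key | key
    · exact ⟨_, hE, mul_mem hγ (by rw [Gamma0_mem]; decide), by rwa [e1]⟩
    · exact ⟨_, hE', mul_mem hγ (by rw [Gamma0_mem]; decide), by rwa [e2]⟩

end Generators

section OddExponents
open UpperHalfPlane MatrixGroups CongruenceSubgroup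
open scoped Manifold

/-- The multiplier of `(η(p τ) / η(τ)) ^ 3`, where `p = 2 * k + 1`. -/
def etaRatioMultiplier (p k : ℕ) [Fact p.Prime] (γ : SL(2, ℤ)) : ℂ :=
  zeta12 (etaExp γ) ^ (3 * k) * (quadraticChar (ZMod p) (γ 1 1 : ℤ) : ℤ)

theorem etaRatioMultiplier_mul {p : ℕ} [Fact p.Prime] (k : ℕ) {γ : SL(2, ℤ)}
    (hγ : γ ∈ Gamma0 p) (δ : SL(2, ℤ)) : etaRatioMultiplier p k (γ * δ) =
      etaRatioMultiplier p k γ * etaRatioMultiplier p k δ := by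
  rw [Gamma0_mem] at hγ
  have h : (((γ * δ) 1 1 : ℤ) : ZMod p) = (γ 1 1 : ℤ) * (δ 1 1 : ℤ) := by
    rw [(SL_mul_entries γ δ).2.2.2]
    push_cast
    rw [hγ]
    ring
  simp only [etaRatioMultiplier]
  rw [h, zeta12_etaExp_mul, map_mul]
  push_cast
  ring

theorem etaRatioMultiplier_one (p k : ℕ) [Fact p.Prime] : etaRatioMultiplier p k 1 = 1 := by
  have h : zeta12 (etaExp 1) = 1 := by
    have := zeta12_etaExp_mul 1 1
    rw [one_mul] at this
    exact (mul_eq_left₀ (zeta12_ne_zero _)).mp this.symm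
  simp [etaRatioMultiplier, h]

/-- The elements of `Γ₀(p)` under which `(η(p τ) / η(τ)) ^ 3` transforms by
`etaRatioMultiplier`. -/
def etaRatioSubgroup (p k : ℕ) [Fact p.Prime] : Subgroup SL(2, ℤ) where
  carrier := {γ | γ ∈ Gamma0 p ∧
    ∀ τ, etaRatio p (γ • τ) ^ 3 = etaRatioMultiplier p k γ * etaRatio p τ ^ 3}
  one_mem' := ⟨one_mem _, fun τ => by rw [one_smul, etaRatioMultiplier_one, one_mul]⟩
  mul_mem' := fun {γ δ} hγ hδ => ⟨mul_mem hγ.1 hδ.1, fun τ => by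
    rw [mul_smul, hγ.2, hδ.2, etaRatioMultiplier_mul k hγ.1, mul_assoc]⟩
  inv_mem' := fun {γ} hγ => ⟨inv_mem hγ.1, fun τ => by
    have h1 := hγ.2 (γ⁻¹ • τ)
    have h2 := etaRatioMultiplier_mul k (inv_mem hγ.1) γ
    rw [inv_mul_cancel, etaRatioMultiplier_one] at h2
    rw [smul_inv_smul] at h1
    rw [h1, ← mul_assoc, ← h2, one_mul]⟩

theorem mem_etaRatioSubgroup_of_fixed {p : ℕ} (k : ℕ) [Fact p.Prime] {γ : SL(2, ℤ)}
    (hγ : γ ∈ Gamma0 p) {τ : ℍ} (hτ : γ • τ = τ) (hmult : etaRatioMultiplier p k γ = 1) :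
    γ ∈ etaRatioSubgroup p k := by
  have hp : 0 < p := (Fact.out : p.Prime).pos
  obtain ⟨μ, hμ⟩ := exists_etaRatio_smul_eq hp hγ
  have h1 := hμ τ
  rw [hτ] at h1
  have h2 : μ = 1 := (mul_eq_right₀ (etaRatio_ne_zero hp τ)).mp h1.symm
  exact ⟨hγ, fun τ => by rw [hμ, h2, hmult, one_mul, one_mul]⟩

theorem T_mem_etaRatioSubgroup {p k : ℕ} (hp : p = 2 * k + 1) [Fact p.Prime] :
    ModularGroup.T ∈ etaRatioSubgroup p k := by
  refine ⟨by rw [Gamma0_mem]; simp [ModularGroup.T], fun τ => ?_⟩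
  have h : etaRatio p (ModularGroup.T • τ) = _ := hp ▸ etaRatio_T_smul k τ
  have h1 : etaExp ModularGroup.T = 1 := by decide
  have h2 : ModularGroup.T 1 1 = 1 := rfl
  rw [h, etaRatioMultiplier, h1, h2, Int.cast_one, map_one]
  push_cast
  ring

theorem lowerSL_mem_etaRatioSubgroup {p k : ℕ} (hp : p = 2 * k + 1) [Fact p.Prime]
    (hk : 12 ∣ (3 * k : ℕ) * etaPoly 1 0 (p : ℤ) 1 - (3 * k : ℕ)) :
    lowerSL p ∈ etaRatioSubgroup p k := by
  refine ⟨by simp [Gamma0_mem, lowerSL], fun τ => ?_⟩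
  have h := zeta12_congr hk
  rw [zeta12_zsmul, zpow_natCast, ← mul_one ((3 * k : ℕ) : ℤ), zeta12_zsmul, zpow_natCast] at h
  have h1 : etaExp (lowerSL p) = etaPoly 1 0 (p : ℤ) 1 := by simp [etaExp, lowerSL]
  have h2 : lowerSL p 1 1 = 1 := by simp [lowerSL]
  rw [etaRatio_lowerSL_smul hp, etaRatioMultiplier, h1, h, h2, Int.cast_one, map_one]
  push_cast
  ring

theorem etaRatioMultiplier_eq_of_dvd {p k : ℕ} [Fact p.Prime] {γ : SL(2, ℤ)} {e : ℤ}
    (h : 12 ∣ (3 * k : ℕ) * etaExp γ - e) :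
    etaRatioMultiplier p k γ = zeta12 e * (quadraticChar (ZMod p) (γ 1 1 : ℤ) : ℤ) := by
  rw [etaRatioMultiplier, ← zeta12_congr h, zeta12_zsmul, zpow_natCast]

theorem zeta12_six : zeta12 6 = -1 := by
  rw [zeta12, ← Complex.exp_int_mul, show ((6 : ℤ) : ℂ) * (2 * Real.pi * Complex.I / 12) =
    Real.pi * Complex.I by push_cast; ring, Complex.exp_pi_mul_I]

theorem neg_one_mem_Gamma0 (N : ℕ) : (-1 : SL(2, ℤ)) ∈ Gamma0 N := by
  simp [Gamma0_mem]

theorem Gamma0_three_le_etaRatioSubgroup : Gamma0 3 ≤ etaRatioSubgroup 3 1 := by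
  refine Gamma0_three_le (T_mem_etaRatioSubgroup (p := 3) (k := 1) rfl) ?_
    (lowerSL_mem_etaRatioSubgroup (p := 3) (k := 1) rfl (by decide))
  refine mem_etaRatioSubgroup_of_fixed 1 (neg_one_mem_Gamma0 3) (τ := I) (by simp) ?_
  rw [etaRatioMultiplier_eq_of_dvd (e := 6) (by decide), zeta12_six,
    show quadraticChar (ZMod 3) ((-1 : SL(2, ℤ)) 1 1 : ℤ) = -1 by decide]
  norm_num

instance : Fact (Nat.Prime 5) := ⟨by norm_num⟩

theorem Gamma0_five_le_etaRatioSubgroup : Gamma0 5 ≤ etaRatioSubgroup 5 2 := by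
  refine Gamma0_five_le (T_mem_etaRatioSubgroup (p := 5) (k := 2) rfl) ?_
    (lowerSL_mem_etaRatioSubgroup (p := 5) (k := 2) rfl (by decide)) ?_ ?_
  · refine mem_etaRatioSubgroup_of_fixed 2 (neg_one_mem_Gamma0 5) (τ := I) (by simp) ?_
    rw [etaRatioMultiplier_eq_of_dvd (e := 0) (by decide), zeta12_eq_one (dvd_zero _),
      show quadraticChar (ZMod 5) ((-1 : SL(2, ℤ)) 1 1 : ℤ) = 1 by decide]
    norm_num
  · refine mem_etaRatioSubgroup_of_fixed 2 (by rw [Gamma0_mem, mkSL_apply_one_zero]; decide)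
      (τ := ⟨(2 + Complex.I) / 5, by norm_num⟩) ?_ ?_
    · ext
      rw [coe_SL_smul, mkSL_apply_zero_zero, mkSL_apply_zero_one, mkSL_apply_one_zero,
        mkSL_apply_one_one, UpperHalfPlane.coe_mk, div_eq_iff]
      · push_cast
        linear_combination (-1 / 5 : ℂ) * Complex.I_sq
      · push_cast
        ring_nf
        exact Complex.I_ne_zero
    · rw [etaRatioMultiplier_eq_of_dvd (e := 6) (by decide), zeta12_six,
        show quadraticChar (ZMod 5) (mkSL 2 (-1) 5 (-2) _ 1 1 : ℤ) = -1 by decide]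
      norm_num
  · refine mem_etaRatioSubgroup_of_fixed 2 (by rw [Gamma0_mem, mkSL_apply_one_zero]; decide)
      (τ := ⟨(-2 + Complex.I) / 5, by norm_num⟩) ?_ ?_
    · ext
      rw [coe_SL_smul, mkSL_apply_zero_zero, mkSL_apply_zero_one, mkSL_apply_one_zero,
        mkSL_apply_one_one, UpperHalfPlane.coe_mk, div_eq_iff]
      · push_cast
        linear_combination (-1 / 5 : ℂ) * Complex.I_sq
      · push_cast
        ring_nf
        exact Complex.I_ne_zero
    · rw [etaRatioMultiplier_eq_of_dvd (e := 6) (by decide), zeta12_six,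
        show quadraticChar (ZMod 5) (mkSL (-2) (-1) 5 2 _ 1 1 : ℤ) = -1 by decide]
      norm_num

/-- The cube of `η(p² τ) / η(τ)` is modular for `Γ₀(p²)`. -/
theorem etaRatio_sq_smul_pow_three {p k : ℕ} [Fact p.Prime]
    (hle : Gamma0 p ≤ etaRatioSubgroup p k)
    (hdec : ∀ a b c d : ZMod 4, a * d - b * (p * (p * c)) = 1 →
      k * (etaPoly a b (p * (p * c)) d + etaPoly a (p * b) (p * c) d) = 0)
    {γ : SL(2, ℤ)} (hγ : γ ∈ Gamma0 (p ^ 2)) (τ : ℍ) :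
    etaRatio (p ^ 2) (γ • τ) ^ 3 = etaRatio (p ^ 2) τ ^ 3 := by
  have hp : 0 < p := (Fact.out : p.Prime).pos
  have hfac : ∀ τ, etaRatio (p ^ 2) τ = etaRatio p τ * etaRatio p (natMul p hp τ) := by
    intro τ
    have h0 := eta_natCast_mul_ne_zero hp τ
    rw [etaRatio, etaRatio, etaRatio, coe_natMul, div_mul_div_cancel₀' h0, ← mul_assoc]
    push_cast
    rw [sq]
  rw [Gamma0_mem, ZMod.intCast_zmod_eq_zero_iff_dvd] at hγ
  obtain ⟨c, hc⟩ := hγ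
  have hc' : γ 1 0 = p * (p * c) := by
    rw [hc]
    push_cast
    ring
  have h1 : γ ∈ Gamma0 p := by
    rw [Gamma0_mem, hc']
    simp
  have h2 : conjDiag γ p (p * c) hc' ∈ Gamma0 p := by
    simp [Gamma0_mem, conjDiag]
  have hdet := SL_det γ
  rw [hc'] at hdet
  have hdvd : 12 ∣ (3 * k : ℕ) * (etaExp γ + etaExp (conjDiag γ p (p * c) hc')) := by
    have h4 : (4 : ℤ) ∣ k * (etaExp γ + etaExp (conjDiag γ p (p * c) hc')) := by
      refine (ZMod.intCast_zmod_eq_zero_iff_dvd _ 4).mp ?_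
      have := hdec (γ 0 0) (γ 0 1) c (γ 1 1)
        (by exact_mod_cast congrArg (Int.cast (R := ZMod 4)) hdet)
      simp only [etaExp, conjDiag, hc', mkSL_apply_zero_zero, mkSL_apply_zero_one,
        mkSL_apply_one_zero, mkSL_apply_one_one]
      push_cast [etaPoly_intCast]
      exact this
    push_cast
    rw [mul_assoc]
    exact mul_dvd_mul_left 3 h4
  have hmult :
      etaRatioMultiplier p k γ * etaRatioMultiplier p k (conjDiag γ p (p * c) hc') = 1 := by
    have hz := zeta12_eq_one hdvd
    rw [zeta12_zsmul, zpow_natCast, zeta12_add, mul_pow] at hz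
    have hq := quadraticChar_sq_one (lower_right_ne_zero (Fact.out : p.Prime).one_lt h1)
    have hd : (conjDiag γ p (p * c) hc') 1 1 = γ 1 1 := by simp [conjDiag]
    rw [etaRatioMultiplier, etaRatioMultiplier, hd, mul_mul_mul_comm, hz, one_mul, ← sq]
    exact_mod_cast hq
  rw [hfac, hfac, natMul_smul hp hc', mul_pow, mul_pow, (hle h1).2, (hle h2).2, mul_mul_mul_comm,
    hmult, one_mul]

theorem etaRatio_nine_smul_pow_three {γ : SL(2, ℤ)} (hγ : γ ∈ Gamma0 9) (τ : ℍ) :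
    etaRatio 9 (γ • τ) ^ 3 = etaRatio 9 τ ^ 3 :=
  etaRatio_sq_smul_pow_three (p := 3) Gamma0_three_le_etaRatioSubgroup (by decide +kernel) hγ τ

theorem etaRatio_twentyFive_smul_pow_three {γ : SL(2, ℤ)} (hγ : γ ∈ Gamma0 25) (τ : ℍ) :
    etaRatio 25 (γ • τ) ^ 3 = etaRatio 25 τ ^ 3 :=
  etaRatio_sq_smul_pow_three (p := 5) Gamma0_five_le_etaRatioSubgroup (by decide +kernel) hγ τ

theorem eq_of_sq_eq_of_pow_three_eq {K : Type*} [Field K] {x y : K} (hy : y ≠ 0)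
    (h2 : x ^ 2 = y ^ 2) (h3 : x ^ 3 = y ^ 3) : x = y :=
  mul_left_cancel₀ (pow_ne_zero 2 hy) (by linear_combination h3 - x * h2)

theorem exists_isHauptmodul_nine : ∃ f, IsHauptmodul (Gamma0 9) f := by
  refine ⟨_, isHauptmodul_etaQuot (by norm_num) (r := exponents [(1, 3), (9, -3)])
    (by decide +kernel) (by decide +kernel) (by decide +kernel) fun γ hγ τ => ?_⟩
  have h : ∀ τ, etaQuot 9 (exponents [(1, 3), (9, -3)]) τ = (etaRatio 9 τ ^ 3)⁻¹ := by
    intro τ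
    rw [etaQuot, show Nat.divisors 9 = {1, 3, 9} by decide +kernel]
    simp [exponents, List.lookup, etaRatio, div_pow, zpow_neg]
    ring
  rw [h, h, etaRatio_nine_smul_pow_three hγ]

theorem exists_isHauptmodul_twentyFive : ∃ f, IsHauptmodul (Gamma0 25) f := by
  refine ⟨_, isHauptmodul_etaQuot (by norm_num) (r := exponents [(1, 1), (25, -1)])
    (by decide +kernel) (by decide +kernel) (by decide +kernel) fun γ hγ τ => ?_⟩
  have h : ∀ τ, etaQuot 25 (exponents [(1, 1), (25, -1)]) τ = (etaRatio 25 τ)⁻¹ := by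
    intro τ
    rw [etaQuot, show Nat.divisors 25 = {1, 5, 25} by decide +kernel]
    simp [exponents, List.lookup, etaRatio, zpow_neg]
    ring
  refine eq_of_sq_eq_of_pow_three_eq (etaQuot_ne_zero _ _ _)
    (etaQuot_smul_sq (by decide +kernel) (by decide +kernel) (by decide +kernel) hγ τ) ?_
  rw [h, h, inv_pow, inv_pow, etaRatio_twentyFive_smul_pow_three hγ]

theorem exists_isHauptmodul_eighteen : ∃ f, IsHauptmodul (Gamma0 18) f := by
  refine ⟨_, isHauptmodul_etaQuot (by norm_num)
    (r := exponents [(1, -1), (2, 2), (9, 1), (18, -2)])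
    (by decide +kernel) (by decide +kernel) (by decide +kernel) fun γ hγ τ => ?_⟩
  have h : ∀ τ, etaQuot 18 (exponents [(1, -1), (2, 2), (9, 1), (18, -2)]) τ =
      etaRatio 9 τ / etaRatio 9 (natMul 2 two_pos τ) ^ 2 := by
    intro τ
    rw [etaQuot, show Nat.divisors 18 = {1, 2, 3, 6, 9, 18} by decide +kernel]
    have h18 : (9 * (2 * τ) : ℂ) = 18 * τ := by ring
    simp [exponents, List.lookup, etaRatio, div_pow, zpow_neg, h18]
    rw [div_div_eq_mul_div]
    ring
  refine eq_of_sq_eq_of_pow_three_eq (etaQuot_ne_zero _ _ _)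
    (etaQuot_smul_sq (by decide +kernel) (by decide +kernel) (by decide +kernel) hγ τ) ?_
  rw [Gamma0_mem, ZMod.intCast_zmod_eq_zero_iff_dvd] at hγ
  obtain ⟨c, hc⟩ := hγ
  have hc' : γ 1 0 = (2 : ℕ) * (9 * c) := by
    rw [hc]
    push_cast
    ring
  have h1 : γ ∈ Gamma0 9 := by
    rw [Gamma0_mem, ZMod.intCast_zmod_eq_zero_iff_dvd, hc]
    exact ⟨2 * c, by push_cast; ring⟩
  have h2 : conjDiag γ 2 (9 * c) hc' ∈ Gamma0 9 := by
    rw [Gamma0_mem, ZMod.intCast_zmod_eq_zero_iff_dvd]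
    exact ⟨c, by simp [conjDiag]⟩
  rw [h, h, natMul_smul two_pos hc', div_pow, div_pow, ← pow_mul, ← pow_mul, mul_comm 2 3, pow_mul,
    pow_mul, etaRatio_nine_smul_pow_three h1, etaRatio_nine_smul_pow_three h2]

theorem exists_isHauptmodul {N : ℕ}
    (hN : N ∈ ({2, 3, 4, 5, 6, 7, 8, 9, 10, 12, 13, 16, 18, 25} : Set ℕ)) :
    ∃ f, IsHauptmodul (Gamma0 N) f := by
  by_cases h : N ∈ ({2, 3, 4, 5, 6, 7, 8, 10, 12, 13, 16} : Set ℕ)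
  · exact exists_isHauptmodul_of_even_exponents h
  · have : N = 9 ∨ N = 18 ∨ N = 25 := by
      simp only [Set.mem_insert_iff, Set.mem_singleton_iff] at hN h
      tauto
    obtain rfl | rfl | rfl := this
    exacts [exists_isHauptmodul_nine, exists_isHauptmodul_eighteen, exists_isHauptmodul_twentyFive]

end OddExponents

/-- the set of Coxeter numbers of the A-type Niemeier root systems is
exactly `{2,3,4,5,6,7,8,9,10,12,13,16,18,25}`, and this set coincides with the set of
integers `n > 1` for which `Γ0(n)` has genus zero (equivalently, admits a principal
modulus). -/
theorem statement13 :
    {m : ℕ | ∃ X ∈ NiemeierRootSystems, X.any ADE.isA = true ∧ ∀ C ∈ X, C.cox = m} =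
      ({2, 3, 4, 5, 6, 7, 8, 9, 10, 12, 13, 16, 18, 25} : Set ℕ) ∧
    ({2, 3, 4, 5, 6, 7, 8, 9, 10, 12, 13, 16, 18, 25} : Set ℕ) =
      {n : ℕ | 1 < n ∧
        ∃ f : UpperHalfPlane → ℂ, IsPrincipalModulus (GammaPlus n {1}) f} := by
  refine ⟨coxeterNumbers_eq, ?_⟩
  ext n
  simp only [isPrincipalModulus_gammaPlus_iff, Set.mem_ofPred_eq]
  refine ⟨fun hn => ⟨?_, exists_isHauptmodul hn⟩, fun ⟨hn, f, hf⟩ => hf.level_mem_of_one_lt hn⟩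
  simp only [Set.mem_insert_iff, Set.mem_singleton_iff] at hn
  omega
end
end

section
/- Let m be a positive integer, let e be an exact divisor of m (e|m and gcd(e, m/e) = 1), and let f be a divisor of m. Then for any a, b, c, d ∈ Z with ade − bcm/e = 1 and γ = (1/√e)[[ae, b],[cm, de]] ∈ SL2(R), and all τ in the upper half-plane, one has e·(cmτ + de)^{−2}·λ_f((aeτ + b)/(cmτ + de)) = λ_{e∗f}(τ) − λ_e(τ), where e∗f = ef/gcd(e,f)². In other words, the weight 2 action of the Atkin–Lehner coset W_m(e) sends λ_f to λ_{e∗f} − λ_e. -/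
noncomputable section

open Topology MeasureTheory

/-- The weight 2 Eisenstein form
`λ_N(τ) = q∂_q log(η(Nτ)/η(τ)) = (N-1)/24 + Σ_{k>0} σ(k)(q^k - N q^{Nk})`. -/
def lambdaN (N : ℕ) (τ : ℂ) : ℂ :=
  ((N : ℂ) - 1) / 24 +
    ∑' k : ℕ, ((ArithmeticFunction.sigma 1) (k + 1) : ℂ) *
      (e2 ((k + 1 : ℂ) * τ) - (N : ℂ) * e2 ((N : ℂ) * (k + 1 : ℂ) * τ))

/-- The holomorphic weight 2 Eisenstein series `1 - 24 Σ σ(k) q^k`, as a function on `ℂ`. -/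
def eisensteinTwo (τ : ℂ) : ℂ :=
  1 - 24 * ∑' k : ℕ, ((ArithmeticFunction.sigma 1) (k + 1) : ℂ) * e2 ((k + 1 : ℂ) * τ)

lemma e2_natCast_succ_mul (k : ℕ) (τ : ℂ) :
    e2 ((k + 1 : ℂ) * τ) = Complex.exp (2 * Real.pi * Complex.I * τ) ^ (k + 1) := by
  rw [e2, ← Complex.exp_nat_mul]
  congr 1
  push_cast
  ring

lemma summable_sigma_mul_e2 {τ : ℂ} (hτ : τ ∈ UHP) :
    Summable fun k : ℕ ↦ ((ArithmeticFunction.sigma 1) (k + 1) : ℂ) * e2 ((k + 1 : ℂ) * τ) := by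
  simp_rw [e2_natCast_succ_mul]
  exact (summable_nat_add_iff 1).mpr
    (EisensteinSeries.summable_sigma_mul_cexp_pow (k := 2) one_le_two ⟨τ, hτ⟩)

lemma E2_eq_eisensteinTwo (z : UpperHalfPlane) : EisensteinSeries.E2 z = eisensteinTwo z := by
  rw [EisensteinSeries.E2_eq_tsum_cexp, eisensteinTwo, tsum_pnat_eq_tsum_succ
    (f := fun n : ℕ ↦ ((ArithmeticFunction.sigma 1) n : ℂ) *
      Complex.exp (2 * Real.pi * Complex.I * z) ^ n)]
  simp_rw [e2_natCast_succ_mul]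

lemma natCast_mul_mem_UHP {N : ℕ} (hN : 0 < N) {τ : ℂ} (hτ : τ ∈ UHP) : (N : ℂ) * τ ∈ UHP := by
  have : 0 < (N : ℝ) * τ.im := mul_pos (Nat.cast_pos.mpr hN) hτ
  simpa [UHP] using this

lemma lambdaN_eq_eisensteinTwo {N : ℕ} (hN : 0 < N) {τ : ℂ} (hτ : τ ∈ UHP) :
    lambdaN N τ = ((N : ℂ) * eisensteinTwo (N * τ) - eisensteinTwo τ) / 24 := by
  have h (k : ℕ) : ((ArithmeticFunction.sigma 1) (k + 1) : ℂ) *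
      (e2 ((k + 1 : ℂ) * τ) - (N : ℂ) * e2 ((N : ℂ) * (k + 1 : ℂ) * τ)) =
      ((ArithmeticFunction.sigma 1) (k + 1) : ℂ) * e2 ((k + 1 : ℂ) * τ) -
      N * (((ArithmeticFunction.sigma 1) (k + 1) : ℂ) * e2 ((k + 1 : ℂ) * (N * τ))) := by
    rw [show (N : ℂ) * (k + 1 : ℂ) * τ = (k + 1 : ℂ) * (N * τ) by ring]
    ring
  rw [lambdaN, tsum_congr h, (summable_sigma_mul_e2 hτ).tsum_sub
    ((summable_sigma_mul_e2 (natCast_mul_mem_UHP hN hτ)).mul_left _), tsum_mul_left,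
    eisensteinTwo, eisensteinTwo]
  ring

/-- The coefficient of the quasimodular correction term in the transformation of the
weight 2 Eisenstein series. -/
def eisensteinTwoDefect : ℂ := -(1 / (2 * riemannZeta 2) * (2 * Real.pi * Complex.I))

lemma moebius_denom_ne_zero {a b c d : ℤ} (h : a * d - b * c = 1) {τ : ℂ} (hτ : τ ∈ UHP) :
    (c : ℂ) * τ + d ≠ 0 := by
  intro h0
  obtain rfl : c = 0 := by
    simpa [(show 0 < τ.im from hτ).ne'] using congrArg Complex.im h0
  obtain rfl : d = 0 := by simpa using h0
  simp at h

/-- The element of `SL₂(ℤ)` with entries `a, b, c, d`. -/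
def specialLinearOfEntries (a b c d : ℤ) (h : a * d - b * c = 1) :
    Matrix.SpecialLinearGroup (Fin 2) ℤ :=
  ⟨!![a, b; c, d], by simpa using h⟩

lemma coe_specialLinearOfEntries_smul {a b c d : ℤ} (h : a * d - b * c = 1)
    (z : UpperHalfPlane) :
    ((specialLinearOfEntries a b c d h • z : UpperHalfPlane) : ℂ) =
      (a * z + b) / (c * z + d) := by
  rw [UpperHalfPlane.specialLinearGroup_apply]
  simp [specialLinearOfEntries]

lemma moebius_mem_UHP {a b c d : ℤ} (h : a * d - b * c = 1) {τ : ℂ} (hτ : τ ∈ UHP) :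
    (a * τ + b) / (c * τ + d) ∈ UHP :=
  coe_specialLinearOfEntries_smul h ⟨τ, hτ⟩ ▸ UpperHalfPlane.im_pos _

lemma eisensteinTwo_moebius {a b c d : ℤ} (h : a * d - b * c = 1) {τ : ℂ} (hτ : τ ∈ UHP) :
    eisensteinTwo ((a * τ + b) / (c * τ + d)) =
      (c * τ + d) ^ 2 * eisensteinTwo τ + eisensteinTwoDefect * c * (c * τ + d) := by
  let γ := specialLinearOfEntries a b c d h
  let z : UpperHalfPlane := ⟨τ, hτ⟩
  have hJ := moebius_denom_ne_zero h hτ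
  have hden : UpperHalfPlane.denom γ z = (c : ℂ) * τ + d := by
    rw [ModularGroup.denom_apply]
    simp [specialLinearOfEntries, γ, z]
  have hslash := congrFun (EisensteinSeries.E2_slash_action γ) z
  rw [ModularForm.SL_slash_apply, Pi.sub_apply, Pi.smul_apply, EisensteinSeries.D2, hden,
    E2_eq_eisensteinTwo, E2_eq_eisensteinTwo, coe_specialLinearOfEntries_smul, smul_eq_mul,
    show ((γ 1 0 : ℤ) : ℂ) = c by simp [specialLinearOfEntries, γ], show (z : ℂ) = τ from rfl,
    zpow_neg, ← div_eq_mul_inv, div_eq_iff (zpow_ne_zero _ hJ)] at hslash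
  rw [hslash, eisensteinTwoDefect, zpow_ofNat]
  field_simp
  ring

/-- The transformation of `τ ↦ E₂(gfτ)` under the Atkin–Lehner matrix attached to the divisor
`ge` of the level `gefn`. -/
lemma eisensteinTwo_atkinLehner {g e f n : ℕ} (hg : 0 < g) (he : 0 < e) (hf : 0 < f)
    {a b c d : ℤ} (h : a * d * (g * e) - b * c * (f * n) = 1) {τ : ℂ} (hτ : τ ∈ UHP) :
    eisensteinTwo ((g * f) * ((a * (g * e) * τ + b) / (c * (g * e * f * n) * τ + d * (g * e)))) =
      ((c * (g * e * f * n) * τ + d * (g * e)) / g) ^ 2 * eisensteinTwo ((e * f : ℕ) * τ) +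
      eisensteinTwoDefect * (c * n) * ((c * (g * e * f * n) * τ + d * (g * e)) / g) := by
  have hg0 : (g : ℂ) ≠ 0 := by exact_mod_cast hg.ne'
  have he0 : (e : ℂ) ≠ 0 := by exact_mod_cast he.ne'
  have hmoeb := eisensteinTwo_moebius (a := a * g) (b := b * f) (c := c * n) (d := d * e)
    (by linear_combination h) (natCast_mul_mem_UHP (Nat.mul_pos he hf) hτ)
  have hJ : ((c * n : ℤ) : ℂ) * ((e * f : ℕ) * τ) + (d * e : ℤ) =
      (c * (g * e * f * n) * τ + d * (g * e)) / g := by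
    push_cast
    field_simp
  have hw : (((a * g : ℤ) : ℂ) * ((e * f : ℕ) * τ) + (b * f : ℤ)) =
      f * (a * (g * e) * τ + b) := by
    push_cast
    ring
  rw [hJ, hw] at hmoeb
  convert hmoeb using 2
  · rw [div_div_eq_mul_div]
    ring
  · push_cast
    ring

/-- let `e` be an exact divisor of `m` and `f ∣ m`.  For any
`a, b, c, d ∈ ℤ` with `ade - bc(m/e) = 1`, defining
`γ = (1/√e)[[ae, b],[cm, de]] ∈ SL₂(ℝ)`, the weight 2 action of `γ` on `λ_f` satisfies
`e·(cmτ + de)⁻²·λ_f((aeτ + b)/(cmτ + de)) = λ_{e∗f}(τ) - λ_e(τ)`, where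
`e∗f = ef/gcd(e,f)²`. -/
theorem statement17 (m e f : ℕ) (hm : 0 < m) (he : e ∣ m)
    (hexact : Nat.Coprime e (m / e)) (hf : f ∣ m)
    (a b c d : ℤ) (habcd : a * d * (e : ℤ) - b * c * ((m / e : ℕ) : ℤ) = 1) :
    ∀ τ ∈ UHP,
      (e : ℂ) * ((c : ℂ) * (m : ℂ) * τ + (d : ℂ) * (e : ℂ)) ^ (-2 : ℤ) *
          lambdaN f (((a : ℂ) * (e : ℂ) * τ + (b : ℂ)) /
            ((c : ℂ) * (m : ℂ) * τ + (d : ℂ) * (e : ℂ))) =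
        lambdaN (e * f / Nat.gcd e f ^ 2) τ - lambdaN e τ := by
  intro τ hτ
  have hepos : 0 < e := Nat.pos_of_dvd_of_pos he hm
  have hfpos : 0 < f := Nat.pos_of_dvd_of_pos hf hm
  obtain ⟨n, rfl⟩ := he
  rw [Nat.mul_div_cancel_left _ hepos] at habcd
  obtain ⟨g, e', f', hg, hcop, rfl, rfl⟩ : ∃ g e' f' : ℕ, 0 < g ∧ Nat.Coprime e' f' ∧
      e = g * e' ∧ f = g * f' := by
    obtain ⟨e', f', h1, h2, h3⟩ := Nat.exists_coprime e f
    exact ⟨_, e', f', Nat.gcd_pos_of_pos_left _ hepos, h1, by rwa [mul_comm], by rwa [mul_comm]⟩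
  have he' : 0 < e' := Nat.pos_of_mul_pos_left hepos
  have hf' : 0 < f' := Nat.pos_of_mul_pos_left hfpos
  obtain ⟨k, rfl⟩ : f' ∣ n := by
    rw [mul_assoc] at hf
    exact hcop.symm.dvd_of_dvd_mul_left (Nat.dvd_of_mul_dvd_mul_left hg hf)
  have hstar : g * e' * (g * f') / Nat.gcd (g * e') (g * f') ^ 2 = e' * f' := by
    rw [Nat.gcd_mul_left, hcop.gcd_eq_one, mul_one]
    exact Nat.div_eq_of_eq_mul_right (by positivity) (by ring)
  push_cast at habcd
  have hg0 : (g : ℂ) ≠ 0 := by exact_mod_cast hg.ne'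
  have hf := eisensteinTwo_atkinLehner hg he' hf' habcd hτ
  have h1 := eisensteinTwo_atkinLehner (g := 1) (e := g * e') (f := 1) (n := f' * k)
    (a := a) (b := b) (c := c) (d := d) one_pos hepos one_pos
    (by push_cast; linear_combination habcd) hτ
  have hdet : a * (d * (g * e')) - b * (c * (f' * k)) = 1 := by linear_combination habcd
  have hτ' := natCast_mul_mem_UHP hepos hτ
  have hden : (c : ℂ) * (g * e' * f' * k) * τ + d * (g * e') =
      (c * (f' * k) : ℤ) * ((g * e' : ℕ) * τ) + (d * (g * e') : ℤ) := by
    push_cast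
    ring
  have hJ : (c : ℂ) * (g * e' * f' * k) * τ + d * (g * e') ≠ 0 :=
    hden ▸ moebius_denom_ne_zero hdet hτ'
  have hw : ((a : ℂ) * (g * e') * τ + b) / (c * (g * e' * f' * k) * τ + d * (g * e')) ∈ UHP := by
    rw [hden, show (a : ℂ) * (g * e') * τ + b = a * ((g * e' : ℕ) * τ) + b by push_cast; ring]
    exact moebius_mem_UHP hdet hτ'
  rw [hstar, lambdaN_eq_eisensteinTwo (Nat.mul_pos he' hf') hτ, lambdaN_eq_eisensteinTwo hepos hτ]
  push_cast at h1 hf ⊢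
  simp only [one_mul, mul_one, div_one, ← mul_assoc] at h1 hf hw hJ ⊢
  rw [lambdaN_eq_eisensteinTwo hfpos hw]
  push_cast
  rw [hf, h1, zpow_neg, zpow_ofNat]
  generalize (c : ℂ) * g * e' * f' * k * τ + d * g * e' = J at hJ
  field_simp
  ring
end
end
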